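/- arXiv:1202.2279 — 6 statements merged into one kernel-verified Lean document; each statement's English description precedes it below -/
import Mathlib

section
/- Assume hypotheses (H). Then every subspace F of ℝ^p that is defined over ℚ and contains e_1, …, e_k satisfies dim_ℝ F ≥ k + τ_1 + … + τ_k. -/
/-- pigeonhole -/
lemma pigeon {d k : ℕ} (e : Fin k → Fin d → ℝ) (h : ℝ) (N : Fin k → ℕ) (M : ℕ) (hM : 0 < M)
    (hcard : M ^ d < ∏ j, (N j + 1)) :
    ∃ (z : Fin k → ℤ) (P : Fin d → ℤ), z ≠ 0 ∧ (∀ j, |z j| ≤ N j) ∧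
      ∀ i, |∑ j, (h * z j) * e j i - P i| ≤ 1 / M := by
  classical
  let g : (∀ j, Fin (N j + 1)) → Fin d → ℝ := fun y i => ∑ j, (h * ((y j : ℕ) : ℝ)) * e j i
  have hMR : (0:ℝ) < M := by exact_mod_cast hM
  have hfl : ∀ y i, ⌊(M:ℝ) * Int.fract (g y i)⌋₊ < M := by
    intro y i
    rw [Nat.floor_lt (by positivity)]
    have := Int.fract_lt_one (g y i)
    nlinarith
  let f : (∀ j, Fin (N j + 1)) → Fin d → Fin M := fun y i => ⟨⌊(M:ℝ) * Int.fract (g y i)⌋₊, hfl y i⟩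
  obtain ⟨y, y', hne, heq⟩ := Fintype.exists_ne_map_eq_of_card_lt f (by simpa using hcard)
  refine ⟨fun j => (y j : ℕ) - (y' j : ℕ), fun i => ⌊g y i⌋ - ⌊g y' i⌋, ?_, ?_, ?_⟩
  · intro h0
    apply hne
    funext j
    have := congrFun h0 j
    simp only [Pi.zero_apply] at this
    apply Fin.ext
    omega
  · intro j
    have h1 := (y j).2
    have h2 := (y' j).2
    rw [abs_le]
    dsimp only
    constructor <;> omega
  · intro i
    have h1 : ⌊(M:ℝ) * Int.fract (g y i)⌋₊ = ⌊(M:ℝ) * Int.fract (g y' i)⌋₊ := by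
      have := congrFun heq i
      simpa [f] using this
    have a1 := Nat.floor_le (a := (M:ℝ) * Int.fract (g y i)) (by positivity)
    have a2 := Nat.lt_floor_add_one ((M:ℝ) * Int.fract (g y i))
    have b1 := Nat.floor_le (a := (M:ℝ) * Int.fract (g y' i)) (by positivity)
    have b2 := Nat.lt_floor_add_one ((M:ℝ) * Int.fract (g y' i))
    rw [h1] at a1 a2
    have key : ∑ j, (h * (((y j : ℕ) - (y' j : ℕ) : ℤ) : ℝ)) * e j i - ((⌊g y i⌋ - ⌊g y' i⌋ : ℤ) : ℝ)
        = Int.fract (g y i) - Int.fract (g y' i) := by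
      simp only [Int.fract, g]
      push_cast
      simp only [mul_sub, sub_mul, Finset.sum_sub_distrib]
      ring
    rw [key, abs_le, le_div_iff₀ hMR, ← neg_div, div_le_iff₀ hMR]
    constructor <;> nlinarith

/-- bounded gaps -/
lemma gaps {k : ℕ} (ω φ : Fin k → ℝ) (n0 : ℕ) (h0 : ∀ j, Real.cos (n0 * ω j + φ j) ≠ 0) :
    ∃ c > 0, ∃ B : ℕ, ∀ N : ℕ, ∃ n, N ≤ n ∧ n ≤ N + B ∧ ∀ j, c ≤ |Real.cos (n * ω j + φ j)| := by
  classical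
  obtain ⟨c, hc, hcj⟩ : ∃ c > 0, ∀ j, c ≤ |Real.cos (n0 * ω j + φ j)| := by
    rcases isEmpty_or_nonempty (Fin k) with h | h
    · exact ⟨1, one_pos, fun j => (h.false j).elim⟩
    · obtain ⟨j, hj⟩ := Finite.exists_min (fun j => |Real.cos (n0 * ω j + φ j)|)
      exact ⟨_, abs_pos.2 (h0 j), hj⟩
  let v : ℕ → Fin k → ℂ := fun n j => Complex.exp ((n * ω j : ℝ) * Complex.I)
  have htb : TotallyBounded (Set.range v) := by
    refine (Bornology.IsBounded.isCompact_closure ?_).totallyBounded.subset subset_closure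
    rw [isBounded_iff_forall_norm_le]
    refine ⟨1, ?_⟩
    rintro _ ⟨n, rfl⟩
    rw [pi_norm_le_iff_of_nonneg zero_le_one]
    intro j
    exact (Complex.norm_exp_ofReal_mul_I _).le
  obtain ⟨t, hts, htf, htc⟩ := Metric.finite_approx_of_totallyBounded htb (c/2) (by positivity)
  obtain ⟨S, hS⟩ : ∃ S : Finset ℕ, ∀ y ∈ t, ∃ m ∈ S, v m = y := by
    have hts' : ∀ y ∈ t, ∃ m, v m = y := fun y hy => hts hy
    choose! g hg using hts'
    refine ⟨htf.toFinset.image g, fun y hy => ⟨g y, ?_, hg y hy⟩⟩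
    simp only [Finset.mem_image, Set.Finite.mem_toFinset]
    exact ⟨y, hy, rfl⟩
  refine ⟨c/2, by positivity, S.sup id + n0, fun N => ?_⟩
  have := htc (Set.mem_range_self (N + S.sup id))
  simp only [Set.mem_iUnion, Metric.mem_ball] at this
  obtain ⟨y, hy, hd⟩ := this
  obtain ⟨m, hm, rfl⟩ := hS y hy
  have hmS : m ≤ S.sup id := Finset.le_sup (f := id) hm
  refine ⟨N + S.sup id - m + n0, by omega, by omega, fun j => ?_⟩
  obtain ⟨q, hq⟩ : ∃ q, q = N + S.sup id - m := ⟨_, rfl⟩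
  have hq' : N + S.sup id = q + m := by omega
  rw [← hq]
  rw [hq'] at hd
  have hd' : dist (v (q + m) j) (v m j) < c/2 := lt_of_le_of_lt (dist_le_pi_dist _ _ j) hd
  have e1 : ‖Complex.exp ((q * ω j : ℝ) * Complex.I) - 1‖ < c / 2 := by
    rw [dist_eq_norm] at hd'
    have : v (q+m) j - v m j = (Complex.exp ((q * ω j : ℝ) * Complex.I) - 1) * v m j := by
      simp only [v, sub_mul, one_mul, ← Complex.exp_add]
      congr 2
      push_cast; ring
    rw [this, norm_mul] at hd'
    simp only [v] at hd'
    rwa [Complex.norm_exp_ofReal_mul_I, mul_one] at hd'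
  have e2 : |Real.cos ((q + n0 : ℕ) * ω j + φ j) - Real.cos (n0 * ω j + φ j)| < c / 2 := by
    refine lt_of_le_of_lt ?_ e1
    have : Real.cos ((q + n0 : ℕ) * ω j + φ j) - Real.cos (n0 * ω j + φ j) =
      ((Complex.exp ((q * ω j : ℝ) * Complex.I) - 1) * Complex.exp ((n0 * ω j + φ j : ℝ) * Complex.I)).re := by
      rw [sub_mul, one_mul, ← Complex.exp_add, ← add_mul, ← Complex.ofReal_add, Complex.sub_re,
        Complex.exp_ofReal_mul_I_re, Complex.exp_ofReal_mul_I_re]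
      congr 2
      push_cast; ring
    rw [this]
    refine (Complex.abs_re_le_norm _).trans ?_
    rw [norm_mul, Complex.norm_exp_ofReal_mul_I, mul_one]
  have := hcj j
  have h3 := abs_sub_abs_le_abs_sub (Real.cos (n0 * ω j + φ j)) (Real.cos ((q + n0 : ℕ) * ω j + φ j))
  rw [abs_sub_comm] at h3
  linarith

lemma window (x : ℕ → ℝ) (hx : Monotone x) (hx0 : ∀ n, 1 ≤ n → 0 < x n)
    (hinf : Filter.Tendsto x Filter.atTop Filter.atTop)
    (hr : Filter.Tendsto (fun n => x (n+1) / x n) Filter.atTop (nhds 1))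
    (G : Set ℕ) (B : ℕ) (hG : ∀ N, ∃ n ∈ G, N ≤ n ∧ n ≤ N + B) (ρ : ℝ) (hρ : 0 < ρ) :
    ∃ X0, ∀ X, X0 ≤ X → ∃ n ∈ G, X ≤ x n ∧ x n ≤ (1 + ρ) * X := by
  obtain ⟨σ, hσ, hσρ⟩ : ∃ σ > 0, (1 + σ : ℝ) ^ (B + 1) < 1 + ρ := by
    have hcont : Filter.Tendsto (fun σ : ℝ => (1 + σ) ^ (B + 1)) (nhdsWithin 0 (Set.Ioi 0)) (nhds ((1 + 0) ^ (B + 1))) :=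
      (Continuous.tendsto (by fun_prop) 0).mono_left nhdsWithin_le_nhds
    have h1 := hcont.eventually (gt_mem_nhds (show ((1:ℝ) + 0) ^ (B+1) < 1 + ρ by simpa using hρ))
    obtain ⟨σ, h1, h2⟩ := (h1.and self_mem_nhdsWithin).exists
    exact ⟨σ, h2, h1⟩
  obtain ⟨N0, hN0⟩ := Filter.eventually_atTop.1 (hr.eventually (gt_mem_nhds (show (1:ℝ) < 1 + σ by linarith)))
  have step : ∀ n, N0 + 1 ≤ n → x (n+1) ≤ (1 + σ) * x n := by
    intro n hn
    have := hN0 n (by omega)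
    rw [div_lt_iff₀ (hx0 n (by omega))] at this
    exact this.le
  have steps : ∀ i n, N0 + 1 ≤ n → x (n+i) ≤ (1 + σ)^i * x n := by
    intro i n hn
    induction i with
    | zero => simp
    | succ i ih =>
      have := step (n+i) (by omega)
      rw [pow_succ, ← add_assoc]
      calc _ ≤ _ := this
        _ ≤ (1 + σ) * ((1 + σ)^i * x n) := by gcongr
        _ = _ := by ring
  refine ⟨x (N0+1) + 1, fun X hX => ?_⟩
  classical
  have hex : ∃ m, X ≤ x m := (hinf.eventually (Filter.eventually_ge_atTop X)).exists
  have hf := Nat.find_spec hex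
  have hlt : N0 + 1 < Nat.find hex := by
    by_contra hcon
    have := hx (not_lt.1 hcon)
    linarith
  obtain ⟨m, hm⟩ : ∃ m, Nat.find hex = m + 1 := ⟨Nat.find hex - 1, by omega⟩
  have hm2 : x m < X := not_le.1 (Nat.find_min hex (by omega))
  rw [hm] at hf
  obtain ⟨n, hnG, hn1, hn2⟩ := hG (m+1)
  refine ⟨n, hnG, hf.trans (hx hn1), ?_⟩
  have hxm := hx0 m (by omega)
  calc x n ≤ x (m + (B+1)) := hx (by omega)
    _ ≤ (1+σ)^(B+1) * x m := steps _ _ (by omega)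
    _ ≤ (1+ρ) * X := by gcongr
open Real in
lemma endgame {d k : ℕ} (e : Fin k → Fin d → ℝ) (τ : Fin k → ℝ) (a : Fin d → ℤ) (lam : Fin k → ℝ)
    (P : Fin d → ℤ) (x δ U : ℝ) (hx : 0 < x) (hδ : 0 < δ)
    (hk : (k:ℝ) ≤ exp (δ * x) / 4) (hd : (d:ℝ) ≤ exp (δ * x) / 4) (j0 : Fin k)
    (g : Fin k → ℝ) (hg : ∀ j, lam j ≠ 0 → |lam j| = exp (g j)) (hj0 : lam j0 ≠ 0)
    (hup : ∀ j, |∑ i, (a i : ℝ) * e j i| ≤ exp (-(τ j - δ) * x))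
    (hlo : ∀ j, exp (-(τ j + δ) * x) ≤ |∑ i, (a i : ℝ) * e j i|)
    (ha : ∀ i, |(a i : ℝ)| ≤ exp ((1 + δ) * x))
    (hu : ∀ i, |∑ j, lam j * e j i - P i| ≤ exp (-U))
    (hneg : g j0 - τ j0 * x + 2 * δ * x ≤ 0)
    (hgap : ∀ j, j ≠ j0 → lam j ≠ 0 → g j - τ j * x + 4 * δ * x ≤ g j0 - τ j0 * x)
    (hdom : (1 + 2 * δ) * x - U ≤ g j0 - τ j0 * x - δ * x) : False := by
  classical
  set m := exp (g j0 - τ j0 * x - δ * x) with hm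
  have hmpos : 0 < m := exp_pos _
  have hδx : 0 < δ * x := by positivity
  have hk1 : (1:ℝ) ≤ k := by exact_mod_cast (Fin.pos j0)
  have hquarter : exp (-(δ * x)) ≤ 1/4 := by
    rw [exp_neg, inv_le_comm₀ (exp_pos _) (by norm_num)]
    norm_num; linarith
  obtain ⟨y, hy⟩ : ∃ y : Fin k → ℝ, ∀ j, y j = lam j * ∑ i, (a i : ℝ) * e j i := ⟨_, fun _ => rfl⟩
  obtain ⟨S, hS⟩ : ∃ S : ℤ, S = ∑ i, a i * P i := ⟨_, rfl⟩
  have hid : ∑ j, y j - (S:ℝ) = ∑ i, (a i : ℝ) * (∑ j, lam j * e j i - P i) := by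
    simp only [hy, hS, mul_sub, Finset.sum_sub_distrib, Finset.mul_sum]
    rw [Finset.sum_comm]
    push_cast
    congr 1
    refine Finset.sum_congr rfl fun i _ => Finset.sum_congr rfl fun j _ => by ring
  have hR : |∑ j, y j - (S:ℝ)| ≤ m / 4 := by
    rw [hid]
    calc _ ≤ ∑ i, |(a i : ℝ) * (∑ j, lam j * e j i - P i)| := Finset.abs_sum_le_sum_abs _ _
      _ ≤ ∑ i : Fin d, exp ((1 + δ) * x) * exp (-U) := by
          refine Finset.sum_le_sum fun i _ => ?_
          rw [abs_mul]
          exact mul_le_mul (ha i) (hu i) (abs_nonneg _) (exp_pos _).le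
      _ = d * (exp ((1 + δ) * x) * exp (-U)) := by simp
      _ ≤ exp (δ * x) / 4 * (exp ((1 + δ) * x) * exp (-U)) := by gcongr
      _ = exp ((1 + 2 * δ) * x - U) / 4 := by
          rw [← exp_add, div_mul_eq_mul_div, ← exp_add]; ring_nf
      _ ≤ m / 4 := by
          rw [hm]; gcongr
  have hy0lo : m ≤ |y j0| := by
    rw [hy, abs_mul, hg j0 hj0]
    calc m = exp (g j0) * exp (-(τ j0 + δ) * x) := by rw [hm, ← exp_add]; ring_nf
      _ ≤ _ := by gcongr; exact hlo j0
  have hy0up : |y j0| ≤ 1/4 := by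
    rw [hy, abs_mul, hg j0 hj0]
    calc _ ≤ exp (g j0) * exp (-(τ j0 - δ) * x) := by gcongr; exact hup j0
      _ = exp (g j0 - τ j0 * x + δ * x) := by rw [← exp_add]; ring_nf
      _ ≤ exp (-(δ * x)) := by gcongr; linarith
      _ ≤ _ := hquarter
  have hoth : |∑ j ∈ Finset.univ.erase j0, y j| ≤ m / 4 := by
    calc _ ≤ ∑ j ∈ Finset.univ.erase j0, |y j| := Finset.abs_sum_le_sum_abs _ _
      _ ≤ ∑ j ∈ Finset.univ.erase j0, exp (g j0 - τ j0 * x - 3 * δ * x) := by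
          refine Finset.sum_le_sum fun j hj => ?_
          have hne := Finset.ne_of_mem_erase hj
          by_cases h0 : lam j = 0
          · rw [hy, h0, zero_mul, abs_zero]; exact (exp_pos _).le
          · rw [hy, abs_mul, hg j h0]
            calc _ ≤ exp (g j) * exp (-(τ j - δ) * x) := by gcongr; exact hup j
              _ = exp (g j - τ j * x + δ * x) := by rw [← exp_add]; ring_nf
              _ ≤ _ := by
                gcongr
                have := hgap j hne h0
                linarith
      _ ≤ ∑ j : Fin k, exp (g j0 - τ j0 * x - 3 * δ * x) :=
          Finset.sum_le_sum_of_subset_of_nonneg (Finset.erase_subset _ _) (fun _ _ _ => (exp_pos _).le)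
      _ = k * exp (g j0 - τ j0 * x - 3 * δ * x) := by simp
      _ ≤ exp (δ * x) / 4 * exp (g j0 - τ j0 * x - 3 * δ * x) := by gcongr
      _ = exp (g j0 - τ j0 * x - 2 * δ * x) / 4 := by
          rw [div_mul_eq_mul_div, ← exp_add]; ring_nf
      _ ≤ m / 4 := by
          rw [hm]; gcongr; linarith
  have hsum : ∑ j, y j = y j0 + ∑ j ∈ Finset.univ.erase j0, y j :=
    (Finset.add_sum_erase _ _ (Finset.mem_univ j0)).symm
  rw [hsum] at hR
  have hSlt : |(S:ℝ)| < 1 := by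
    rw [abs_le] at hR hy0up hoth
    have hm4 : m ≤ 1/4 := hy0lo.trans (abs_le.2 hy0up)
    rw [abs_lt]
    constructor <;> linarith
  have hS0 : S = 0 := by
    have : |S| < 1 := by exact_mod_cast hSlt
    exact Int.abs_lt_one_iff.1 this
  rw [hS0] at hR
  have h1 := abs_le.1 hR
  have h2 := abs_le.1 hoth
  have : |y j0| ≤ m / 2 := by
    push_cast at h1
    rw [abs_le]
    constructor <;> linarith
  linarith

lemma sel {k : ℕ} (τ g : Fin k → ℝ) (s δ D Y : ℝ) (hs : 0 < s) (hδ : 0 < δ)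
    (hsep : ∀ a b, a ≠ b → s ≤ |τ a - τ b|) (xs : Fin (k * k + 1) → ℝ)
    (hD : ∀ i i', i ≠ i' → D ≤ |xs i - xs i'|) (hY : ∀ i, xs i ≤ Y) (hb : 8 * δ * Y < s * D) :
    ∃ i, ∀ a b, a ≠ b → 4 * δ * xs i ≤ |(g a - τ a * xs i) - (g b - τ b * xs i)| := by
  by_contra! hcon
  choose a b hab hlt using hcon
  obtain ⟨i, i', hne, heq⟩ := Fintype.exists_ne_map_eq_of_card_lt (fun i => (a i, b i)) (by simp)
  simp only [Prod.mk.injEq] at heq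
  have h1 := hlt i
  have h2 := hlt i'
  rw [← heq.1, ← heq.2] at h2
  have h3 : |(τ (a i) - τ (b i)) * (xs i - xs i')| < 8 * δ * Y := by
    have e1 : (τ (a i) - τ (b i)) * (xs i - xs i') =
      ((g (a i) - τ (a i) * xs i') - (g (b i) - τ (b i) * xs i')) -
      ((g (a i) - τ (a i) * xs i) - (g (b i) - τ (b i) * xs i)) := by ring
    rw [e1]
    have := abs_sub ((g (a i) - τ (a i) * xs i') - (g (b i) - τ (b i) * xs i')) ((g (a i) - τ (a i) * xs i) - (g (b i) - τ (b i) * xs i))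
    have y1 := hY i
    have y2 := hY i'
    nlinarith
  rw [abs_mul] at h3
  have h4 := hsep _ _ (hab i)
  have h5 := hD _ _ hne
  have h6 : s * |xs i - xs i'| ≤ |τ (a i) - τ (b i)| * |xs i - xs i'| := by gcongr
  nlinarith

lemma minpos {ι : Type} [Finite ι] (f : ι → ℝ) (hf : ∀ i, 0 < f i) : ∃ s > 0, ∀ i, s ≤ f i := by
  rcases isEmpty_or_nonempty ι with h | h
  · exact ⟨1, one_pos, fun j => (h.false j).elim⟩
  · obtain ⟨j, hj⟩ := Finite.exists_min f
    exact ⟨_, hf j, hj⟩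

open Real in
set_option maxHeartbeats 2000000 in
lemma core {d k : ℕ} (e : Fin k → Fin d → ℝ) (τ : Fin k → ℝ) (hτ : ∀ j, 0 < τ j)
    (hinj : Function.Injective τ) (x : ℕ → ℝ) (a : ℕ → Fin d → ℤ) (G : Set ℕ)
    (hwin : ∀ ρ : ℝ, 0 < ρ → ∃ X0, ∀ X, X0 ≤ X → ∃ n ∈ G, X ≤ x n ∧ x n ≤ (1 + ρ) * X)
    (hL : ∀ δ : ℝ, 0 < δ → ∃ X0, ∀ n ∈ G, X0 ≤ x n → ∀ j,
      exp (-(τ j + δ) * x n) ≤ |∑ i, (a n i : ℝ) * e j i| ∧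
      |∑ i, (a n i : ℝ) * e j i| ≤ exp (-(τ j - δ) * x n))
    (ha : ∀ δ : ℝ, 0 < δ → ∃ X0, ∀ n ∈ G, X0 ≤ x n → ∀ i, |(a n i : ℝ)| ≤ exp ((1 + δ) * x n)) :
    (k:ℝ) + ∑ j, τ j ≤ d := by
  classical
  by_contra! hcon
  obtain ⟨ε, hε, hε1, hεd⟩ : ∃ ε : ℝ, 0 < ε ∧ ε ≤ 1 ∧ (d:ℝ) * (1 + ε) < k + ∑ j, τ j := by
    refine ⟨min 1 ((k + ∑ j, τ j - d) / (2 * (d + 1))), ?_, min_le_left _ _, ?_⟩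
    · apply lt_min one_pos
      apply div_pos <;> [linarith; positivity]
    · have h1 := min_le_right 1 ((k + ∑ j, τ j - d) / (2 * ((d:ℝ) + 1)))
      have h2 : (d:ℝ) * min 1 ((k + ∑ j, τ j - d) / (2 * ((d:ℝ) + 1))) ≤ d * ((k + ∑ j, τ j - d) / (2 * ((d:ℝ) + 1))) := by gcongr
      have h3 : (d:ℝ) * ((k + ∑ j, τ j - d) / (2 * ((d:ℝ) + 1))) < (k + ∑ j, τ j - d) := by
        rw [mul_div_assoc', div_lt_iff₀ (by positivity)]
        nlinarith [(Nat.cast_nonneg d : (0:ℝ) ≤ d)]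
      linarith
  obtain ⟨A, hA1, hA⟩ : ∃ A : ℝ, 1 ≤ A ∧ ∀ j, τ j ≤ A := by
    refine ⟨1 + ∑ j, τ j, ?_, fun j => ?_⟩
    · have := Finset.sum_nonneg (fun j (_ : j ∈ Finset.univ) => (hτ j).le)
      linarith
    · have := Finset.single_le_sum (fun j (_ : j ∈ Finset.univ) => (hτ j).le) (Finset.mem_univ j)
      linarith
  obtain ⟨s, hs, hs1, hsτ, hsep⟩ : ∃ s : ℝ, 0 < s ∧ s ≤ 1 ∧ (∀ j, s ≤ τ j) ∧
      ∀ a b, a ≠ b → s ≤ |τ a - τ b| := by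
    obtain ⟨s, hs, hs'⟩ := minpos (fun q : Fin k × Fin k => if q.1 = q.2 then τ q.1 else |τ q.1 - τ q.2|)
      (fun q => by
        split_ifs with h
        · exact hτ _
        · exact abs_pos.2 (sub_ne_zero.2 (fun h' => h (hinj h'))))
    refine ⟨min s 1, lt_min hs one_pos, min_le_right _ _, fun j => ?_, fun a b hab => ?_⟩
    · have := hs' (j, j)
      simp only [if_true] at this
      exact (min_le_left _ _).trans this
    · have := hs' (a, b)
      simp only [if_neg hab] at this
      exact (min_le_left _ _).trans this
  obtain ⟨D', hD', hD'ε⟩ : ∃ D' : ℝ, 0 < D' ∧ 16 * (A * D') = ε :=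
    ⟨ε / (16 * A), by positivity, by field_simp⟩
  have hD'1 : 16 * D' ≤ ε := by nlinarith
  obtain ⟨ρ, hρ, hρD⟩ : ∃ ρ : ℝ, 0 < ρ ∧ (2 * ((k:ℝ) * k) + 2) * ρ = D' :=
    ⟨D' / (2 * ((k:ℝ) * k) + 2), by positivity, by field_simp⟩
  have hkk : (0:ℝ) ≤ (k:ℝ) * k := by positivity
  have hρ2 : 2 * ρ ≤ D' := by nlinarith
  obtain ⟨δ, hδ, hδρ⟩ : ∃ δ : ℝ, 0 < δ ∧ 32 * δ = s * ρ := ⟨s * ρ / 32, by positivity, by ring⟩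
  have hδ1 : 32 * δ ≤ ρ := by nlinarith
  have hδs : 32 * δ ≤ s := by nlinarith
  obtain ⟨X1, hX1⟩ := hwin (ρ / 2) (by positivity)
  obtain ⟨X2, hX2⟩ := hL δ hδ
  obtain ⟨X3, hX3⟩ := ha δ hδ
  obtain ⟨X0, h01, h02, h03, h04, h05⟩ : ∃ X0 : ℝ, X1 ≤ X0 ∧ X2 ≤ X0 ∧ X3 ≤ X0 ∧ 1 ≤ X0 ∧
      log (4 * (k + d + 1)) ≤ δ * X0 := by
    refine ⟨max X1 (max X2 (max X3 (max 1 (log (4 * (k + d + 1)) / δ)))), by simp, by simp, by simp, by simp, ?_⟩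
    rw [← div_le_iff₀' hδ]
    simp
  obtain ⟨c, hc⟩ : ∃ c : ℝ, c = (8 + 2 * A) * X0 := ⟨_, rfl⟩
  obtain ⟨T, hTX, hT⟩ : ∃ T : ℝ, X0 ≤ T ∧ d + k * c < (k + ∑ j, τ j - d * (1 + ε)) * T := by
    refine ⟨max X0 ((d + k * c) / (k + ∑ j, τ j - d * (1 + ε)) + 1), le_max_left _ _, ?_⟩
    rw [← div_lt_iff₀' (by linarith)]
    exact lt_of_lt_of_le (lt_add_one _) (le_max_right _ _)
  have hT0 : 0 < T := by linarith
  -- pigeonhole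
  obtain ⟨z, P, hz0, hzN, hzP⟩ := pigeon e (exp (c - (1 + ε) * T))
    (fun j => ⌊exp ((τ j + 1) * T - c)⌋₊) ⌈exp ((1 + ε) * T)⌉₊ (Nat.ceil_pos.2 (exp_pos _)) (by
      have hM : ((⌈exp ((1 + ε) * T)⌉₊ : ℕ) : ℝ) ≤ exp (1 + (1 + ε) * T) := by
        have h1 := Nat.ceil_lt_add_one (exp_pos ((1 + ε) * T)).le
        have h2 : 1 ≤ exp ((1 + ε) * T) := one_le_exp (by positivity)
        have h3 : 2 ≤ exp 1 := by have := add_one_le_exp (1:ℝ); linarith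
        rw [exp_add]
        nlinarith
      have hreal : ((⌈exp ((1 + ε) * T)⌉₊ : ℕ) : ℝ) ^ d < ∏ j : Fin k, (((⌊exp ((τ j + 1) * T - c)⌋₊ : ℕ) : ℝ) + 1) := by
        calc _ ≤ exp (1 + (1 + ε) * T) ^ d := by gcongr
          _ = exp (d * (1 + (1 + ε) * T)) := by rw [← exp_nat_mul]
          _ < exp (∑ j, ((τ j + 1) * T - c)) := by
              rw [exp_lt_exp]
              simp only [Finset.sum_sub_distrib, ← Finset.sum_mul, Finset.sum_add_distrib]
              simp
              linarith
          _ = ∏ j, exp ((τ j + 1) * T - c) := exp_sum _ _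
          _ ≤ _ := by
              gcongr with j
              exact (Nat.lt_floor_add_one _).le
      exact_mod_cast hreal)
  obtain ⟨lam, hlam⟩ : ∃ lam : Fin k → ℝ, ∀ j, lam j = exp (c - (1 + ε) * T) * z j := ⟨_, fun _ => rfl⟩
  simp only [← hlam] at hzP
  have hu : ∀ i, |∑ j, lam j * e j i - P i| ≤ exp (-((1 + ε) * T)) := by
    intro i
    refine (hzP i).trans ?_
    rw [exp_neg, one_div]
    exact inv_anti₀ (exp_pos _) (Nat.le_ceil _)
  obtain ⟨g, hgdef⟩ : ∃ g : Fin k → ℝ, ∀ j, g j = log |lam j| := ⟨_, fun _ => rfl⟩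
  have hg : ∀ j, lam j ≠ 0 → |lam j| = exp (g j) := by
    intro j hj
    rw [hgdef, exp_log (abs_pos.2 hj)]
  have habs : ∀ j, |lam j| = exp (c - (1 + ε) * T) * |(z j : ℝ)| := by
    intro j; rw [hlam, abs_mul, abs_of_pos (exp_pos _)]
  have hgup : ∀ j, lam j ≠ 0 → g j ≤ (τ j - ε) * T := by
    intro j hj
    rw [← exp_le_exp, ← hg j hj, habs]
    have h1 : |(z j : ℝ)| ≤ exp ((τ j + 1) * T - c) := by
      have h2 := hzN j
      have h3 : |(z j : ℝ)| ≤ ((⌊exp ((τ j + 1) * T - c)⌋₊ : ℕ) : ℝ) := by exact_mod_cast h2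
      exact h3.trans (Nat.floor_le (exp_pos _).le)
    calc _ ≤ exp (c - (1 + ε) * T) * exp ((τ j + 1) * T - c) := by gcongr
      _ = _ := by rw [← exp_add]; ring_nf
  have hglo : ∀ j, lam j ≠ 0 → c - (1 + ε) * T ≤ g j := by
    intro j hj
    rw [← exp_le_exp, ← hg j hj, habs]
    have h1 : z j ≠ 0 := by rintro h; apply hj; rw [hlam, h]; simp
    have h2 : (1:ℝ) ≤ |(z j : ℝ)| := by exact_mod_cast Int.one_le_abs h1
    exact le_mul_of_one_le_right (exp_pos _).le h2
  obtain ⟨J, hJ⟩ : ∃ J : Finset (Fin k), ∀ j, j ∈ J ↔ lam j ≠ 0 :=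
    ⟨Finset.univ.filter (fun j => lam j ≠ 0), by simp⟩
  have hJne : J.Nonempty := by
    obtain ⟨j, hj⟩ := Function.ne_iff.1 hz0
    refine ⟨j, (hJ j).2 ?_⟩
    rw [hlam]
    exact mul_ne_zero (exp_pos _).ne' (by exact_mod_cast hj)
  have hτδ : ∀ j, 0 < τ j - 2 * δ := fun j => by have := hsτ j; linarith
  obtain ⟨X, hXX0, hXT, hXg, hXcase⟩ : ∃ X : ℝ, X0 ≤ X ∧ X ≤ T ∧ (∀ j, lam j ≠ 0 → g j ≤ (τ j - 2 * δ) * X) ∧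
      (X = X0 ∨ ∃ j, lam j ≠ 0 ∧ g j = (τ j - 2 * δ) * X) := by
    obtain ⟨j1, hj1, hmax⟩ := Finset.exists_max_image J (fun j => g j / (τ j - 2 * δ)) hJne
    refine ⟨max X0 (g j1 / (τ j1 - 2 * δ)), le_max_left _ _, max_le hTX ?_, ?_, ?_⟩
    · rw [div_le_iff₀ (hτδ _)]
      have := hgup j1 ((hJ _).1 hj1)
      nlinarith
    · intro j hj
      rw [← div_le_iff₀' (hτδ j)]
      exact (hmax j ((hJ j).2 hj)).trans (le_max_right _ _)
    · rcases max_choice X0 (g j1 / (τ j1 - 2 * δ)) with h | h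
      · exact Or.inl h
      · refine Or.inr ⟨j1, (hJ _).1 hj1, ?_⟩
        rw [h, mul_div_cancel₀ _ (hτδ j1).ne']
  have hX0 : 0 < X := by linarith
  -- points
  have hpts : ∀ i : Fin (k * k + 1), ∃ n ∈ G, X * (1 + 2 * (i:ℕ) * ρ) ≤ x n ∧
      x n ≤ X * (1 + (2 * (i:ℕ) + 1) * ρ) := by
    intro i
    have hi : ((i:ℕ):ℝ) ≤ (k:ℝ) * k := by
      have := i.2
      have h2 : (i:ℕ) ≤ k * k := by omega
      exact_mod_cast h2
    have hi0 : (0:ℝ) ≤ ((i:ℕ):ℝ) := by positivity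
    have hiρ : 2 * ((i:ℕ):ℝ) * ρ ≤ 1 := by
      have h7 := mul_le_mul_of_nonneg_right hi hρ.le
      linarith
    have hiρ0 : 0 ≤ 2 * ((i:ℕ):ℝ) * ρ := by positivity
    obtain ⟨n, hn, h1, h2⟩ := hX1 (X * (1 + 2 * (i:ℕ) * ρ)) (by
      have := mul_nonneg hX0.le hiρ0
      linarith)
    refine ⟨n, hn, h1, h2.trans ?_⟩
    have : (1 + ρ / 2) * (1 + 2 * ((i:ℕ):ℝ) * ρ) ≤ 1 + (2 * (i:ℕ) + 1) * ρ := by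
      have h7 := mul_le_mul_of_nonneg_left hiρ hρ.le
      linarith
    calc _ = X * ((1 + ρ / 2) * (1 + 2 * ((i:ℕ):ℝ) * ρ)) := by ring
      _ ≤ _ := by gcongr
  choose ns hnsG hns1 hns2 using hpts
  have hxlo : ∀ i, X ≤ x (ns i) := by
    intro i
    have h1 := hns1 i
    have : 0 ≤ X * (2 * ((i:ℕ):ℝ) * ρ) := by positivity
    linarith
  have hxup : ∀ i, x (ns i) ≤ (1 + D') * X := by
    intro i
    have hi : ((i:ℕ):ℝ) ≤ (k:ℝ) * k := by
      have := i.2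
      have h2 : (i:ℕ) ≤ k * k := by omega
      exact_mod_cast h2
    have h1 := hns2 i
    have : (2 * ((i:ℕ):ℝ) + 1) * ρ ≤ D' := by
      have h7 := mul_le_mul_of_nonneg_right hi hρ.le
      linarith
    have h8 := mul_le_mul_of_nonneg_left this hX0.le
    linarith
  have hlt : ∀ i i' : Fin (k * k + 1), i < i' → ρ * X ≤ x (ns i') - x (ns i) := by
    intro i i' hii
    have h1 := hns2 i
    have h2 := hns1 i'
    have h3 : ((i:ℕ):ℝ) + 1 ≤ ((i':ℕ):ℝ) := by exact_mod_cast hii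
    have h4 : (2 * ((i:ℕ):ℝ) + 2) * (ρ * X) ≤ 2 * ((i':ℕ):ℝ) * (ρ * X) := by
      apply mul_le_mul_of_nonneg_right <;> [linarith; positivity]
    linarith
  obtain ⟨i, hi⟩ := sel τ g s δ (ρ * X) (2 * X) hs hδ hsep (fun i => x (ns i))
    (fun i i' hne => by
      rcases lt_or_gt_of_ne hne with h | h
      · rw [abs_sub_comm]; exact (hlt _ _ h).trans (le_abs_self _)
      · exact (hlt _ _ h).trans (le_abs_self _))
    (fun i => by have := hxup i; nlinarith)
    (by nlinarith [mul_pos hδ hX0])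
  have q1 := hxlo i
  have q2 := hxup i
  have q3 := hX2 (ns i) (hnsG i) (by linarith)
  have q4 := hX3 (ns i) (hnsG i) (by linarith)
  obtain ⟨y, hy⟩ : ∃ y, y = x (ns i) := ⟨_, rfl⟩
  obtain ⟨a', ha'⟩ : ∃ a', a' = a (ns i) := ⟨_, rfl⟩
  rw [← hy, ← ha'] at q3
  rw [← hy, ← ha'] at q4
  rw [← hy] at q1 q2 hi
  have hy0 : 0 < y := by linarith
  have hbig : (4 * ((k:ℝ) + d + 1)) ≤ exp (δ * y) := by
    rw [← log_le_iff_le_exp (by positivity)]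
    nlinarith
  obtain ⟨j0, hj0J, hmax⟩ := Finset.exists_max_image J (fun j => g j - τ j * y) hJne
  have hj0 := (hJ _).1 hj0J
  refine endgame e τ a' lam P y δ ((1 + ε) * T) hy0 hδ ?_ ?_ j0 g hg hj0 (fun j => (q3 j).2)
    (fun j => (q3 j).1) q4 hu ?_ ?_ ?_
  · have : (0:ℝ) ≤ d := by positivity
    linarith
  · have : (0:ℝ) ≤ k := by positivity
    linarith
  · have h1 := hXg j0 hj0
    have h2 := hτδ j0
    nlinarith
  · intro j hne hj
    have h1 := hi j0 j hne.symm
    have h2 := hmax j ((hJ j).2 hj)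
    rw [abs_of_nonneg (by linarith)] at h1
    linarith
  · rcases hXcase with h | ⟨j, hj, hgj⟩
    · obtain ⟨j, hjJ⟩ := hJne
      have h2 := hmax j hjJ
      have h3 := hglo j ((hJ _).1 hjJ)
      have h4 : τ j * y ≤ A * y := by have := hA j; gcongr
      have h5 : y ≤ 2 * X0 := by rw [h] at q2; nlinarith
      have h6 : (1 + 3 * δ + A) * y ≤ (4 + A) * (2 * X0) := by
        apply mul_le_mul _ h5 hy0.le <;> linarith
      nlinarith
    · have h2 := hmax j ((hJ j).2 hj)
      rw [hgj] at h2
      have h4 : τ j * (y - X) ≤ A * (D' * X) := by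
        apply mul_le_mul (hA j) <;> [linarith; linarith; linarith]
      have h5 : (1 + 3 * δ) * y ≤ (1 + 3 * δ) * ((1 + D') * X) := by gcongr
      have h6 : (1 + 3 * δ) * (1 + D') + 2 * δ + A * D' ≤ 1 + ε := by nlinarith
      have h7 : ((1 + 3 * δ) * (1 + D') + 2 * δ + A * D') * X ≤ (1 + ε) * T := by
        apply mul_le_mul h6 hXT hX0.le; linarith
      nlinarith

lemma denom {p : ℕ} (q : Fin p → ℚ) : ∃ D : ℕ, 0 < D ∧ ∃ w : Fin p → ℤ, ∀ t, (q t : ℝ) * D = w t := by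
  have h : ∀ t, ∃ z : ℤ, (q t : ℝ) * ((∏ t, (q t).den : ℕ) : ℝ) = z := by
    intro t
    obtain ⟨c, hc⟩ := Finset.dvd_prod_of_mem (fun t => (q t).den) (Finset.mem_univ t)
    refine ⟨(q t).num * c, ?_⟩
    rw [hc]
    have := Rat.mul_den_eq_num (q t)
    have h2 : (q t : ℝ) * ((q t).den : ℝ) = (q t).num := by exact_mod_cast this
    push_cast
    rw [← mul_assoc, h2]
  choose w hw using h
  exact ⟨_, Finset.prod_pos (fun t _ => (q t).den_pos), w, hw⟩

/-- Under hypotheses (H), every subspace F of ℝ^p defined over ℚ containing e_1,…,e_k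
satisfies dim F ≥ k + τ_1 + … + τ_k. -/
theorem stmt3
    (k p : ℕ) (hk : 1 ≤ k) (hkp : k ≤ p - 1)
    (e : Fin k → EuclideanSpace ℝ (Fin p))
    (τs ωs φs : Fin k → ℝ)
    (hτpos : ∀ j, 0 < τs j) (hτinj : Function.Injective τs)
    (hosc : {n : ℕ | ∀ j : Fin k, ∀ m : ℤ,
      (n : ℝ) * ωs j + φs j ≠ Real.pi / 2 + m * Real.pi}.Infinite)
    (Q : ℕ → ℕ) (hQmono : StrictMono Q) (hQpos : ∀ n, 0 < Q n)
    (hQgrowth :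
      (∃ M : ℝ, 0 < M ∧ ∀ n : ℕ, 1 ≤ n →
        Real.log (Q (n + 1)) ≤ (1 + M / n) * Real.log (Q n)) ∨
      ((∀ j, ωs j = 0) ∧
        Filter.Tendsto (fun n => Real.log (Q (n + 1)) / Real.log (Q n))
          Filter.atTop (nhds 1)))
    (l : ℕ → Fin p → ℤ)
    (εs ηs : Fin k → ℕ → ℝ) (θs : ℕ → ℝ)
    (hεs : ∀ j, Filter.Tendsto (εs j) Filter.atTop (nhds 0))
    (hηs : ∀ j, Filter.Tendsto (ηs j) Filter.atTop (nhds 0))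
    (hθs : Filter.Tendsto θs Filter.atTop (nhds 0))
    (hL : ∀ n : ℕ, 1 ≤ n → ∀ j,
      |∑ i, (l n i : ℝ) * e j i| =
        (Q n : ℝ) ^ (-τs j + εs j n) * |Real.cos ((n : ℝ) * ωs j + φs j) + ηs j n|)
    (hl : ∀ n : ℕ, 1 ≤ n → ∀ i, |(l n i : ℝ)| ≤ (Q n : ℝ) ^ (1 + θs n))
    :
    ∀ F : Submodule ℝ (EuclideanSpace ℝ (Fin p)),
      (∃ s : Set (EuclideanSpace ℝ (Fin p)),
        (∀ v ∈ s, ∀ i, ∃ q : ℚ, v i = (q : ℝ)) ∧ Submodule.span ℝ s = F) →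
      (∀ j, e j ∈ F) →
      (k : ℝ) + ∑ j, τs j ≤ (Module.finrank ℝ F : ℝ) := by
  rintro F ⟨s, hs, rfl⟩ heF
  obtain ⟨f, hfs, hfspan, -⟩ := Submodule.exists_fun_fin_finrank_span_eq ℝ s
  choose q hq using fun i => hs (f i) (hfs i)
  choose D hD w hw using fun i => denom (q i)
  have hcoef : ∀ j, ∃ c : Fin (Module.finrank ℝ (Submodule.span ℝ s)) → ℝ, ∑ i, c i • f i = e j := by
    intro j
    have := heF j
    rw [← hfspan] at this
    exact Submodule.mem_span_range_iff_exists_fun ℝ |>.1 this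
  choose c hc using hcoef
  obtain ⟨x, hx⟩ : ∃ x : ℕ → ℝ, ∀ n, x n = Real.log (Q n) := ⟨_, fun _ => rfl⟩
  have hQR : ∀ n, (0:ℝ) < Q n := fun n => by exact_mod_cast hQpos n
  have hxmono : StrictMono x := by
    intro m n hmn
    rw [hx, hx]
    exact Real.log_lt_log (hQR m) (by exact_mod_cast hQmono hmn)
  have hx0 : ∀ n, 1 ≤ n → 0 < x n := by
    intro n hn
    have h0 : 0 ≤ x 0 := by
      rw [hx]; exact Real.log_nonneg (by exact_mod_cast hQpos 0)
    exact lt_of_le_of_lt h0 (hxmono (by omega))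
  have hxinf : Filter.Tendsto x Filter.atTop Filter.atTop := by
    have : x = fun n => Real.log (Q n) := funext hx
    rw [this]
    exact Real.tendsto_log_atTop.comp (tendsto_natCast_atTop_atTop.comp hQmono.tendsto_atTop)
  have hr : Filter.Tendsto (fun n => x (n+1) / x n) Filter.atTop (nhds 1) := by
    rcases hQgrowth with ⟨M, hM, h⟩ | ⟨-, h⟩
    · have h1 : Filter.Tendsto (fun n : ℕ => 1 + M / (n:ℝ)) Filter.atTop (nhds 1) := by
        simpa using (tendsto_const_div_atTop_nhds_zero_nat M).const_add 1
      refine tendsto_of_tendsto_of_tendsto_of_le_of_le' tendsto_const_nhds h1 ?_ ?_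
      · filter_upwards [Filter.eventually_ge_atTop 1] with n hn
        rw [le_div_iff₀ (hx0 n hn), one_mul]
        exact (hxmono (Nat.lt_succ_self n)).le
      · filter_upwards [Filter.eventually_ge_atTop 1] with n hn
        rw [div_le_iff₀ (hx0 n hn), hx, hx]
        exact h n hn
    · simpa only [hx] using h
  obtain ⟨n0, hn0⟩ := hosc.nonempty
  obtain ⟨c0, hc0, B, hB⟩ := gaps ωs φs n0 (by
    intro j h
    obtain ⟨m, hm⟩ := Real.cos_eq_zero_iff.1 h
    exact hn0 j m (by rw [hm]; ring))
  have toX : ∀ pr : ℕ → Prop, (∀ᶠ n in Filter.atTop, pr n) → ∃ X0, ∀ n, X0 ≤ x n → pr n := by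
    intro pr h
    obtain ⟨N, hN⟩ := Filter.eventually_atTop.1 h
    exact ⟨x N, fun n hn => hN n (hxmono.le_iff_le.1 hn)⟩
  have hrpow : ∀ n y, (Q n : ℝ) ^ (y:ℝ) = Real.exp (x n * y) := by
    intro n y
    rw [Real.rpow_def_of_pos (hQR n), hx]
  have hid : ∀ n j, ∑ i, ((∑ t, l n t * w i t : ℤ) : ℝ) * (c j i / D i) = ∑ t, (l n t : ℝ) * e j t := by
    intro n j
    have he : ∀ t, e j t = ∑ i, c j i * f i t := by
      intro t
      rw [← hc j]
      simp
    simp only [he, Finset.mul_sum]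
    rw [Finset.sum_comm]
    refine Finset.sum_congr rfl fun i _ => ?_
    push_cast
    rw [Finset.sum_mul]
    refine Finset.sum_congr rfl fun t _ => ?_
    have hDi : (D i : ℝ) ≠ 0 := by have := hD i; positivity
    rw [hq, ← hw]
    field_simp
  refine core (fun j i => c j i / D i) τs hτpos hτinj x (fun n i => ∑ t, l n t * w i t)
    {n | 1 ≤ n ∧ ∀ j, c0 ≤ |Real.cos (n * ωs j + φs j)|} ?_ ?_ ?_
  · intro ρ hρ
    refine window x hxmono.monotone hx0 hxinf hr _ (B + 1) (fun N => ?_) ρ hρ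
    obtain ⟨n, h1, h2, h3⟩ := hB (N + 1)
    exact ⟨n, ⟨by omega, h3⟩, by omega, by omega⟩
  · intro δ hδ
    have hev : ∀ᶠ n in Filter.atTop, ∀ j, |εs j n| < δ / 2 ∧ |ηs j n| < min (c0 / 2) 1 ∧
        max 2 (2 / c0) ≤ Real.exp (δ / 2 * x n) := by
      rw [Filter.eventually_all]
      intro j
      have h1 := (hεs j).abs.eventually (gt_mem_nhds (show |(0:ℝ)| < δ / 2 by simpa using hδ))
      have h2 := (hηs j).abs.eventually (gt_mem_nhds (show |(0:ℝ)| < min (c0 / 2) 1 by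
        simpa using hc0))
      have h3 := (Real.tendsto_exp_atTop.comp (hxinf.const_mul_atTop (show 0 < δ / 2 by positivity))).eventually
        (Filter.eventually_ge_atTop (max 2 (2 / c0)))
      filter_upwards [h1, h2, h3] with n a b c using ⟨a, b, c⟩
    obtain ⟨X0, hX0⟩ := toX _ hev
    refine ⟨X0, fun n hn hXn j => ?_⟩
    obtain ⟨h1, h2, h3⟩ := hX0 n hXn j
    obtain ⟨hn1, hcos⟩ := hn
    have hxn := hx0 n hn1
    have hcosj := hcos j
    rw [hid, hL n hn1 j, hrpow]
    obtain ⟨h2a, h2b⟩ := lt_min_iff.1 h2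
    obtain ⟨h3a, h3b⟩ := max_le_iff.1 h3
    obtain ⟨h1a, h1b⟩ := abs_lt.1 h1
    have hlow : c0 / 2 ≤ |Real.cos ((n : ℝ) * ωs j + φs j) + ηs j n| := by
      have := abs_sub_abs_le_abs_sub (Real.cos ((n : ℝ) * ωs j + φs j)) (-ηs j n)
      rw [abs_neg, sub_neg_eq_add] at this
      linarith
    have hupp : |Real.cos ((n : ℝ) * ωs j + φs j) + ηs j n| ≤ 2 := by
      have := abs_add_le (Real.cos ((n : ℝ) * ωs j + φs j)) (ηs j n)
      have := Real.abs_cos_le_one ((n : ℝ) * ωs j + φs j)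
      linarith
    have hinv : Real.exp (-(δ / 2 * x n)) ≤ c0 / 2 := by
      rw [Real.exp_neg, inv_le_comm₀ (Real.exp_pos _) (by positivity)]
      rwa [inv_div]
    constructor
    · calc _ = Real.exp (x n * (-τs j - δ / 2)) * Real.exp (-(δ / 2 * x n)) := by
            rw [← Real.exp_add]; ring_nf
        _ ≤ Real.exp (x n * (-τs j + εs j n)) * (c0 / 2) := by
            gcongr
            linarith
        _ ≤ _ := by gcongr
    · calc _ ≤ Real.exp (x n * (-τs j + δ / 2)) * Real.exp (δ / 2 * x n) := by
            gcongr
            linarith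
        _ = _ := by rw [← Real.exp_add]; ring_nf
  · intro δ hδ
    obtain ⟨W, hW⟩ : ∃ W : ℝ, ∀ i, ∑ t, |(w i t : ℝ)| ≤ W :=
      ⟨∑ i, ∑ t, |(w i t : ℝ)|, fun i => Finset.single_le_sum
        (f := fun i => ∑ t, |(w i t : ℝ)|) (fun i _ => Finset.sum_nonneg fun _ _ => abs_nonneg _) (Finset.mem_univ i)⟩
    have hev : ∀ᶠ n in Filter.atTop, |θs n| < δ / 2 ∧ W ≤ Real.exp (δ / 2 * x n) := by
      have h1 := hθs.abs.eventually (gt_mem_nhds (show |(0:ℝ)| < δ / 2 by simpa using hδ))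
      have h3 := (Real.tendsto_exp_atTop.comp (hxinf.const_mul_atTop (show 0 < δ / 2 by positivity))).eventually
        (Filter.eventually_ge_atTop W)
      filter_upwards [h1, h3] with n a b using ⟨a, b⟩
    obtain ⟨X0, hX0⟩ := toX _ hev
    refine ⟨X0, fun n hn hXn i => ?_⟩
    obtain ⟨h1, h2⟩ := hX0 n hXn
    have hxn := hx0 n hn.1
    have h1b := (abs_lt.1 h1).2
    push_cast
    calc _ ≤ ∑ t, |(l n t : ℝ) * w i t| := Finset.abs_sum_le_sum_abs _ _
      _ ≤ ∑ t, Real.exp (x n * (1 + θs n)) * |(w i t : ℝ)| := by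
          refine Finset.sum_le_sum fun t _ => ?_
          rw [abs_mul, ← hrpow]
          gcongr
          exact hl n hn.1 t
      _ = Real.exp (x n * (1 + θs n)) * ∑ t, |(w i t : ℝ)| := by rw [Finset.mul_sum]
      _ ≤ Real.exp (x n * (1 + δ / 2)) * Real.exp (δ / 2 * x n) := by
          gcongr
          exact (hW i).trans h2
      _ = _ := by rw [← Real.exp_add]; ring_nf
end

section
/- Assume hypotheses (H). Then the vectors e_1,…,e_k are linearly independent over ℝ in ℝ^p, and the ℝ-subspace they span intersects ℚ^p only in the zero vector. -/
open Filter Topology in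
theorem aux_cos (ω φ : ℝ) (η : ℕ → ℝ) (hη : Tendsto η atTop (𝓝 0))
    (h : Tendsto (fun n : ℕ => |Real.cos ((n : ℝ) * ω + φ) + η n|) atTop (𝓝 0)) (n : ℕ) :
    Real.cos ((n : ℝ) * ω + φ) = 0 := by
  have h1 : Tendsto (fun n : ℕ => Real.cos ((n : ℝ) * ω + φ)) atTop (𝓝 0) := by
    have := ((tendsto_zero_iff_abs_tendsto_zero _).2 h).sub hη
    simpa using this
  have h2 : Tendsto (fun n : ℕ => Real.cos (((n + 1 : ℕ) : ℝ) * ω + φ)) atTop (𝓝 0) :=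
    h1.comp (tendsto_add_atTop_nat 1)
  have h3 : Tendsto (fun n : ℕ => Real.sin ((n : ℝ) * ω + φ) * Real.sin ω) atTop (𝓝 0) := by
    have := (h1.mul_const (Real.cos ω)).sub h2
    simp only [zero_mul, sub_zero] at this
    refine this.congr fun m => ?_
    have : ((m + 1 : ℕ) : ℝ) * ω + φ = ((m : ℝ) * ω + φ) + ω := by push_cast; ring
    rw [this, Real.cos_add (_ + φ) ω]; ring
  have h4 : Real.sin ω ^ 2 = 0 := by
    have a := (h3.pow 2).add ((h1.pow 2).mul_const (Real.sin ω ^ 2))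
    have b : (fun n : ℕ => (Real.sin ((n : ℝ) * ω + φ) * Real.sin ω) ^ 2 +
        Real.cos ((n : ℝ) * ω + φ) ^ 2 * Real.sin ω ^ 2) = fun _ => Real.sin ω ^ 2 := by
      funext m
      have := Real.sin_sq_add_cos_sq ((m : ℝ) * ω + φ)
      rw [mul_pow, ← add_mul, this, one_mul]
    rw [b] at a
    have := tendsto_nhds_unique a tendsto_const_nhds
    simpa using this.symm
  have h5 : Real.sin ω = 0 := by simpa using h4
  have h6 : Real.cos ω ^ 2 = 1 := by
    have := Real.sin_sq_add_cos_sq ω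
    rw [h4] at this; linarith
  have h7 : ∀ m : ℕ, Real.cos ((m : ℝ) * ω + φ) ^ 2 = Real.cos φ ^ 2 := by
    intro m
    induction m with
    | zero => simp
    | succ m ih =>
      have : ((m + 1 : ℕ) : ℝ) * ω + φ = ((m : ℝ) * ω + φ) + ω := by push_cast; ring
      rw [this, Real.cos_add (_ + φ) ω, h5, mul_zero, sub_zero, mul_pow, h6, ih, mul_one]
  have h8 := h1.pow 2
  simp only [h7] at h8
  have h9 := tendsto_nhds_unique h8 tendsto_const_nhds
  have := h7 n
  rw [← h9] at this
  simpa using this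

open Filter Topology in
theorem aux_pow (Q : ℕ → ℕ) (hQ : StrictMono Q) (c : ℝ) (hc : 0 < c) (δ B : ℕ → ℝ)
    (hδ : Tendsto δ atTop (𝓝 0)) (C : ℝ) (hB : ∀ᶠ n in atTop, |B n| ≤ C) :
    Tendsto (fun n => (Q n : ℝ) ^ (-c + δ n) * |B n|) atTop (𝓝 0) := by
  have hQr : Tendsto (fun n => (Q n : ℝ)) atTop atTop :=
    tendsto_natCast_atTop_atTop.comp hQ.tendsto_atTop
  have h1 : Tendsto (fun n => (Q n : ℝ) ^ (-(c / 2)) * C) atTop (𝓝 0) := by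
    simpa using ((tendsto_rpow_neg_atTop (half_pos hc)).comp hQr).mul_const C
  refine squeeze_zero' (Eventually.of_forall fun n => by positivity) ?_ h1
  filter_upwards [hB, hδ.eventually (gt_mem_nhds (half_pos hc)), hQr.eventually_ge_atTop 1]
    with n hn h2 h3
  have : (Q n : ℝ) ^ (-c + δ n) ≤ (Q n : ℝ) ^ (-(c / 2)) :=
    Real.rpow_le_rpow_of_exponent_le h3 (by linarith)
  gcongr

/-- Under hypotheses (H), the vectors e_1,…,e_k are ℝ-linearly independent and their
ℝ-span meets ℚ^p only at 0. -/
theorem stmt4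
    (k p : ℕ) (hk : 1 ≤ k) (hkp : k ≤ p - 1)
    (e : Fin k → EuclideanSpace ℝ (Fin p))
    (τs ωs φs : Fin k → ℝ)
    (hτpos : ∀ j, 0 < τs j) (hτinj : Function.Injective τs)
    (hosc : {n : ℕ | ∀ j : Fin k, ∀ m : ℤ,
      (n : ℝ) * ωs j + φs j ≠ Real.pi / 2 + m * Real.pi}.Infinite)
    (Q : ℕ → ℕ) (hQmono : StrictMono Q) (hQpos : ∀ n, 0 < Q n)
    (hQgrowth :
      (∃ M : ℝ, 0 < M ∧ ∀ n : ℕ, 1 ≤ n →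
        Real.log (Q (n + 1)) ≤ (1 + M / n) * Real.log (Q n)) ∨
      ((∀ j, ωs j = 0) ∧
        Filter.Tendsto (fun n => Real.log (Q (n + 1)) / Real.log (Q n))
          Filter.atTop (nhds 1)))
    (l : ℕ → Fin p → ℤ)
    (εs ηs : Fin k → ℕ → ℝ) (θs : ℕ → ℝ)
    (hεs : ∀ j, Filter.Tendsto (εs j) Filter.atTop (nhds 0))
    (hηs : ∀ j, Filter.Tendsto (ηs j) Filter.atTop (nhds 0))
    (hθs : Filter.Tendsto θs Filter.atTop (nhds 0))
    (hL : ∀ n : ℕ, 1 ≤ n → ∀ j,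
      |∑ i, (l n i : ℝ) * e j i| =
        (Q n : ℝ) ^ (-τs j + εs j n) * |Real.cos ((n : ℝ) * ωs j + φs j) + ηs j n|)
    (hl : ∀ n : ℕ, 1 ≤ n → ∀ i, |(l n i : ℝ)| ≤ (Q n : ℝ) ^ (1 + θs n))
    :
    LinearIndependent ℝ e ∧
      ∀ x ∈ Submodule.span ℝ (Set.range e), (∀ i, ∃ q : ℚ, x i = (q : ℝ)) → x = 0 := by
  classical
  have hB : ∀ j, ∀ᶠ n : ℕ in Filter.atTop,
      |Real.cos ((n : ℝ) * ωs j + φs j) + ηs j n| ≤ 2 := by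
    intro j
    have := ((hηs j).abs).eventually (gt_mem_nhds (show |(0:ℝ)| < 1 by simp))
    filter_upwards [this] with n hn
    refine (abs_add_le _ _).trans ?_
    linarith [Real.abs_cos_le_one ((n : ℝ) * ωs j + φs j)]
  set u : Fin k → ℕ → ℝ := fun j n => ∑ i, (l n i : ℝ) * e j i with hu
  have hu0 : ∀ j, Filter.Tendsto (u j) Filter.atTop (nhds 0) := by
    intro j
    rw [tendsto_zero_iff_abs_tendsto_zero]
    refine (aux_pow Q hQmono (τs j) (hτpos j) _ _ (hεs j) 2 (hB j)).congr' ?_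
    filter_upwards [Filter.eventually_ge_atTop 1] with n hn
    exact (hL n hn j).symm
  have key0 : ∀ c : Fin k → ℝ, (∀ᶠ n in Filter.atTop, ∑ j, c j * u j n = 0) → c = 0 := by
    intro c hc
    by_contra hne
    have hS : (Finset.univ.filter fun j => c j ≠ 0).Nonempty := by
      by_contra h
      rw [Finset.not_nonempty_iff_eq_empty, Finset.filter_eq_empty_iff] at h
      exact hne (funext fun j => by simpa using h (Finset.mem_univ j))
    obtain ⟨j0, hj0, hmin⟩ := Finset.exists_min_image _ τs hS
    have hcj0 : c j0 ≠ 0 := (Finset.mem_filter.1 hj0).2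
    set w : Fin k → ℕ → ℝ := fun j n => (Q n : ℝ) ^ (τs j0 - εs j0 n) * u j n with hw
    have habs : ∀ j, ∀ n, 1 ≤ n → |w j n| = (Q n : ℝ) ^ (-(τs j - τs j0) + (εs j n - εs j0 n)) *
        |Real.cos ((n : ℝ) * ωs j + φs j) + ηs j n| := by
      intro j n hn
      have hq : (0 : ℝ) < Q n := by exact_mod_cast hQpos n
      rw [hw]
      simp only
      rw [abs_mul, abs_of_pos (Real.rpow_pos_of_pos hq _), hL n hn j, ← mul_assoc,
        ← Real.rpow_add hq]
      congr 2
      ring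
    have hwj : ∀ j ∈ Finset.univ.erase j0,
        Filter.Tendsto (fun n => c j * w j n) Filter.atTop (nhds 0) := by
      intro j hj
      have hjne := (Finset.mem_erase.1 hj).1
      by_cases hcj : c j = 0
      · simp [hcj]
      have hle := hmin j (Finset.mem_filter.2 ⟨Finset.mem_univ _, hcj⟩)
      have hlt : τs j0 < τs j := lt_of_le_of_ne hle fun h => hjne (hτinj h).symm
      have : Filter.Tendsto (w j) Filter.atTop (nhds 0) := by
        rw [tendsto_zero_iff_abs_tendsto_zero]
        have hd : Filter.Tendsto (fun n => εs j n - εs j0 n) Filter.atTop (nhds 0) := by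
          simpa using (hεs j).sub (hεs j0)
        refine (aux_pow Q hQmono (τs j - τs j0) (sub_pos.2 hlt) _ _ hd 2 (hB j)).congr' ?_
        filter_upwards [Filter.eventually_ge_atTop 1] with n hn
        exact (habs j n hn).symm
      simpa using this.const_mul (c j)
    have hsum := tendsto_finsetSum _ hwj
    have hw0 : Filter.Tendsto (fun n => |w j0 n|) Filter.atTop (nhds 0) := by
      have := (hsum.neg.const_mul (c j0)⁻¹).abs
      simp only [Finset.sum_const_zero, neg_zero, mul_zero, abs_zero] at this
      refine this.congr' ?_
      filter_upwards [hc] with n hn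
      congr 1
      have h1 : ∑ j, c j * w j n = 0 := by
        have : ∑ j, c j * w j n = (Q n : ℝ) ^ (τs j0 - εs j0 n) * ∑ j, c j * u j n := by
          rw [Finset.mul_sum]
          exact Finset.sum_congr rfl fun j _ => by simp only [hw]; ring
        rw [this, hn, mul_zero]
      rw [← Finset.add_sum_erase _ _ (Finset.mem_univ j0)] at h1
      rw [← eq_neg_of_add_eq_zero_left h1]
      field_simp
    have hcos := aux_cos (ωs j0) (φs j0) (ηs j0) (hηs j0) (hw0.congr' (by
      filter_upwards [Filter.eventually_ge_atTop 1] with n hn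
      rw [habs j0 n hn]
      simp))
    obtain ⟨n, hn⟩ := hosc.nonempty
    obtain ⟨m, hm⟩ := Real.cos_eq_zero_iff.1 (hcos n)
    exact hn j0 m (by rw [hm]; ring)
  have key : ∀ c : Fin k → ℝ, (∀ i, ∃ q : ℚ, (∑ j, c j • e j) i = (q : ℝ)) → c = 0 := by
    intro c hx
    choose q hq using hx
    apply key0
    set D : ℕ := ∏ i, (q i).den with hD
    have hDpos : (0 : ℝ) < D := by
      exact_mod_cast Finset.prod_pos fun i _ => (q i).den_pos
    have hint : ∀ i, ∃ z : ℤ, (D : ℝ) * (q i : ℝ) = z := by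
      intro i
      obtain ⟨a, ha⟩ := Finset.dvd_prod_of_mem (fun i => (q i).den) (Finset.mem_univ i)
      refine ⟨a * (q i).num, ?_⟩
      have h1 : ((q i).den : ℚ) * q i = (q i).num := Rat.den_mul_eq_num (q i)
      have h2 : ((q i).den : ℝ) * (q i : ℝ) = (q i).num := by exact_mod_cast h1
      rw [hD, ha]
      push_cast
      rw [← h2]; ring
    choose z hz using hint
    have hcu : ∀ n, ∑ j, c j * u j n = ∑ i, (l n i : ℝ) * q i := by
      intro n
      simp only [hu, ← hq, Finset.mul_sum]
      rw [Finset.sum_comm]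
      refine Finset.sum_congr rfl fun i _ => ?_
      simp only [WithLp.ofLp_sum, WithLp.ofLp_smul, Finset.sum_apply, Pi.smul_apply, smul_eq_mul,
        Finset.mul_sum]
      exact Finset.sum_congr rfl fun j _ => by ring
    have hDz : ∀ n, (D : ℝ) * ∑ j, c j * u j n = ((∑ i, l n i * z i : ℤ) : ℝ) := by
      intro n
      rw [hcu, Finset.mul_sum]
      push_cast
      exact Finset.sum_congr rfl fun i _ => by rw [← hz]; ring
    have ht : Filter.Tendsto (fun n => |(D : ℝ) * ∑ j, c j * u j n|) Filter.atTop (nhds 0) := by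
      have := ((tendsto_finsetSum Finset.univ
        fun j _ => (hu0 j).const_mul (c j)).const_mul (D : ℝ)).abs
      simpa using this
    filter_upwards [ht.eventually (gt_mem_nhds one_pos)] with n hn
    rw [hDz] at hn
    have h0 : (∑ i, l n i * z i : ℤ) = 0 := by
      rw [← Int.abs_lt_one_iff]
      exact_mod_cast hn
    have h1 := hDz n
    rw [h0, Int.cast_zero] at h1
    exact (mul_eq_zero.1 h1).resolve_left hDpos.ne'
  constructor
  · rw [Fintype.linearIndependent_iff]
    intro c hc
    have := key c fun i => ⟨0, by rw [hc]; simp⟩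
    exact fun i => congrFun this i
  · intro x hx hr
    obtain ⟨c, rfl⟩ := (Submodule.mem_span_range_iff_exists_fun ℝ).1 hx
    have := key c hr
    simp [this]
end

section
/- Assume hypotheses (H). Then for every ε > 0 there exists Q_0 such that for every real number Q ≥ Q_0 the following holds: if a point of ℤ^p can be written as λ_1e_1 + … + λ_ke_k + u with real numbers λ_1,…,λ_k satisfying |λ_j| ≤ Q^{τ_j} for every j ∈ {1,…,k}, and with u orthogonal to the ℝ-span of e_1,…,e_k and ‖u‖ ≤ Q^{−1−ε}, then this point is the zero vector. -/
namespace NestAux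

lemma exists_pos_lb {ι : Type*} [Finite ι] (f : ι → ℝ) (hf : ∀ i, 0 < f i) :
    ∃ c : ℝ, 0 < c ∧ ∀ i, c ≤ f i := by
  cases isEmpty_or_nonempty ι
  · exact ⟨1, one_pos, fun i => isEmptyElim i⟩
  · obtain ⟨i, hi⟩ := Finite.exists_min f
    exact ⟨f i, hf i, hi⟩

lemma exists_ub {ι : Type*} [Finite ι] (f : ι → ℝ) :
    ∃ c : ℝ, 0 < c ∧ ∀ i, f i ≤ c := by
  cases isEmpty_or_nonempty ι
  · exact ⟨1, one_pos, fun i => isEmptyElim i⟩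
  · obtain ⟨i, hi⟩ := Finite.exists_max f
    exact ⟨max 1 (f i), by positivity, fun j => (hi j).trans (le_max_right _ _)⟩

lemma syndetic {k : ℕ} (ω φ : Fin k → ℝ) (n0 : ℕ)
    (h0 : ∀ j, Real.cos ((n0 : ℝ) * ω j + φ j) ≠ 0) :
    ∃ c : ℝ, 0 < c ∧ ∃ N : ℕ, ∀ m : ℕ, ∃ n, m ≤ n ∧ n ≤ m + N ∧
      ∀ j, c ≤ |Real.cos ((n : ℝ) * ω j + φ j)| := by
  obtain ⟨c, hc, hcj⟩ := exists_pos_lb (fun j => |Real.cos ((n0 : ℝ) * ω j + φ j)|)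
    (fun j => abs_pos.2 (h0 j))
  let z : ℕ → Fin k → ℂ := fun n j => Complex.exp (((n : ℝ) * ω j : ℝ) * Complex.I)
  have hb : Bornology.IsBounded (Set.range z) := by
    refine (Metric.isBounded_closedBall (x := (0 : Fin k → ℂ)) (r := 1)).subset ?_
    rintro _ ⟨n, rfl⟩
    rw [mem_closedBall_zero_iff, pi_norm_le_iff_of_nonneg zero_le_one]
    intro j
    exact (Complex.norm_exp_ofReal_mul_I _).le
  have ht : TotallyBounded (Set.range z) := by
    exact Metric.isCompact_of_isClosed_isBounded isClosed_closure hb.closure |>.totallyBounded.subset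
      subset_closure
  obtain ⟨t, hts, htf, hcov⟩ := Metric.finite_approx_of_totallyBounded ht (c / 2) (by positivity)
  have hch : ∀ x ∈ t, ∃ n, z n = x := fun x hx => hts hx
  choose! f hf using hch
  obtain ⟨M, hM⟩ := (htf.image f).bddAbove
  refine ⟨c / 2, by positivity, M + n0, fun m => ?_⟩
  have hm := hcov ⟨m + M, rfl⟩
  simp only [Set.mem_iUnion, Metric.mem_ball] at hm
  obtain ⟨x, hx, hd⟩ := hm
  have hfx : f x ≤ M := hM ⟨x, hx, rfl⟩
  rw [← hf x hx] at hd
  refine ⟨m + (M - f x) + n0, by omega, by omega, fun j => ?_⟩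
  have hdj : dist (z (m + M) j) (z (f x) j) < c / 2 := (dist_le_pi_dist _ _ j).trans_lt hd
  set n := m + (M - f x) + n0 with hn
  have hcast : (n : ℝ) = (m + M : ℕ) - (f x : ℝ) + n0 := by
    rw [hn]; push_cast [Nat.cast_sub hfx]; ring
  have e1 : Complex.exp (((n : ℝ) * ω j + φ j : ℝ) * Complex.I)
      - Complex.exp (((n0 : ℝ) * ω j + φ j : ℝ) * Complex.I)
      = (z (m + M) j - z (f x) j) *
        Complex.exp (((n0 - f x : ℝ) * ω j + φ j : ℝ) * Complex.I) := by
    simp only [z, sub_mul, ← Complex.exp_add]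
    rw [hcast]
    congr 2 <;> push_cast <;> ring
  have e2 : ‖Complex.exp (((n : ℝ) * ω j + φ j : ℝ) * Complex.I)
      - Complex.exp (((n0 : ℝ) * ω j + φ j : ℝ) * Complex.I)‖ < c / 2 := by
    rw [e1, norm_mul, Complex.norm_exp_ofReal_mul_I, mul_one, ← dist_eq_norm]
    exact hdj
  have e3 := (Complex.abs_re_le_norm _).trans_lt e2
  rw [Complex.sub_re, Complex.exp_ofReal_mul_I_re, Complex.exp_ofReal_mul_I_re] at e3
  have e4 := abs_sub_abs_le_abs_sub (Real.cos ((n0 : ℝ) * ω j + φ j)) (Real.cos ((n : ℝ) * ω j + φ j))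
  rw [abs_sub_comm] at e4
  have := hcj j
  linarith

lemma ratio_tendsto (Q : ℕ → ℕ) (hQmono : StrictMono Q) (hQpos : ∀ n, 0 < Q n)
    (M : ℝ) (h : ∀ n : ℕ, 1 ≤ n →
        Real.log (Q (n + 1)) ≤ (1 + M / n) * Real.log (Q n)) :
    Filter.Tendsto (fun n => Real.log (Q (n + 1)) / Real.log (Q n))
          Filter.atTop (nhds 1) := by
  have hpos : ∀ n, 1 ≤ n → 0 < Real.log (Q n) := fun n hn => by
    apply Real.log_pos
    have := hQmono (show 0 < n by omega)
    have := hQpos 0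
    exact_mod_cast (by omega : 1 < Q n)
  have h2 : Filter.Tendsto (fun n : ℕ => 1 + M / (n : ℝ)) Filter.atTop (nhds 1) := by
    simpa using (tendsto_const_div_atTop_nhds_zero_nat M).const_add 1
  refine tendsto_of_tendsto_of_tendsto_of_le_of_le' tendsto_const_nhds h2 ?_ ?_
  · filter_upwards [Filter.eventually_ge_atTop 1] with n hn
    rw [le_div_iff₀ (hpos n hn), one_mul]
    apply Real.log_le_log (by exact_mod_cast hQpos n)
    exact_mod_cast (hQmono (Nat.lt_succ_self n)).le
  · filter_upwards [Filter.eventually_ge_atTop 1] with n hn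
    rw [div_le_iff₀ (hpos n hn)]
    exact h n hn

lemma ratio_tendsto_N (Q : ℕ → ℕ) (hQmono : StrictMono Q) (hQpos : ∀ n, 0 < Q n)
    (h : Filter.Tendsto (fun n => Real.log (Q (n + 1)) / Real.log (Q n))
          Filter.atTop (nhds 1)) (N : ℕ) :
    Filter.Tendsto (fun n => Real.log (Q (n + N)) / Real.log (Q n))
          Filter.atTop (nhds 1) := by
  have hpos : ∀ n, 1 ≤ n → 0 < Real.log (Q n) := fun n hn => by
    apply Real.log_pos
    have := hQmono (show 0 < n by omega)
    have := hQpos 0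
    exact_mod_cast (by omega : 1 < Q n)
  induction N with
  | zero =>
    refine tendsto_const_nhds.congr' ?_
    filter_upwards [Filter.eventually_ge_atTop 1] with n hn
    exact (div_self (hpos n hn).ne').symm
  | succ N ih =>
    have h3 := (h.comp (Filter.tendsto_add_atTop_nat N)).mul ih
    rw [one_mul] at h3
    refine h3.congr' ?_
    filter_upwards [Filter.eventually_ge_atTop 1] with n hn
    have := (hpos (n + N) (by omega)).ne'
    have := (hpos n hn).ne'
    simp only [Function.comp]
    rw [← add_assoc]
    field_simp

lemma choose_n (Q : ℕ → ℕ) (hQmono : StrictMono Q) (hQpos : ∀ n, 0 < Q n)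
    (h : Filter.Tendsto (fun n => Real.log (Q (n + 1)) / Real.log (Q n))
          Filter.atTop (nhds 1)) (G : ℕ → Prop) (N : ℕ)
    (hG : ∀ m : ℕ, ∃ n, m ≤ n ∧ n ≤ m + N ∧ G n) (N0 : ℕ) (κ : ℝ) (hκ : 0 < κ) :
    ∃ t0 : ℝ, ∀ t, t0 ≤ t → ∃ n, N0 ≤ n ∧ G n ∧ t ≤ Real.log (Q n) ∧
      Real.log (Q n) ≤ (1 + κ) * t := by
  have hpos : ∀ n, 1 ≤ n → 0 < Real.log (Q n) := fun n hn => by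
    apply Real.log_pos
    have := hQmono (show 0 < n by omega)
    have := hQpos 0
    exact_mod_cast (by omega : 1 < Q n)
  have hmono : Monotone (fun n => Real.log (Q n)) := fun a b hab => by
    apply Real.log_le_log (by exact_mod_cast hQpos a)
    exact_mod_cast hQmono.monotone hab
  have hlim : Filter.Tendsto (fun n => Real.log (Q n)) Filter.atTop Filter.atTop :=
    Real.tendsto_log_atTop.comp (tendsto_natCast_atTop_atTop.comp hQmono.tendsto_atTop)
  have hev := (ratio_tendsto_N Q hQmono hQpos h (N + 1)).eventually_lt_const
    (show (1:ℝ) < 1 + κ by linarith)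
  obtain ⟨N1, hN1⟩ := Filter.eventually_atTop.1
    (hev.and ((Filter.eventually_ge_atTop 1).and (Filter.eventually_ge_atTop N0)))
  refine ⟨Real.log (Q N1) + 1, fun t ht => ?_⟩
  have hex : ∃ n, t ≤ Real.log (Q n) := (hlim.eventually_ge_atTop t).exists
  classical
  have hspec := Nat.find_spec hex
  set n1 := Nat.find hex with hn1
  have hlt : N1 < n1 := by
    by_contra hcon
    push Not at hcon
    have := hmono hcon
    simp only at this
    linarith
  have hmin : Real.log (Q (n1 - 1)) < t := by
    have := Nat.find_min hex (m := n1 - 1) (by omega)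
    exact not_le.1 this
  obtain ⟨n, h1, h2, h3⟩ := hG n1
  obtain ⟨ha, hb, hc⟩ := hN1 (n1 - 1) (by omega)
  refine ⟨n, by omega, h3, hspec.trans (hmono h1), ?_⟩
  have h4 := hmono (show n ≤ n1 - 1 + (N + 1) by omega)
  rw [div_lt_iff₀ (hpos _ hb)] at ha
  simp only at h4
  have : (1 + κ) * Real.log (Q (n1 - 1)) ≤ (1 + κ) * t := by gcongr
  linarith

lemma find_y {k : ℕ} (τ a : Fin k → ℝ) (τm τM δ c T : ℝ)
    (hm : ∀ j, τm ≤ τ j) (hM : ∀ j, τ j ≤ τM) (hδ : 0 < δ) (hT : 0 < T)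
    (hk : 1 ≤ k)
    (ha : ∀ j, 0 ≤ a j) (hac : c ≤ ∑ j, a j) (haT : ∀ j, a j ≤ Real.exp (τ j * T)) :
    ∃ y, δ * T ≤ y ∧ y ≤ (1 + δ) * T ∧
      ∑ j, a j * Real.exp (-τ j * y) ≤ k * Real.exp (-(τm * δ * T)) ∧
      min c 1 * Real.exp (-(τM * δ * T)) ≤ ∑ j, a j * Real.exp (-τ j * y) := by
  let S : ℝ → ℝ := fun y => ∑ j, a j * Real.exp (-τ j * y)
  have hδT : 0 < δ * T := by positivity
  have hend : S ((1 + δ) * T) ≤ k * Real.exp (-(τm * δ * T)) := by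
    have : ∀ j ∈ (Finset.univ : Finset (Fin k)),
        a j * Real.exp (-τ j * ((1 + δ) * T)) ≤ Real.exp (-(τm * δ * T)) := by
      intro j _
      calc a j * Real.exp (-τ j * ((1 + δ) * T))
          ≤ Real.exp (τ j * T) * Real.exp (-τ j * ((1 + δ) * T)) := by
            gcongr; exact haT j
        _ = Real.exp (-(τ j * (δ * T))) := by rw [← Real.exp_add]; congr 1; ring
        _ ≤ _ := by
            apply Real.exp_le_exp.2
            have := mul_le_mul_of_nonneg_right (hm j) hδT.le
            linarith
    calc S ((1 + δ) * T) ≤ ∑ j : Fin k, Real.exp (-(τm * δ * T)) := Finset.sum_le_sum this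
      _ = _ := by simp
  have hstart : min c 1 * Real.exp (-(τM * δ * T)) ≤ S (δ * T) := by
    calc min c 1 * Real.exp (-(τM * δ * T)) ≤ (∑ j, a j) * Real.exp (-(τM * δ * T)) := by
          gcongr; exact (min_le_left _ _).trans hac
      _ = ∑ j, a j * Real.exp (-(τM * δ * T)) := Finset.sum_mul _ _ _
      _ ≤ _ := by
          apply Finset.sum_le_sum
          intro j _
          have := mul_le_mul_of_nonneg_right (hM j) hδT.le
          apply mul_le_mul_of_nonneg_left _ (ha j)
          apply Real.exp_le_exp.2
          linarith
  by_cases hc : S (δ * T) ≤ k * Real.exp (-(τm * δ * T))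
  · exact ⟨δ * T, le_rfl, by nlinarith, hc, hstart⟩
  · have hcont : ContinuousOn S (Set.Icc (δ * T) ((1 + δ) * T)) := by
      apply Continuous.continuousOn
      fun_prop
    obtain ⟨y, hy, hSy⟩ := intermediate_value_Icc' (by nlinarith : δ * T ≤ (1 + δ) * T) hcont
      ⟨hend, (not_le.1 hc).le⟩
    refine ⟨y, hy.1, hy.2, hSy.le, ?_⟩
    change _ ≤ S y
    rw [hSy]
    have hk' : (1:ℝ) ≤ k := by exact_mod_cast hk
    have : min c 1 ≤ (k:ℝ) := (min_le_right _ _).trans hk'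
    apply mul_le_mul this _ (Real.exp_pos _).le (by positivity)
    apply Real.exp_le_exp.2
    have h1 : τm ≤ τM := (hm ⟨0, hk⟩).trans (hM ⟨0, hk⟩)
    have := mul_le_mul_of_nonneg_right h1 hδT.le
    linarith

lemma select {k : ℕ} (hk : 1 ≤ k) (τ a : Fin k → ℝ) (g σ T : ℝ)
    (hg : ∀ i j, i ≠ j → g ≤ |τ i - τ j|) (hg0 : 0 < g) (hσ : 0 < σ) (hT : 0 < T)
    (ha0 : ∃ j, 0 < a j)
    (t : Fin (k * k + 1) → ℝ) (ht : ∀ m m', m ≠ m' → σ * T ≤ |t m - t m'|) :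
    ∃ m i, ∀ j, j ≠ i → a j * Real.exp (-τ j * t m) ≤
      Real.exp (-(σ * g / 2 * T)) * (a i * Real.exp (-τ i * t m)) := by
  by_contra hcon
  push Not at hcon
  have : Nonempty (Fin k) := ⟨⟨0, hk⟩⟩
  have hmax : ∀ m, ∃ i, ∀ j, a j * Real.exp (-τ j * t m) ≤ a i * Real.exp (-τ i * t m) :=
    fun m => Finite.exists_max (fun j => a j * Real.exp (-τ j * t m))
  choose I hI using hmax
  have h2 := fun m => hcon m (I m)
  choose J hJ hJ2 using h2
  obtain ⟨m, m', hne, heq⟩ := Fintype.exists_ne_map_eq_of_card_lt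
    (fun m => (I m, J m)) (by simp)
  simp only [Prod.mk.injEq] at heq
  obtain ⟨hi, hj⟩ := heq
  have key : ∀ m, 0 < a (I m) ∧ 0 < a (J m) ∧
      0 ≤ Real.log (a (I m)) - Real.log (a (J m)) - (τ (I m) - τ (J m)) * t m ∧
      Real.log (a (I m)) - Real.log (a (J m)) - (τ (I m) - τ (J m)) * t m ≤ σ * g / 2 * T := by
    intro m
    obtain ⟨j0, hj0⟩ := ha0
    have p1 : 0 < a (I m) * Real.exp (-τ (I m) * t m) :=
      lt_of_lt_of_le (by positivity) (hI m j0)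
    have q1 : 0 < a (I m) := pos_of_mul_pos_left p1 (Real.exp_pos _).le
    have p2 : 0 < a (J m) * Real.exp (-τ (J m) * t m) :=
      lt_trans (by positivity) (hJ2 m)
    have q2 : 0 < a (J m) := pos_of_mul_pos_left p2 (Real.exp_pos _).le
    refine ⟨q1, q2, ?_, ?_⟩
    · have := Real.log_le_log p2 (hI m (J m))
      rw [Real.log_mul q1.ne' (Real.exp_pos _).ne', Real.log_mul q2.ne' (Real.exp_pos _).ne',
        Real.log_exp, Real.log_exp] at this
      linarith
    · have := Real.log_le_log (by positivity) (hJ2 m).le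
      rw [Real.log_mul (Real.exp_pos _).ne' p1.ne', Real.log_mul q1.ne' (Real.exp_pos _).ne',
        Real.log_mul q2.ne' (Real.exp_pos _).ne',
        Real.log_exp, Real.log_exp, Real.log_exp] at this
      linarith
  obtain ⟨-, -, k1, k2⟩ := key m
  obtain ⟨-, -, k3, k4⟩ := key m'
  rw [← hi, ← hj] at k3 k4
  have h5 : |(τ (I m) - τ (J m)) * (t m - t m')| ≤ σ * g / 2 * T := by
    rw [abs_le]; constructor <;> linarith
  rw [abs_mul] at h5
  have h6 : g * (σ * T) ≤ |τ (I m) - τ (J m)| * |t m - t m'| :=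
    mul_le_mul (hg _ _ (hJ m).symm) (ht m m' hne) (by positivity) (abs_nonneg _)
  have : 0 < g * (σ * T) := by positivity
  linarith

end NestAux

namespace NestAux

lemma ev_exp (C b d : ℝ) (hb : 0 < b) (hd : 0 < d) :
    ∀ᶠ T : ℝ in Filter.atTop, C * Real.exp (-(b * T)) < d := by
  have h1 : Filter.Tendsto (fun T : ℝ => b * T) Filter.atTop Filter.atTop :=
    Filter.tendsto_id.const_mul_atTop hb
  have h2 := (Real.tendsto_exp_neg_atTop_nhds_zero.comp h1).const_mul C
  rw [mul_zero] at h2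
  exact h2.eventually_lt_const hd

lemma final {k : ℕ} (hk : 1 ≤ k) (x gg : Fin k → ℝ) (v p ρ μ τm τM δ ε c T : ℝ) (i : Fin k)
    (hT : 0 < T) (hρμ : ρ ≤ μ / 4) (hρ0 : 0 < ρ) (hρδ : ρ ≤ δ) (hρτ : ρ ≤ τm * δ / 2)
    (hδε : (2 * τM + 5) * δ ≤ ε) (hτM : 0 < τM) (hδ : 0 < δ) (hp : 0 ≤ p)
    (hgg : ∀ j, 0 ≤ gg j)
    (hx1 : ∀ j, gg j * Real.exp (-(ρ * T)) ≤ |x j|)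
    (hx2 : ∀ j, |x j| ≤ gg j * Real.exp (ρ * T))
    (hdom : ∀ j, j ≠ i → gg j ≤ Real.exp (-(μ * T)) * gg i)
    (hv : |v| ≤ p * Real.exp ((3 * δ - ε) * T))
    (hS1 : ∑ j, gg j ≤ k * Real.exp (-(τm * δ * T)))
    (hS2 : c * Real.exp (-(2 * τM * δ * T)) ≤ ∑ j, gg j)
    (h1 : k * Real.exp (-(τm * δ / 2 * T)) < 1 / 2)
    (h2 : p * Real.exp (-(δ * T)) < 1 / 2)
    (h3 : k * Real.exp (-(2 * ρ * T)) < 1 / 2)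
    (h4 : p * Real.exp (-(δ * T)) < c / (2 * k)) :
    0 < |∑ j, x j + v| ∧ |∑ j, x j + v| < 1 := by
  have hkR : (0:ℝ) < k := by exact_mod_cast hk
  have hprod : 0 < τM * δ := by positivity
  constructor
  · have hμ : 0 < μ := by linarith
    have hle : ∀ j, gg j ≤ gg i := by
      intro j
      by_cases hj : j = i
      · rw [hj]
      · refine (hdom j hj).trans ?_
        have : Real.exp (-(μ * T)) ≤ 1 := Real.exp_le_one_iff.2 (by nlinarith)
        exact mul_le_of_le_one_left (hgg i) this
    have hSi : ∑ j, gg j ≤ k * gg i := by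
      calc ∑ j, gg j ≤ ∑ _j : Fin k, gg i := Finset.sum_le_sum (fun j _ => hle j)
        _ = _ := by simp
    have hrest : ∑ j ∈ Finset.univ.erase i, |x j| ≤ gg i * Real.exp (-(ρ * T)) / 2 := by
      calc ∑ j ∈ Finset.univ.erase i, |x j|
          ≤ ∑ j ∈ Finset.univ.erase i, gg i * Real.exp (-(3 * ρ * T)) := by
            apply Finset.sum_le_sum
            intro j hj
            have hj' : j ≠ i := Finset.ne_of_mem_erase hj
            calc |x j| ≤ gg j * Real.exp (ρ * T) := hx2 j
              _ ≤ (Real.exp (-(μ * T)) * gg i) * Real.exp (ρ * T) := by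
                  gcongr; exact hdom j hj'
              _ = gg i * Real.exp (-(μ * T) + ρ * T) := by rw [Real.exp_add]; ring
              _ ≤ _ := by
                  apply mul_le_mul_of_nonneg_left _ (hgg i)
                  apply Real.exp_le_exp.2
                  nlinarith
        _ ≤ ∑ j : Fin k, gg i * Real.exp (-(3 * ρ * T)) := by
            apply Finset.sum_le_sum_of_subset_of_nonneg (Finset.erase_subset _ _)
            intro j _ _
            exact mul_nonneg (hgg i) (Real.exp_pos _).le
        _ = gg i * Real.exp (-(ρ * T)) * (k * Real.exp (-(2 * ρ * T))) := by
            have : Real.exp (-(3 * ρ * T)) = Real.exp (-(ρ * T)) * Real.exp (-(2 * ρ * T)) := by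
              rw [← Real.exp_add]; congr 1; ring
            rw [this]; simp; ring
        _ ≤ gg i * Real.exp (-(ρ * T)) * (1 / 2) := by
            apply mul_le_mul_of_nonneg_left h3.le
            exact mul_nonneg (hgg i) (Real.exp_pos _).le
        _ = _ := by ring
    have hvlt : |v| < gg i * Real.exp (-(ρ * T)) / 2 := by
      have hgi : c / k * Real.exp (-(2 * τM * δ * T)) ≤ gg i := by
        have := hS2.trans hSi
        rw [div_mul_eq_mul_div, div_le_iff₀ hkR]; linarith
      calc |v| ≤ p * Real.exp ((3 * δ - ε) * T) := hv
        _ ≤ p * Real.exp (-(δ * T) + (-(2 * τM * δ * T) + -(ρ * T))) := by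
            apply mul_le_mul_of_nonneg_left _ hp
            apply Real.exp_le_exp.2
            have : (3 * δ - ε) * T ≤ (-δ - 2 * τM * δ - ρ) * T := by
              apply mul_le_mul_of_nonneg_right _ hT.le
              linarith
            linarith
        _ = (p * Real.exp (-(δ * T))) * Real.exp (-(2 * τM * δ * T)) * Real.exp (-(ρ * T)) := by
            rw [Real.exp_add, Real.exp_add]; ring
        _ < (c / (2 * k)) * Real.exp (-(2 * τM * δ * T)) * Real.exp (-(ρ * T)) := by
            gcongr
        _ = (c / k * Real.exp (-(2 * τM * δ * T))) * Real.exp (-(ρ * T)) / 2 := by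
            field_simp
        _ ≤ _ := by gcongr
    have hsplit : ∑ j, x j = x i + ∑ j ∈ Finset.univ.erase i, x j :=
      (Finset.add_sum_erase _ _ (Finset.mem_univ i)).symm
    have hr := (Finset.abs_sum_le_sum_abs x (Finset.univ.erase i)).trans hrest
    have hi := hx1 i
    apply abs_pos.2
    intro h0
    have : x i = -(∑ j ∈ Finset.univ.erase i, x j) - v := by linarith
    have h6 : |x i| ≤ |∑ j ∈ Finset.univ.erase i, x j| + |v| := by
      rw [this]
      refine (abs_sub _ _).trans ?_
      rw [abs_neg]
    linarith
  · have ha : |∑ j, x j| < 1 / 2 := by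
      calc |∑ j, x j| ≤ ∑ j, |x j| := Finset.abs_sum_le_sum_abs _ _
        _ ≤ ∑ j, gg j * Real.exp (ρ * T) := Finset.sum_le_sum (fun j _ => hx2 j)
        _ = (∑ j, gg j) * Real.exp (ρ * T) := (Finset.sum_mul _ _ _).symm
        _ ≤ k * Real.exp (-(τm * δ * T)) * Real.exp (ρ * T) := by gcongr
        _ = k * Real.exp (-(τm * δ * T) + ρ * T) := by rw [Real.exp_add]; ring
        _ ≤ k * Real.exp (-(τm * δ / 2 * T)) := by
            apply mul_le_mul_of_nonneg_left _ hkR.le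
            apply Real.exp_le_exp.2
            have := mul_le_mul_of_nonneg_right hρτ hT.le
            linarith
        _ < _ := h1
    have hb : |v| < 1 / 2 := by
      refine lt_of_le_of_lt (hv.trans ?_) h2
      apply mul_le_mul_of_nonneg_left _ hp
      apply Real.exp_le_exp.2
      have : (3 * δ - ε) * T ≤ (-δ) * T := by
        apply mul_le_mul_of_nonneg_right _ hT.le
        linarith
      linarith
    have := abs_add_le (∑ j, x j) v
    linarith

end NestAux


set_option maxHeartbeats 1000000 in
/-- Under hypotheses (H): for every ε > 0 and all sufficiently large Q, the only integer
point of the form λ_1e_1+…+λ_ke_k+u with |λ_j| ≤ Q^{τ_j} and u ⟂ Span(e), ‖u‖ ≤ Q^{-1-ε},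
is the zero vector. -/
theorem stmt5
    (k p : ℕ) (hk : 1 ≤ k) (hkp : k ≤ p - 1)
    (e : Fin k → EuclideanSpace ℝ (Fin p))
    (τs ωs φs : Fin k → ℝ)
    (hτpos : ∀ j, 0 < τs j) (hτinj : Function.Injective τs)
    (hosc : {n : ℕ | ∀ j : Fin k, ∀ m : ℤ,
      (n : ℝ) * ωs j + φs j ≠ Real.pi / 2 + m * Real.pi}.Infinite)
    (Q : ℕ → ℕ) (hQmono : StrictMono Q) (hQpos : ∀ n, 0 < Q n)
    (hQgrowth :
      (∃ M : ℝ, 0 < M ∧ ∀ n : ℕ, 1 ≤ n →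
        Real.log (Q (n + 1)) ≤ (1 + M / n) * Real.log (Q n)) ∨
      ((∀ j, ωs j = 0) ∧
        Filter.Tendsto (fun n => Real.log (Q (n + 1)) / Real.log (Q n))
          Filter.atTop (nhds 1)))
    (l : ℕ → Fin p → ℤ)
    (εs ηs : Fin k → ℕ → ℝ) (θs : ℕ → ℝ)
    (hεs : ∀ j, Filter.Tendsto (εs j) Filter.atTop (nhds 0))
    (hηs : ∀ j, Filter.Tendsto (ηs j) Filter.atTop (nhds 0))
    (hθs : Filter.Tendsto θs Filter.atTop (nhds 0))
    (hL : ∀ n : ℕ, 1 ≤ n → ∀ j,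
      |∑ i, (l n i : ℝ) * e j i| =
        (Q n : ℝ) ^ (-τs j + εs j n) * |Real.cos ((n : ℝ) * ωs j + φs j) + ηs j n|)
    (hl : ∀ n : ℕ, 1 ≤ n → ∀ i, |(l n i : ℝ)| ≤ (Q n : ℝ) ^ (1 + θs n))
    :
    ∀ ε : ℝ, 0 < ε → ∃ Q0 : ℝ, ∀ Qr : ℝ, Q0 ≤ Qr →
      ∀ (lam : Fin k → ℝ) (u : EuclideanSpace ℝ (Fin p)),
        (∀ j, |lam j| ≤ Qr ^ τs j) →
        u ∈ (Submodule.span ℝ (Set.range e))ᗮ →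
        ‖u‖ ≤ Qr ^ (-1 - ε) →
        (∀ i, ∃ m : ℤ, (∑ j, lam j • e j + u) i = (m : ℝ)) →
        ∑ j, lam j • e j + u = 0 := by
  intro ε hε
  -- constants
  have hkR : (0:ℝ) < k := by exact_mod_cast hk
  obtain ⟨τm, hτm0, hτm⟩ := NestAux.exists_pos_lb τs hτpos
  obtain ⟨τM, hτM0, hτM⟩ := NestAux.exists_ub τs
  obtain ⟨g, hg0, hg'⟩ := NestAux.exists_pos_lb
    (fun q : {q : Fin k × Fin k // q.1 ≠ q.2} => |τs q.1.1 - τs q.1.2|)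
    (fun q => abs_pos.2 (sub_ne_zero.2 (fun h => q.2 (hτinj h))))
  have hg : ∀ i j, i ≠ j → g ≤ |τs i - τs j| := fun i j hij => hg' ⟨(i, j), hij⟩
  obtain ⟨n0, hn0⟩ := hosc.nonempty
  obtain ⟨c, hc0, N, hN⟩ := NestAux.syndetic ωs φs n0 (fun j h => by
    rw [Real.cos_eq_zero_iff] at h
    obtain ⟨m, hm⟩ := h
    exact hn0 j m (by rw [hm]; ring))
  have hratio : Filter.Tendsto (fun n => Real.log (Q (n + 1)) / Real.log (Q n))
      Filter.atTop (nhds 1) := by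
    rcases hQgrowth with ⟨M, -, h⟩ | ⟨-, h⟩
    · exact NestAux.ratio_tendsto Q hQmono hQpos M h
    · exact h
  obtain ⟨δ, hδ0, hδ1, hδε⟩ : ∃ δ : ℝ, 0 < δ ∧ δ ≤ 1 ∧ (2 * τM + 5) * δ ≤ ε := by
    refine ⟨min 1 (ε / (2 * τM + 5)), by positivity, min_le_left _ _, ?_⟩
    have h5 : 0 < 2 * τM + 5 := by positivity
    calc (2 * τM + 5) * min 1 (ε / (2 * τM + 5)) ≤ (2 * τM + 5) * (ε / (2 * τM + 5)) := by
          gcongr; exact min_le_right _ _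
      _ = ε := by field_simp
  obtain ⟨σ, hσ0, hσ⟩ : ∃ σ : ℝ, 0 < σ ∧ (2 * (k * k : ℝ) + 1) * σ = δ :=
    ⟨δ / (2 * (k * k : ℝ) + 1), by positivity, by field_simp⟩
  set μ := σ * g / 2 with hμ
  have hμ0 : 0 < μ := by positivity
  clear_value μ
  obtain ⟨ρ, hρ0, hρμ, hρδ, hρτ⟩ : ∃ ρ : ℝ, 0 < ρ ∧ ρ ≤ μ / 4 ∧ ρ ≤ δ ∧ ρ ≤ τm * δ / 2 :=
    ⟨min (μ / 4) (min δ (τm * δ / 2)), by positivity, min_le_left _ _,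
      (min_le_right _ _).trans (min_le_left _ _), (min_le_right _ _).trans (min_le_right _ _)⟩
  set E := 1 + ∑ j, ‖e j‖ with hE
  clear_value E
  have hE0 : 0 < E := by
    rw [hE]
    have : 0 ≤ ∑ j, ‖e j‖ := Finset.sum_nonneg (fun j _ => norm_nonneg _)
    linarith
  set c1 := min (1 / (2 * E)) 1 with hc1
  have hc10 : 0 < c1 := by positivity
  clear_value c1
  -- large n
  have hevn : ∀ᶠ n : ℕ in Filter.atTop, 1 ≤ n ∧ |θs n| < δ / 3 ∧
      ∀ j, |εs j n| < ρ / 6 ∧ |ηs j n| < min (c / 2) 1 := by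
    have tz : ∀ (s : ℕ → ℝ), Filter.Tendsto s Filter.atTop (nhds 0) → ∀ r : ℝ, 0 < r →
        ∀ᶠ n in Filter.atTop, |s n| < r := by
      intro s hs r hr
      have := hs.abs
      rw [abs_zero] at this
      exact this.eventually_lt_const hr
    refine (Filter.eventually_ge_atTop 1).and ((tz _ hθs _ (by positivity)).and ?_)
    rw [Filter.eventually_all]
    intro j
    exact (tz _ (hεs j) _ (by positivity)).and (tz _ (hηs j) _ (by positivity))
  obtain ⟨N0, hN0⟩ := Filter.eventually_atTop.1 hevn
  obtain ⟨t0, ht0⟩ := NestAux.choose_n Q hQmono hQpos hratio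
    (fun n => ∀ j, c ≤ |Real.cos ((n : ℝ) * ωs j + φs j)|) N hN N0 (σ / 3) (by positivity)
  -- large T
  have hevT : ∀ᶠ T : ℝ in Filter.atTop,
      (0 < T ∧ t0 / δ ≤ T ∧ 2 * Real.exp (-(ρ / 2 * T)) < 1 ∧
        1 * Real.exp (-(ρ / 2 * T)) < c / 2 ∧ 1 * Real.exp (-((1 + ε) * T)) < 1 / 2) ∧
      k * Real.exp (-(τm * δ / 2 * T)) < 1 / 2 ∧
      p * Real.exp (-(δ * T)) < 1 / 2 ∧
      k * Real.exp (-(2 * ρ * T)) < 1 / 2 ∧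
      p * Real.exp (-(δ * T)) < c1 / (2 * k) := by
    refine Filter.Eventually.and ?_ ?_
    · exact (Filter.eventually_gt_atTop 0).and ((Filter.eventually_ge_atTop _).and
        ((NestAux.ev_exp _ _ _ (by positivity) (by positivity)).and
        ((NestAux.ev_exp _ _ _ (by positivity) (by positivity)).and
        (NestAux.ev_exp _ _ _ (by positivity) (by positivity)))))
    · exact (NestAux.ev_exp _ _ _ (by positivity) (by positivity)).and
        ((NestAux.ev_exp _ _ _ (by positivity) (by positivity)).and
        ((NestAux.ev_exp _ _ _ (by positivity) (by positivity)).and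
        (NestAux.ev_exp _ _ _ (by positivity) (by positivity))))
  have hevQ := (Real.tendsto_log_atTop.eventually hevT).and (Filter.eventually_gt_atTop 0)
  obtain ⟨Q0, hQ0⟩ := Filter.eventually_atTop.1 hevQ
  refine ⟨Q0, fun Qr hQr lam u hlam _ hu hint => ?_⟩
  obtain ⟨⟨⟨hT, hTt0, hT2, hTc, hTu⟩, hc1', hc2', hc3', hc4'⟩, hQrpos⟩ := hQ0 Qr hQr
  set T := Real.log Qr with hTdef
  have hrpow : ∀ s : ℝ, Qr ^ s = Real.exp (s * T) := fun s => by
    rw [Real.rpow_def_of_pos hQrpos, mul_comm]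
  clear_value T
  rw [hrpow] at hu
  simp only [hrpow] at hlam
  by_contra hP
  choose m hm using hint
  set P := ∑ j, lam j • e j + u with hPdef
  clear_value P
  -- lower bound of the sum of |lam|
  have hPnorm : 1 ≤ ‖P‖ := by
    have hex : ∃ i, m i ≠ 0 := by
      by_contra hall
      push Not at hall
      apply hP
      ext i
      rw [hm i, hall i]; simp
    obtain ⟨i, hi⟩ := hex
    have h1 : (1:ℝ) ≤ |(m i : ℝ)| := by exact_mod_cast Int.one_le_abs hi
    have h2 := PiLp.norm_apply_le P i
    rw [hm i, Real.norm_eq_abs] at h2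
    linarith
  have hlamsum : 1 / (2 * E) ≤ ∑ j, |lam j| := by
    have hu2 : ‖u‖ < 1 / 2 := by
      refine lt_of_le_of_lt hu ?_
      rw [one_mul] at hTu
      have hr : (-1 - ε) * T = -((1 + ε) * T) := by ring
      rw [hr]
      exact hTu
    have h1 : ‖∑ j, lam j • e j‖ ≤ ∑ j, |lam j| * E := by
      refine (norm_sum_le _ _).trans (Finset.sum_le_sum fun j _ => ?_)
      rw [norm_smul, Real.norm_eq_abs]
      apply mul_le_mul_of_nonneg_left _ (abs_nonneg _)
      have := Finset.single_le_sum (f := fun j => ‖e j‖) (fun j _ => norm_nonneg _)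
        (Finset.mem_univ j)
      linarith
    rw [← Finset.sum_mul] at h1
    have h2 := norm_add_le (∑ j, lam j • e j) u
    rw [← hPdef] at h2
    have h2E : 0 < 2 * E := by linarith
    rw [div_le_iff₀ h2E]
    have h3 : (∑ j, |lam j|) * (2 * E) = 2 * ((∑ j, |lam j|) * E) := by ring
    rw [h3]
    linarith
  obtain ⟨y, hy1, hy2, hS1, hS2⟩ := NestAux.find_y τs (fun j => |lam j|) τm τM δ
    (1 / (2 * E)) T hτm hτM hδ0 hT hk (fun j => abs_nonneg _) hlamsum hlam
  rw [← hc1] at hS2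
  -- choose points
  have hδT : 0 < δ * T := by positivity
  have hσT : 0 < σ * T := by positivity
  have hpts : ∀ q : Fin (k * k + 1), ∃ n, N0 ≤ n ∧
      (∀ j, c ≤ |Real.cos ((n : ℝ) * ωs j + φs j)|) ∧
      y + 2 * q * (σ * T) ≤ Real.log (Q n) ∧ Real.log (Q n) ≤ y + (2 * q + 1) * (σ * T) := by
    intro q
    have hq : (q : ℝ) ≤ k * k := by
      have : (q : ℕ) ≤ k * k := by omega
      exact_mod_cast this
    have hq0 : (0 : ℝ) ≤ q := by positivity
    have hqσ : 2 * q * (σ * T) ≤ δ * T := by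
      rw [← hσ]
      have := mul_le_mul_of_nonneg_right hq hσT.le
      linarith
    have hle : t0 ≤ y + 2 * q * (σ * T) := by
      rw [div_le_iff₀ hδ0] at hTt0
      have : 0 ≤ 2 * q * (σ * T) := by positivity
      linarith
    obtain ⟨n, h1, h2, h3, h4⟩ := ht0 _ hle
    refine ⟨n, h1, h2, h3, h4.trans ?_⟩
    have h5 : y + 2 * q * (σ * T) ≤ 3 * T := by nlinarith
    have := mul_le_mul_of_nonneg_left h5 (show 0 ≤ σ / 3 by positivity)
    linarith
  choose nn hnN hncos hnl hnu using hpts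
  have hsep : ∀ q q' : Fin (k * k + 1), q ≠ q' →
      σ * T ≤ |Real.log (Q (nn q)) - Real.log (Q (nn q'))| := by
    have hlt : ∀ q q' : Fin (k * k + 1), q < q' →
        σ * T ≤ |Real.log (Q (nn q)) - Real.log (Q (nn q'))| := by
      intro q q' hqq
      have h1 : (q : ℝ) + 1 ≤ q' := by exact_mod_cast hqq
      have h2 := mul_le_mul_of_nonneg_right h1 hσT.le
      have h3 := hnu q
      have h4 := hnl q'
      rw [abs_sub_comm]
      refine le_trans ?_ (le_abs_self _)
      linarith
    intro q q' hne
    rcases lt_or_gt_of_ne hne with h | h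
    · exact hlt q q' h
    · rw [abs_sub_comm]; exact hlt q' q h
  have ha0 : ∃ j, 0 < |lam j| := by
    by_contra hall
    push Not at hall
    have h1 : ∑ j, |lam j| ≤ 0 := Finset.sum_nonpos (fun j _ => hall j)
    have : 0 < 1 / (2 * E) := one_div_pos.2 (by linarith)
    linarith
  obtain ⟨q, i, hdom⟩ := NestAux.select hk τs (fun j => |lam j|) g σ T hg hg0 hσ0 hT
    ha0 (fun q => Real.log (Q (nn q))) hsep
  rw [← hμ] at hdom
  set n := nn q with hn
  obtain ⟨hn1, hθn, hεη⟩ := hN0 n (hnN q)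
  have hcosn := hncos q
  rw [← hn] at hcosn
  have hQn : (0:ℝ) < Q n := by exact_mod_cast hQpos n
  set t := Real.log (Q n) with ht
  have hqk : (q : ℝ) ≤ k * k := by
    have : (q : ℕ) ≤ k * k := by omega
    exact_mod_cast this
  have hq0 : (0 : ℝ) ≤ q := by positivity
  have hty : y ≤ t := by
    have h1 := hnl q
    have : 0 ≤ 2 * q * (σ * T) := by positivity
    linarith
  have hty2 : t ≤ y + δ * T := by
    have h1 := hnu q
    rw [← hσ]
    have := mul_le_mul_of_nonneg_right hqk hσT.le
    linarith
  have ht0' : 0 < t := by linarith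
  have ht3 : t ≤ 3 * T := by nlinarith
  have hrpowQ : ∀ s : ℝ, (Q n : ℝ) ^ s = Real.exp (s * t) := fun s => by
    rw [Real.rpow_def_of_pos hQn, mul_comm]
  clear_value t
  have hLn := hL n hn1
  have hln := hl n hn1
  simp only [hrpowQ] at hLn hln
  set x : Fin k → ℝ := fun j => lam j * ∑ i, (l n i : ℝ) * e j i with hx
  set v : ℝ := ∑ i, (l n i : ℝ) * u i with hv
  set gg : Fin k → ℝ := fun j => |lam j| * Real.exp (-τs j * t) with hgg
  have hxabs : ∀ j, |x j| = gg j * (Real.exp (εs j n * t) *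
      |Real.cos ((n : ℝ) * ωs j + φs j) + ηs j n|) := by
    intro j
    simp only [hx, hgg]
    rw [abs_mul, hLn j, add_mul, Real.exp_add]
    ring
  have hgg0 : ∀ j, 0 ≤ gg j := fun j => by positivity
  have hεt : ∀ j, |εs j n * t| ≤ ρ / 2 * T := by
    intro j
    rw [abs_mul, abs_of_pos ht0']
    calc |εs j n| * t ≤ (ρ / 6) * (3 * T) := by
          apply mul_le_mul (hεη j).1.le ht3 ht0'.le (by positivity)
      _ = _ := by ring
  have hx1 : ∀ j, gg j * Real.exp (-(ρ * T)) ≤ |x j| := by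
    intro j
    rw [hxabs j]
    apply mul_le_mul_of_nonneg_left _ (hgg0 j)
    have h1 : Real.exp (-(ρ * T)) = Real.exp (-(ρ / 2 * T)) * Real.exp (-(ρ / 2 * T)) := by
      rw [← Real.exp_add]; congr 1; ring
    rw [h1]
    have h2 : c / 2 ≤ |Real.cos ((n : ℝ) * ωs j + φs j) + ηs j n| := by
      have h3 := hcosn j
      have h4 := (hεη j).2.trans_le (min_le_left _ _)
      have h5 := abs_sub_abs_le_abs_sub (Real.cos ((n : ℝ) * ωs j + φs j)) (-ηs j n)
      rw [sub_neg_eq_add, abs_neg] at h5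
      linarith
    apply mul_le_mul _ _ (Real.exp_pos _).le (Real.exp_pos _).le
    · apply Real.exp_le_exp.2
      exact (abs_le.1 (hεt j)).1
    · linarith
  have hx2 : ∀ j, |x j| ≤ gg j * Real.exp (ρ * T) := by
    intro j
    rw [hxabs j]
    apply mul_le_mul_of_nonneg_left _ (hgg0 j)
    have h1 : Real.exp (ρ * T) = Real.exp (ρ / 2 * T) * Real.exp (ρ / 2 * T) := by
      rw [← Real.exp_add]; congr 1; ring
    rw [h1]
    have h2 : |Real.cos ((n : ℝ) * ωs j + φs j) + ηs j n| ≤ 2 := by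
      have h4 := (hεη j).2.trans_le (min_le_right _ _)
      have h5 := abs_add_le (Real.cos ((n : ℝ) * ωs j + φs j)) (ηs j n)
      have h6 := Real.abs_cos_le_one ((n : ℝ) * ωs j + φs j)
      linarith
    have h3 : 2 ≤ Real.exp (ρ / 2 * T) := by
      rw [Real.exp_neg, ← div_eq_mul_inv, div_lt_one (Real.exp_pos _)] at hT2
      exact hT2.le
    apply mul_le_mul _ (h2.trans h3) (abs_nonneg _) (Real.exp_pos _).le
    apply Real.exp_le_exp.2
    exact (abs_le.1 (hεt j)).2
  have hvb : |v| ≤ p * Real.exp ((3 * δ - ε) * T) := by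
    have : ∀ i ∈ (Finset.univ : Finset (Fin p)),
        |(l n i : ℝ) * u i| ≤ Real.exp ((3 * δ - ε) * T) := by
      intro i _
      rw [abs_mul]
      have h2 := PiLp.norm_apply_le u i
      rw [Real.norm_eq_abs] at h2
      calc |(l n i : ℝ)| * |u i| ≤ Real.exp ((1 + θs n) * t) * Real.exp ((-1 - ε) * T) :=
            mul_le_mul (hln i) (h2.trans hu) (abs_nonneg _) (Real.exp_pos _).le
        _ = Real.exp ((1 + θs n) * t + (-1 - ε) * T) := (Real.exp_add _ _).symm
        _ ≤ _ := by
            apply Real.exp_le_exp.2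
            have h3 : θs n * t ≤ δ / 3 * (3 * T) :=
              mul_le_mul ((le_abs_self _).trans hθn.le) ht3 ht0'.le (by positivity)
            linarith
    calc |v| ≤ ∑ i, |(l n i : ℝ) * u i| := Finset.abs_sum_le_sum_abs _ _
      _ ≤ ∑ i : Fin p, Real.exp ((3 * δ - ε) * T) := Finset.sum_le_sum this
      _ = _ := by simp
  have hSS1 : ∑ j, gg j ≤ k * Real.exp (-(τm * δ * T)) := by
    refine le_trans (Finset.sum_le_sum fun j _ => ?_) hS1
    apply mul_le_mul_of_nonneg_left _ (abs_nonneg _)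
    apply Real.exp_le_exp.2
    have := mul_le_mul_of_nonneg_left hty (hτpos j).le
    linarith
  have hSS2 : c1 * Real.exp (-(2 * τM * δ * T)) ≤ ∑ j, gg j := by
    calc c1 * Real.exp (-(2 * τM * δ * T))
        = (c1 * Real.exp (-(τM * δ * T))) * Real.exp (-(τM * δ * T)) := by
          rw [mul_assoc c1, ← Real.exp_add]; congr 2; ring
      _ ≤ (∑ j, |lam j| * Real.exp (-τs j * y)) * Real.exp (-(τM * δ * T)) := by
          gcongr
      _ = ∑ j, |lam j| * Real.exp (-τs j * y) * Real.exp (-(τM * δ * T)) :=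
          Finset.sum_mul _ _ _
      _ ≤ _ := by
          apply Finset.sum_le_sum
          intro j _
          rw [mul_assoc, ← Real.exp_add]
          apply mul_le_mul_of_nonneg_left _ (abs_nonneg _)
          apply Real.exp_le_exp.2
          have h1 := mul_le_mul_of_nonneg_left hty2 (hτpos j).le
          have h2 := mul_le_mul_of_nonneg_right (hτM j) hδT.le
          linarith
  obtain ⟨hZ1, hZ2⟩ := NestAux.final hk x gg v p ρ μ τm τM δ ε c1 T i hT hρμ hρ0 hρδ hρτ hδε
    hτM0 hδ0 (by positivity) hgg0 hx1 hx2 hdom hvb hSS1 hSS2 hc1' hc2' hc3' hc4'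
  have hZ : ∑ j, x j + v = ((∑ i, l n i * m i : ℤ) : ℝ) := by
    push_cast
    simp only [← hm, hPdef, hx, hv]
    simp only [PiLp.add_apply, WithLp.ofLp_sum, Finset.sum_apply, PiLp.smul_apply, smul_eq_mul,
      mul_add, Finset.sum_add_distrib, Finset.mul_sum]
    rw [Finset.sum_comm]
    congr 1
    refine Finset.sum_congr rfl fun i _ => Finset.sum_congr rfl fun j _ => ?_
    ring
  rw [hZ] at hZ1 hZ2
  have hz1 : (0:ℤ) < |∑ i, l n i * m i| := by exact_mod_cast hZ1
  have hz2 : |∑ i, l n i * m i| < (1:ℤ) := by exact_mod_cast hZ2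
  omega
end

section
/- Let k, p ≥ 1 and C_1,…,C_p ∈ ℝ^k. Let τ_1,…,τ_k > 0 be pairwise distinct real numbers, let ω_1,…,ω_k, φ_1,…,φ_k be real numbers such that there exist infinitely many integers n with nω_j + φ_j ≢ π/2 (mod π) for every j ∈ {1,…,k}, and let (Q_n)_{n≥1} be an increasing sequence of positive integers with log Q_{n+1} ≤ (1 + M/n)·log Q_n for some constant M > 0 and all n (if all ω_j = 0 it suffices that (log Q_{n+1})/(log Q_n) → 1). For each n ≥ 1 let ℓ_{1,n},…,ℓ_{p,n} ∈ ℤ be such that max_{1≤i≤p}|ℓ_{i,n}| ≤ Q_n^{1+θ_n} with θ_n → 0, and such that for each j ∈ {1,…,k} the j-th coordinate of the vector ℓ_{1,n}C_1 + … + ℓ_{p,n}C_p has absolute value equal to Q_n^{−τ_j+ε_{j,n}} · |cos(nω_j+φ_j) + η_{j,n}| with ε_{j,n} → 0 and η_{j,n} → 0. Then the rank over ℚ of the family C_1,…,C_p, in ℝ^k viewed as a vector space over ℚ, is at least k + τ_1 + … + τ_k. -/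
theorem aux_synd (k : ℕ) (ω φ : Fin k → ℝ) (n0 : ℕ)
    (h0 : ∀ j, Real.cos ((n0 : ℝ) * ω j + φ j) ≠ 0) :
    ∃ c : ℝ, 0 < c ∧ ∃ H : ℕ, ∀ n : ℕ, ∃ m, n ≤ m ∧ m ≤ n + H ∧
      ∀ j, c ≤ |Real.cos ((m : ℝ) * ω j + φ j)| := by
  obtain ⟨c, hc, hc'⟩ : ∃ c : ℝ, 0 < c ∧ ∀ j, 2 * c ≤ |Real.cos ((n0 : ℝ) * ω j + φ j)| := by
    have : ∀ᶠ c : ℝ in nhdsWithin 0 (Set.Ioi 0), ∀ j, 2 * c ≤ |Real.cos ((n0 : ℝ) * ω j + φ j)| := by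
      rw [Filter.eventually_all]
      intro j
      have hp : 0 < |Real.cos ((n0 : ℝ) * ω j + φ j)| / 2 := by
        have := abs_pos.mpr (h0 j); linarith
      filter_upwards [mem_nhdsWithin_of_mem_nhds (Iio_mem_nhds hp)] with c hc
      simp only [Set.mem_Iio] at hc
      linarith
    obtain ⟨c, h1, h2⟩ := (this.and self_mem_nhdsWithin).exists
    exact ⟨c, h2, h1⟩
  let z : ℕ → Fin k → ℂ := fun n j => Complex.exp (((n : ℝ) * ω j : ℝ) * Complex.I)
  have hb : Bornology.IsBounded (Set.range z) := by
    refine (Metric.isBounded_closedBall (x := (0 : Fin k → ℂ)) (r := 1)).subset ?_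
    rintro _ ⟨n, rfl⟩
    rw [mem_closedBall_zero_iff, pi_norm_le_iff_of_nonneg zero_le_one]
    intro j
    simp only [z]
    rw [Complex.norm_exp_ofReal_mul_I]
  have htb : TotallyBounded (Set.range z) := hb.isCompact_closure.totallyBounded.subset subset_closure
  obtain ⟨t, hts, htf, hcov⟩ := Metric.finite_approx_of_totallyBounded htb c hc
  have : ∀ y ∈ t, ∃ h, z h = y := fun y hy => hts hy
  choose! g hg using this
  obtain ⟨B, hB⟩ := (htf.image g).bddAbove
  refine ⟨c, hc, n0 + B, fun n => ?_⟩
  have hm : z (n + B) ∈ ⋃ y ∈ t, Metric.ball y c := hcov ⟨_, rfl⟩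
  simp only [Set.mem_iUnion] at hm
  obtain ⟨y, hy, hd⟩ := hm
  have hgy : g y ≤ B := hB ⟨y, hy, rfl⟩
  refine ⟨n0 + (n + B - g y), by omega, by omega, fun j => ?_⟩
  rw [← hg y hy, mem_ball_iff_norm] at hd
  have hd' : ‖z (n + B) j - z (g y) j‖ < c := (norm_le_pi_norm _ j).trans_lt hd
  obtain ⟨d, hd2⟩ : ∃ d, n + B = g y + d := ⟨n + B - g y, by omega⟩
  rw [hd2, Nat.add_sub_cancel_left]
  rw [hd2] at hd'
  have e1 : z (g y + d) j - z (g y) j = z (g y) j * (Complex.exp (((d : ℝ) * ω j : ℝ) * Complex.I) - 1) := by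
    simp only [z]
    rw [mul_sub, ← Complex.exp_add]
    push_cast
    ring_nf
  have n1 : ‖z (g y) j‖ = 1 := Complex.norm_exp_ofReal_mul_I _
  rw [e1, norm_mul, n1, one_mul] at hd'
  have e2 : Complex.exp ((((n0 + d : ℕ) : ℝ) * ω j + φ j : ℝ) * Complex.I) -
      Complex.exp (((n0 : ℝ) * ω j + φ j : ℝ) * Complex.I) =
      Complex.exp (((n0 : ℝ) * ω j + φ j : ℝ) * Complex.I) *
        (Complex.exp (((d : ℝ) * ω j : ℝ) * Complex.I) - 1) := by
    rw [mul_sub, ← Complex.exp_add]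
    push_cast
    ring_nf
  have e3 : |Real.cos (((n0 + d : ℕ) : ℝ) * ω j + φ j) - Real.cos ((n0 : ℝ) * ω j + φ j)| < c := by
    refine lt_of_le_of_lt ?_ hd'
    have := Complex.abs_re_le_norm (Complex.exp ((((n0 + d : ℕ) : ℝ) * ω j + φ j : ℝ) * Complex.I) -
      Complex.exp (((n0 : ℝ) * ω j + φ j : ℝ) * Complex.I))
    rw [Complex.sub_re, Complex.exp_ofReal_mul_I_re, Complex.exp_ofReal_mul_I_re, e2, norm_mul,
      Complex.norm_exp_ofReal_mul_I, one_mul] at this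
    exact this
  have := hc' j
  have h4 := abs_sub_abs_le_abs_sub (Real.cos ((n0 : ℝ) * ω j + φ j)) (Real.cos (((n0 + d : ℕ) : ℝ) * ω j + φ j))
  rw [abs_sub_comm] at e3
  linarith

theorem aux_dom (k : ℕ) (hk : 1 ≤ k) (τ : Fin k → ℝ) (γ : ℝ)
    (hγ : ∀ i j, i ≠ j → γ ≤ |τ i - τ j|) (lam : Fin k → ℝ) (T1 D : ℝ) (hD : 0 < D) :
    ∃ T, T1 ≤ T ∧ T ≤ T1 + k * D ∧ ∃ j, ∀ m, |lam m| * Real.exp (-τ m * T) ≤ |lam j| * Real.exp (-τ j * T)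
      ∧ (m ≠ j → |lam m| * Real.exp (-τ m * T) ≤ Real.exp (-(γ * D / 2)) * (|lam j| * Real.exp (-τ j * T))) := by
  have : Nonempty (Fin k) := ⟨⟨0, hk⟩⟩
  have hmax : ∀ i : Fin (k + 1), ∃ j, ∀ m, |lam m| * Real.exp (-τ m * (T1 + i * D)) ≤
      |lam j| * Real.exp (-τ j * (T1 + i * D)) := fun i =>
    Finite.exists_max (fun m => |lam m| * Real.exp (-τ m * (T1 + i * D)))
  choose J hJ using hmax
  obtain ⟨a, b, hab, hJab⟩ : ∃ a b : Fin (k + 1), a < b ∧ J a = J b := by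
    obtain ⟨a, b, h1, h2⟩ := Fintype.exists_ne_map_eq_of_card_lt J (by simp)
    rcases lt_or_gt_of_ne h1 with h | h
    · exact ⟨a, b, h, h2⟩
    · exact ⟨b, a, h, h2.symm⟩
  set S := T1 + (a : ℝ) * D with hS
  set S' := T1 + (b : ℝ) * D with hS'
  have hab' : (a : ℝ) + 1 ≤ b := by
    have : (a : ℕ) + 1 ≤ b := hab
    exact_mod_cast this
  have hbk : (b : ℝ) ≤ k := by
    have : (b : ℕ) ≤ k := Nat.lt_succ_iff.mp b.2
    exact_mod_cast this
  have ha0 : (0 : ℝ) ≤ a := Nat.cast_nonneg _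
  have hSS : D ≤ S' - S := by rw [hS, hS']; nlinarith
  have hS1 : T1 ≤ S := by rw [hS]; nlinarith
  have hS2 : S' ≤ T1 + k * D := by rw [hS']; nlinarith
  refine ⟨(S + S') / 2, by linarith, by linarith, J a, fun m => ?_⟩
  have A := hJ a m
  have B := hJ b m
  rw [← hJab] at B
  rw [← hS] at A
  rw [← hS'] at B
  set j := J a
  have key : m ≠ j → |lam m| * Real.exp (-τ m * ((S + S') / 2)) ≤ Real.exp (-(γ * D / 2)) * (|lam j| * Real.exp (-τ j * ((S + S') / 2))) := by
    intro hmj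
    have hg := hγ m j hmj
    have hexp : ∀ x : ℝ, x ≤ -(γ * D / 2) →  Real.exp x * (|lam j| * Real.exp (-τ j * ((S + S') / 2))) ≤
       Real.exp (-(γ * D / 2)) * (|lam j| * Real.exp (-τ j * ((S + S') / 2))) := by
      intro x hx
      gcongr
    rcases le_total 0 (τ m - τ j) with h | h
    · rw [abs_of_nonneg h] at hg
      refine le_trans ?_ (hexp (-((τ m - τ j) * ((S' - S) / 2))) (by nlinarith))
      have := mul_le_mul_of_nonneg_right A (Real.exp_nonneg (-τ m * ((S' - S) / 2)))
      rw [mul_assoc, mul_assoc, ← Real.exp_add, ← Real.exp_add] at this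
      rw [mul_left_comm, ← Real.exp_add]
      convert this using 3 <;> ring
    · rw [abs_of_nonpos h] at hg
      refine le_trans ?_ (hexp (((τ m - τ j) * ((S' - S) / 2))) (by nlinarith))
      have := mul_le_mul_of_nonneg_right B (Real.exp_nonneg (τ m * ((S' - S) / 2)))
      rw [mul_assoc, mul_assoc, ← Real.exp_add, ← Real.exp_add] at this
      rw [mul_left_comm, ← Real.exp_add]
      convert this using 3 <;> ring
  refine ⟨?_, key⟩
  -- midpoint max: 
  have h1 : 0 ≤ |lam m| := abs_nonneg _
  have h2 : 0 ≤ |lam j| := abs_nonneg _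
  have e1 : ∀ i, (|lam i| * Real.exp (-τ i * ((S + S') / 2)))^2 = (|lam i| * Real.exp (-τ i * S)) * (|lam i| * Real.exp (-τ i * S')) := by
    intro i
    have : Real.exp (-τ i * ((S + S') / 2)) ^ 2 = Real.exp (-τ i * S) * Real.exp (-τ i * S') := by
      rw [← Real.exp_add, ← Real.exp_nat_mul]; congr 1; push_cast; ring
    rw [mul_pow, this]; ring
  refine (pow_le_pow_iff_left₀ (by positivity) (by positivity) two_ne_zero).mp ?_
  rw [e1, e1]
  gcongr

theorem aux_mink {ι κ : Type} [Fintype ι] [Fintype κ] (b : Module.Basis ι ℝ (κ → ℝ)) :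
    ∃ c : ℝ, 0 < c ∧ ∀ B : ι → ℝ, (∀ i, 0 < B i) → c < ∏ i, B i →
      ∃ P : κ → ℤ, P ≠ 0 ∧ ∀ i, |b.repr (fun s => (P s : ℝ)) i| ≤ B i := by
  classical
  have hcard : Fintype.card ι = Fintype.card κ := by
    rw [← Module.finrank_eq_card_basis b, Module.finrank_fintype_fun_eq_card]
  let e : ι ≃ κ := Fintype.equivOfCardEq hcard
  let b' := b.reindex e
  let T : (κ → ℝ) ≃ₗ[ℝ] (κ → ℝ) := b'.equivFun
  have hdet : LinearMap.det (T : (κ → ℝ) →ₗ[ℝ] (κ → ℝ)) ≠ 0 := (LinearEquiv.isUnit_det' T).ne_zero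
  set d := |LinearMap.det (T : (κ → ℝ) →ₗ[ℝ] (κ → ℝ))| with hd
  have hdp : 0 < d := abs_pos.mpr hdet
  refine ⟨d, hdp, fun B hB hprod => ?_⟩
  let box : Set (κ → ℝ) := Set.pi Set.univ (fun s => Set.Icc (-(B (e.symm s))) (B (e.symm s)))
  let K : Set (κ → ℝ) := (T : (κ → ℝ) →ₗ[ℝ] (κ → ℝ)) ⁻¹' box
  have hvol : MeasureTheory.volume K = ENNReal.ofReal (d⁻¹ * ∏ i, (2 * B i)) := by
    simp only [K]
    rw [MeasureTheory.Measure.addHaar_preimage_linearMap _ hdet]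
    simp only [box]
    rw [MeasureTheory.volume_pi_pi]
    simp only [Real.volume_Icc]
    rw [← ENNReal.ofReal_prod_of_nonneg, ← ENNReal.ofReal_mul (abs_nonneg _)]
    · congr 1
      rw [abs_inv, ← hd]
      congr 1
      rw [← Equiv.prod_comp e.symm]
      refine Finset.prod_congr rfl fun s _ => by ring
    · intro s _
      have := hB (e.symm s)
      linarith
  have hsymm : ∀ x ∈ K, -x ∈ K := by
    intro x hx
    simp only [K, box, Set.mem_preimage, Set.mem_pi, Set.mem_univ, true_imp_iff, Set.mem_Icc, map_neg, Pi.neg_apply] at hx ⊢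
    intro i
    have := hx i
    constructor <;> linarith
  have hconv : Convex ℝ K := by
    refine Convex.linear_preimage ?_ _
    exact convex_pi fun i _ => convex_Icc _ _
  let bb := Pi.basisFun ℝ κ
  have hfund := ZSpan.isAddFundamentalDomain' bb MeasureTheory.volume
  have hfv : MeasureTheory.volume (ZSpan.fundamentalDomain bb) = 1 := by
    rw [ZSpan.fundamentalDomain_pi_basisFun, MeasureTheory.volume_pi_pi]
    simp
  have : Countable (Submodule.span ℤ (Set.range bb)).toAddSubgroup := inferInstanceAs (Countable (Submodule.span ℤ (Set.range bb)))
  have := MeasureTheory.exists_ne_zero_mem_lattice_of_measure_mul_two_pow_lt_measure (μ := MeasureTheory.volume)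
    hfund hsymm hconv (by
      rw [hfv, hvol, one_mul, Module.finrank_fintype_fun_eq_card, Finset.prod_mul_distrib, Finset.prod_const,
        Finset.card_univ, hcard]
      have : (2 : ENNReal) ^ Fintype.card κ = ENNReal.ofReal (2 ^ Fintype.card κ) := by
        rw [ENNReal.ofReal_pow (by norm_num)]; norm_num
      rw [this, ENNReal.ofReal_lt_ofReal_iff_of_nonneg (by positivity)]
      have h2 : (0 : ℝ) < 2 ^ Fintype.card κ := by positivity
      rw [mul_left_comm]
      have : 1 < d⁻¹ * ∏ i, B i := by
        rw [inv_mul_eq_div, lt_div_iff₀ hdp]; linarith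
      nlinarith)
  obtain ⟨⟨x, hx⟩, hx0, hxK⟩ := this
  have hx' : x ∈ Submodule.span ℤ (Set.range bb) := hx
  rw [bb.mem_span_iff_repr_mem ℤ] at hx'
  simp only [bb, Pi.basisFun_repr] at hx'
  choose P hP using hx'
  have hPx : (fun s => (P s : ℝ)) = x := by
    ext s; simpa using hP s
  refine ⟨P, ?_, fun i => ?_⟩
  · rintro rfl
    apply hx0
    ext s
    simp [← hPx]
  · rw [hPx]
    simp only [K, box, Set.mem_preimage, Set.mem_pi, Set.mem_univ, true_imp_iff, Set.mem_Icc] at hxK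
    have := hxK (e i)
    rw [abs_le]
    simpa [T, b'] using this

theorem aux_exp (C a b : ℝ) (ha : 0 < a) (hb : 0 < b) :
    ∀ᶠ Y : ℝ in Filter.atTop, C * Real.exp (-(a * Y)) < b := by
  have h : Filter.Tendsto (fun Y : ℝ => C * Real.exp (-(a * Y))) Filter.atTop (nhds (C * 0)) := by
    refine Filter.Tendsto.const_mul _ ?_
    refine Real.tendsto_exp_neg_atTop_nhds_zero.comp ?_
    exact Filter.tendsto_id.const_mul_atTop ha
  rw [mul_zero] at h
  exact h.eventually (gt_mem_nhds hb)

theorem aux_low (k : ℕ) (a g : Fin k → ℝ) (j : Fin k) (E q : ℝ) (hE : 0 < E)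
    (hg : ∀ m, 0 ≤ g m)
    (h1 : ∀ m, |a m| ≤ g m * E) (h2 : g j ≤ |a j| * E) (h3 : ∀ m, g m ≤ g j)
    (h4 : ∀ m, m ≠ j → g m ≤ q * g j) (hq : 0 ≤ q) (h5 : k * q * E ^ 2 ≤ 1 / 2) :
    g j ≤ 2 * E * |∑ m, a m| ∧ |∑ m, a m| ≤ k * (g j * E) := by
  constructor
  · have hs : a j + ∑ m ∈ Finset.univ.erase j, a m = ∑ m, a m :=
      Finset.add_sum_erase _ _ (Finset.mem_univ j)
    have hr : |∑ m ∈ Finset.univ.erase j, a m| ≤ k * (q * g j * E) := by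
      refine (Finset.abs_sum_le_sum_abs _ _).trans ?_
      have : ∑ m ∈ Finset.univ.erase j, |a m| ≤ ∑ m ∈ Finset.univ.erase j, q * g j * E := by
        refine Finset.sum_le_sum fun m hm => ?_
        refine (h1 m).trans ?_
        have := h4 m (Finset.ne_of_mem_erase hm)
        gcongr
      refine this.trans ?_
      rw [Finset.sum_const, nsmul_eq_mul]
      have hc : ((Finset.univ.erase j).card : ℝ) ≤ k := by
        have := Finset.card_erase_le (s := (Finset.univ : Finset (Fin k))) (a := j)
        rw [Finset.card_univ, Fintype.card_fin] at this
        exact_mod_cast this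
      have := hg j
      gcongr
    have h6 : |a j| ≤ |∑ m, a m| + |∑ m ∈ Finset.univ.erase j, a m| := by
      have : a j = ∑ m, a m - ∑ m ∈ Finset.univ.erase j, a m := by rw [← hs]; ring
      rw [this]; exact abs_sub _ _
    have h7 : k * (q * g j * E) * E ≤ 1 / 2 * g j := by
      have := mul_le_mul_of_nonneg_right h5 (hg j)
      linarith
    have h8 : g j ≤ (|∑ m, a m| + k * (q * g j * E)) * E := by
      refine h2.trans ?_
      gcongr
      linarith
    linarith
  · refine (Finset.abs_sum_le_sum_abs _ _).trans ?_
    have : ∑ m, |a m| ≤ ∑ m : Fin k, g j * E := by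
      refine Finset.sum_le_sum fun m hm => ?_
      refine (h1 m).trans ?_
      have := h3 m
      gcongr
    refine this.trans ?_
    simp

theorem aux_point (k p : ℕ) (hk : 1 ≤ k) (τ : Fin k → ℝ) (γ : ℝ)
    (hγ : ∀ i j, i ≠ j → γ ≤ |τ i - τ j|) (e : Fin k → Fin p → ℝ)
    (hH : ∀ δ : ℝ, 0 < δ → ∃ T0 : ℝ, ∀ T, T0 ≤ T → ∃ x : Fin p → ℤ,
      (∀ i, |(x i : ℝ)| ≤ Real.exp ((1 + δ) * T)) ∧
      ∀ j, Real.exp ((-τ j - δ) * T) ≤ |∑ i, (x i : ℝ) * e j i| ∧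
        |∑ i, (x i : ℝ) * e j i| ≤ Real.exp ((-τ j + δ) * T))
    (δ δ' : ℝ) (hδ : 0 < δ) (hkδ : k * δ ≤ 1) (hδ' : 0 < δ') (hδγ : δ' ≤ γ * δ / 16) :
    ∃ T0 : ℝ, 0 < T0 ∧ ∀ T1, T0 ≤ T1 → ∀ lam : Fin k → ℝ, ∃ T, T1 ≤ T ∧ T ≤ T1 + k * δ * T1 ∧
      ∃ (x : Fin p → ℤ) (j : Fin k), (∀ i, |(x i : ℝ)| ≤ Real.exp ((1 + δ') * T)) ∧
      (∀ m, |lam m| * Real.exp (-τ m * T) ≤ |lam j| * Real.exp (-τ j * T)) ∧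
      |lam j| * Real.exp (-τ j * T) ≤ 2 * Real.exp (δ' * T) * |∑ m, lam m * ∑ i, (x i : ℝ) * e m i| ∧
      |∑ m, lam m * ∑ i, (x i : ℝ) * e m i| ≤ k * (|lam j| * Real.exp (-τ j * T) * Real.exp (δ' * T)) := by
  obtain ⟨T0, hT0⟩ := hH δ' hδ'
  have hγδ : 0 < γ * δ := by linarith
  have hev := aux_exp k (γ * δ / 4) (1 / 2) (by linarith) (by norm_num)
  obtain ⟨T2, hT2⟩ := Filter.eventually_atTop.mp hev
  refine ⟨max 1 (max T0 T2), by positivity, fun T1 hT1 lam => ?_⟩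
  have a1 : 1 ≤ T1 := (le_max_left _ _).trans hT1
  have a2 : T0 ≤ T1 := (le_max_left _ _).trans ((le_max_right _ _).trans hT1)
  have a3 : T2 ≤ T1 := (le_max_right _ _).trans ((le_max_right _ _).trans hT1)
  obtain ⟨T, hTl, hTu, j, hj⟩ := aux_dom k hk τ γ hγ lam T1 (δ * T1) (by positivity)
  obtain ⟨x, hx, hL⟩ := hT0 T (a2.trans hTl)
  have hT2' : T ≤ 2 * T1 := by nlinarith
  refine ⟨T, hTl, by linarith, x, j, hx, fun m => (hj m).1, ?_⟩
  have eadd : ∀ m s, Real.exp ((-τ m + s) * T) = Real.exp (-τ m * T) * Real.exp (s * T) := by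
    intro m s; rw [← Real.exp_add]; ring_nf
  refine aux_low k (fun m => lam m * ∑ i, (x i : ℝ) * e m i) (fun m => |lam m| * Real.exp (-τ m * T)) j
    (Real.exp (δ' * T)) (Real.exp (-(γ * (δ * T1) / 2))) (Real.exp_pos _) (fun m => by positivity)
    (fun m => ?_) ?_ (fun m => (hj m).1) (fun m => (hj m).2) (Real.exp_nonneg _) ?_
  · rw [abs_mul, mul_assoc, ← eadd]
    have := (hL m).2
    gcongr
  · have h := (hL j).1
    rw [abs_mul, mul_assoc]
    gcongr
    have : Real.exp (-τ j * T) = Real.exp ((-τ j - δ') * T) * Real.exp (δ' * T) := by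
      rw [← Real.exp_add]; ring_nf
    rw [this]
    gcongr
  · refine le_trans ?_ (hT2 T1 a3).le
    rw [← Real.exp_nat_mul, mul_assoc, ← Real.exp_add]
    gcongr
    push_cast
    nlinarith

theorem aux_li (k p : ℕ) (hk : 1 ≤ k) (τ : Fin k → ℝ) (γ : ℝ) (hγ0 : 0 < γ)
    (hγ : ∀ i j, i ≠ j → γ ≤ |τ i - τ j|) (e : Fin k → Fin p → ℝ)
    (hH : ∀ δ : ℝ, 0 < δ → ∃ T0 : ℝ, ∀ T, T0 ≤ T → ∃ x : Fin p → ℤ,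
      (∀ i, |(x i : ℝ)| ≤ Real.exp ((1 + δ) * T)) ∧
      ∀ j, Real.exp ((-τ j - δ) * T) ≤ |∑ i, (x i : ℝ) * e j i| ∧
        |∑ i, (x i : ℝ) * e j i| ≤ Real.exp ((-τ j + δ) * T)) : LinearIndependent ℝ e := by
  have hk0 : (0 : ℝ) < k := by exact_mod_cast hk
  rw [Fintype.linearIndependent_iff]
  intro lam hlam
  obtain ⟨T0, hT0, h⟩ := aux_point k p hk τ γ hγ e hH (1 / k) (γ * (1 / k) / 16) (by positivity)
    (by rw [mul_one_div_cancel hk0.ne']) (by positivity) le_rfl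
  obtain ⟨T, -, -, x, j, -, h1, h2, -⟩ := h T0 le_rfl lam
  have hz : ∑ m, lam m * ∑ i, (x i : ℝ) * e m i = 0 := by
    simp only [Finset.mul_sum]
    rw [Finset.sum_comm]
    refine Finset.sum_eq_zero fun i _ => ?_
    have := congrFun hlam i
    simp only [Finset.sum_apply, Pi.smul_apply, smul_eq_mul, Pi.zero_apply] at this
    rw [← mul_zero (x i : ℝ), ← this, Finset.mul_sum]
    refine Finset.sum_congr rfl fun m _ => by ring
  rw [hz, abs_zero, mul_zero] at h2
  intro m
  have h3 := (h1 m).trans h2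
  have h4 := Real.exp_pos (-τ m * T)
  have h5 : |lam m| ≤ 0 := by
    by_contra hc
    push Not at hc
    have := mul_pos hc h4
    linarith
  exact abs_nonpos_iff.mp h5

theorem aux_basis (k p : ℕ) (e : Fin k → Fin p → ℝ) (he : LinearIndependent ℝ e) :
    ∃ (m : ℕ) (b : Module.Basis (Fin k ⊕ Fin m) ℝ (Fin p → ℝ)), p = k + m ∧ ∀ j, b (Sum.inl j) = e j := by
  let b := Module.Basis.sumExtend he
  have hfin : Finite (Fin k ⊕ Module.Basis.sumExtendIndex he) := Module.Finite.finite_basis b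
  have : Finite (Module.Basis.sumExtendIndex he) := Finite.sum_right (Fin k)
  obtain ⟨m, ⟨f⟩⟩ := Finite.exists_equiv_fin (Module.Basis.sumExtendIndex he)
  let b' := b.reindex (Equiv.sumCongr (Equiv.refl (Fin k)) f)
  refine ⟨m, b', ?_, fun j => ?_⟩
  · have := Module.finrank_eq_card_basis b'
    simpa using this
  · simp [b', b, Module.Basis.sumExtend]
    rfl

set_option maxHeartbeats 1000000 in
theorem aux_K (k p : ℕ) (hk : 1 ≤ k) (τ : Fin k → ℝ) (hτpos : ∀ j, 0 < τ j)
    (hτinj : Function.Injective τ) (e : Fin k → Fin p → ℝ)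
    (hH : ∀ δ : ℝ, 0 < δ → ∃ T0 : ℝ, ∀ T, T0 ≤ T → ∃ x : Fin p → ℤ,
      (∀ i, |(x i : ℝ)| ≤ Real.exp ((1 + δ) * T)) ∧
      ∀ j, Real.exp ((-τ j - δ) * T) ≤ |∑ i, (x i : ℝ) * e j i| ∧
        |∑ i, (x i : ℝ) * e j i| ≤ Real.exp ((-τ j + δ) * T)) :
    (k : ℝ) + ∑ j, τ j ≤ p := by
  have hk0 : (0 : ℝ) < k := by exact_mod_cast hk
  obtain ⟨γ, hγ0, hγ⟩ : ∃ γ : ℝ, 0 < γ ∧ ∀ i j, i ≠ j → γ ≤ |τ i - τ j| := by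
    have : ∀ᶠ c : ℝ in nhdsWithin 0 (Set.Ioi 0), ∀ i j, i ≠ j → c ≤ |τ i - τ j| := by
      rw [Filter.eventually_all]
      intro i
      rw [Filter.eventually_all]
      intro j
      by_cases hij : i = j
      · simp [hij]
      have hp : 0 < |τ i - τ j| := abs_pos.mpr (sub_ne_zero.mpr (fun h => hij (hτinj h)))
      filter_upwards [mem_nhdsWithin_of_mem_nhds (Iio_mem_nhds hp)] with c hc _
      exact le_of_lt hc
    obtain ⟨c, h1, h2⟩ := (this.and self_mem_nhdsWithin).exists
    exact ⟨c, h2, h1⟩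
  obtain ⟨m, b, hpm, hb⟩ := aux_basis k p e (aux_li k p hk τ γ hγ0 hγ e hH)
  obtain ⟨c, hc0, hmink⟩ := aux_mink b
  set A := ∑ j, τ j with hA
  have hA0 : 0 ≤ A := Finset.sum_nonneg fun j _ => (hτpos j).le
  have hAj : ∀ j, τ j ≤ A := fun j =>
    Finset.single_le_sum (fun i _ => (hτpos i).le) (Finset.mem_univ j)
  by_contra hlt
  push Not at hlt
  have hpm' : (p : ℝ) = k + m := by exact_mod_cast hpm
  have hp0 : (0 : ℝ) < p := by
    have : (0 : ℝ) ≤ m := Nat.cast_nonneg _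
    linarith
  obtain ⟨ε, hε0, hε⟩ : ∃ ε : ℝ, 0 < ε ∧ p * ε < A - m := by
    refine ⟨(A - m) / (2 * p), div_pos (by linarith) (by positivity), ?_⟩
    have : (p : ℝ) * ((A - m) / (2 * p)) = (A - m) / 2 := by field_simp
    rw [this]; linarith
  -- parameters
  obtain ⟨κ, hκ0, hκ1, hκ2⟩ : ∃ κ : ℝ, 0 < κ ∧ κ ≤ 1 ∧ (A + 1) * κ ≤ ε / 8 := by
    refine ⟨min 1 (ε / 8) / (A + 1), by positivity, ?_, ?_⟩
    · rw [div_le_one (by positivity)]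
      exact (min_le_left _ _).trans (by linarith)
    · rw [mul_div_cancel₀ _ (by positivity)]
      exact min_le_right _ _
  obtain ⟨δ, hδ0, hkδ⟩ : ∃ δ : ℝ, 0 < δ ∧ k * δ = κ := ⟨κ / k, by positivity, by field_simp⟩
  obtain ⟨δ', hδ'0, hδ'1, hδ'2⟩ : ∃ δ' : ℝ, 0 < δ' ∧ δ' ≤ γ * δ / 16 ∧ δ' ≤ ε / 64 :=
    ⟨min (γ * δ / 16) (ε / 64), by positivity, min_le_left _ _, min_le_right _ _⟩
  obtain ⟨T0, hT00, hpt⟩ := aux_point k p hk τ γ hγ e hH δ δ' hδ0 (by linarith) hδ'0 hδ'1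
  obtain ⟨K0, hK0, hK⟩ : ∃ K0 : ℝ, 0 < K0 ∧ ∀ t i, |b t i| ≤ K0 := by
    refine ⟨1 + ∑ t, ∑ i, |b t i|, by positivity, fun t i => ?_⟩
    have h1 : |b t i| ≤ ∑ i, |b t i| :=
      Finset.single_le_sum (f := fun i => |b t i|) (fun i _ => abs_nonneg _) (Finset.mem_univ i)
    have h2 : ∑ i, |b t i| ≤ ∑ t, ∑ i, |b t i| :=
      Finset.single_le_sum (f := fun t => ∑ i, |b t i|)
        (fun i _ => Finset.sum_nonneg fun _ _ => abs_nonneg _) (Finset.mem_univ t)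
    linarith
  -- choose Y
  have hσ : 0 < A - m - p * ε := by linarith
  obtain ⟨Y, hY1, hY2, hY3, hY4, hY5, hY6, hY7⟩ := ((aux_exp c _ 1 hσ one_pos).and
    ((aux_exp (m * K0) (1 + ε) (1 / 2) (by linarith) (by norm_num)).and
    ((aux_exp 1 (ε / 8) (Real.exp (-(A * T0)) / (2 * K0)) (by linarith) (by positivity)).and
    ((aux_exp k (ε / 2) 1 (by linarith) one_pos).and
    ((aux_exp k (ε / 16) (1 / 2) (by linarith) (by norm_num)).and
    ((aux_exp (2 * k * p * m * K0) (ε / 2) 1 (by linarith) one_pos).and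
    (Filter.eventually_ge_atTop T0))))))).exists
  have hY0 : 0 < Y := by linarith
  obtain ⟨P, hP0, hP⟩ := hmink (Sum.elim (fun j => Real.exp ((τ j - ε) * Y)) (fun _ => Real.exp (-((1 + ε) * Y))))
    (by rintro (j | s) <;> simp [Real.exp_pos]) (by
      rw [Fintype.prod_sum_type]
      simp only [Sum.elim_inl, Sum.elim_inr]
      rw [← Real.exp_sum, Finset.prod_const, Finset.card_univ, Fintype.card_fin, ← Real.exp_nat_mul,
        ← Real.exp_add, ← Finset.sum_mul, Finset.sum_sub_distrib, ← hA, Finset.sum_const, Finset.card_univ,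
        Fintype.card_fin, nsmul_eq_mul]
      have : (A - k * ε) * Y + m * -((1 + ε) * Y) = (A - m - p * ε) * Y := by rw [hpm']; ring
      rw [this]
      rw [Real.exp_neg, ← div_eq_mul_inv, div_lt_one (Real.exp_pos _)] at hY1
      exact hY1)
  set lam : Fin k → ℝ := fun j => b.repr (fun s => (P s : ℝ)) (Sum.inl j) with hlam
  set mu : Fin m → ℝ := fun j => b.repr (fun s => (P s : ℝ)) (Sum.inr j) with hmu
  have hlamb : ∀ j, |lam j| ≤ Real.exp ((τ j - ε) * Y) := fun j => hP (Sum.inl j)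
  have hmub : ∀ j, |mu j| ≤ Real.exp (-((1 + ε) * Y)) := fun j => hP (Sum.inr j)
  have hPi : ∀ i, (P i : ℝ) = ∑ j, lam j * e j i + ∑ s, mu s * b (Sum.inr s) i := by
    intro i
    have := congrFun (b.sum_repr (fun s => (P s : ℝ))) i
    rw [Fintype.sum_sum_type] at this
    simp only [Pi.add_apply, Finset.sum_apply, Pi.smul_apply, smul_eq_mul, hb] at this
    exact this.symm
  have hmusum : ∀ i, |∑ s, mu s * b (Sum.inr s) i| ≤ m * K0 * Real.exp (-((1 + ε) * Y)) := by
    intro i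
    refine (Finset.abs_sum_le_sum_abs _ _).trans ?_
    have : ∑ s, |mu s * b (Sum.inr s) i| ≤ ∑ s : Fin m, Real.exp (-((1 + ε) * Y)) * K0 := by
      refine Finset.sum_le_sum fun s _ => ?_
      rw [abs_mul]
      have h1 := hmub s
      have h2 := hK (Sum.inr s) i
      gcongr
    refine this.trans (le_of_eq ?_)
    simp; ring
  -- lower bound on lam
  have hlow : 1 / (2 * K0) ≤ ∑ j, |lam j| := by
    obtain ⟨i, hi⟩ := Function.ne_iff.mp hP0
    have h1 : (1 : ℝ) ≤ |(P i : ℝ)| := by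
      have : 1 ≤ |P i| := Int.one_le_abs hi
      exact_mod_cast this
    have h2 : |∑ j, lam j * e j i| ≤ (∑ j, |lam j|) * K0 := by
      refine (Finset.abs_sum_le_sum_abs _ _).trans ?_
      rw [Finset.sum_mul]
      refine Finset.sum_le_sum fun j _ => ?_
      rw [abs_mul]
      have h2 := hK (Sum.inl j) i
      rw [hb] at h2
      gcongr
    have h3 := hmusum i
    rw [hPi] at h1
    have h4 := abs_add_le (∑ j, lam j * e j i) (∑ s, mu s * b (Sum.inr s) i)
    rw [div_le_iff₀ (by positivity)]
    linarith
  let G : ℝ → ℝ := fun t => ∑ j, |lam j| * Real.exp (-τ j * t)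
  have hGc : Continuous G := by fun_prop
  have hG0 : Real.exp (-(ε / 8 * Y)) ≤ G T0 := by
    rw [one_mul] at hY3
    refine hY3.le.trans ?_
    have : Real.exp (-(A * T0)) / (2 * K0) = Real.exp (-(A * T0)) * (1 / (2 * K0)) := by ring
    rw [this]
    calc _ ≤ Real.exp (-(A * T0)) * ∑ j, |lam j| := by gcongr
      _ = ∑ j, |lam j| * Real.exp (-(A * T0)) := by rw [mul_comm, Finset.sum_mul]
      _ ≤ _ := by
        refine Finset.sum_le_sum fun j _ => ?_
        have := hAj j
        gcongr
        nlinarith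
  have hGY : G Y ≤ Real.exp (-(ε / 8 * Y)) := by
    have h1 : G Y ≤ ∑ j : Fin k, Real.exp (-(ε * Y)) := by
      refine Finset.sum_le_sum fun j _ => ?_
      have : Real.exp (-(ε * Y)) = Real.exp ((τ j - ε) * Y) * Real.exp (-τ j * Y) := by
        rw [← Real.exp_add]; ring_nf
      rw [this]
      have := hlamb j
      gcongr
    rw [Finset.sum_const, Finset.card_univ, Fintype.card_fin, nsmul_eq_mul] at h1
    have h2 : Real.exp (-(ε * Y)) = Real.exp (-(ε / 2 * Y)) * Real.exp (-(ε / 2 * Y)) := by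
      rw [← Real.exp_add]; ring_nf
    have h3 : Real.exp (-(ε / 2 * Y)) ≤ Real.exp (-(ε / 8 * Y)) := by
      rw [Real.exp_le_exp]; nlinarith [mul_pos hε0 hY0]
    rw [h2, ← mul_assoc] at h1
    have h4 := Real.exp_pos (-(ε / 2 * Y))
    nlinarith
  obtain ⟨T1, ⟨hT1a, hT1b⟩, hT1⟩ : ∃ T1 ∈ Set.Icc T0 Y, G T1 = Real.exp (-(ε / 8 * Y)) := by
    have := intermediate_value_Icc' hY7 hGc.continuousOn
    obtain ⟨t, ht, h⟩ := this ⟨hGY, hG0⟩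
    exact ⟨t, ht, h⟩
  obtain ⟨T, hTl, hTu, x, j, hx, hj, hS1, hS2⟩ := hpt T1 hT1a lam
  rw [hkδ] at hTu
  have hT10 : 0 < T1 := by linarith
  have hTY : T ≤ Y + κ * Y := by nlinarith
  set gj := |lam j| * Real.exp (-τ j * T) with hgj
  set S := ∑ m, lam m * ∑ i, (x i : ℝ) * e m i with hS
  have hgu : gj ≤ Real.exp (-(ε / 8 * Y)) := by
    rw [← hT1]
    have h1 : |lam j| * Real.exp (-τ j * T1) ≤ G T1 :=
      Finset.single_le_sum (f := fun j => |lam j| * Real.exp (-τ j * T1))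
        (fun i _ => by positivity) (Finset.mem_univ j)
    refine le_trans ?_ h1
    rw [hgj]
    have := hτpos j
    gcongr ?_ * ?_
    rw [Real.exp_le_exp]
    nlinarith
  have hgl : Real.exp (-(ε / 8 * Y)) * Real.exp (-(A * κ * Y)) ≤ k * gj := by
    rw [← hT1]
    have h1 : G T ≤ ∑ m : Fin k, gj := Finset.sum_le_sum fun m _ => hj m
    rw [Finset.sum_const, Finset.card_univ, Fintype.card_fin, nsmul_eq_mul] at h1
    refine le_trans ?_ h1
    simp only [G]
    rw [Finset.sum_mul]
    refine Finset.sum_le_sum fun i _ => ?_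
    rw [mul_assoc, ← Real.exp_add]
    gcongr
    have h2 := hAj i
    have h3 := hτpos i
    have h4 : T - T1 ≤ κ * Y := by nlinarith
    have h5 : τ i * (T - T1) ≤ A * (κ * Y) := by
      apply mul_le_mul h2 h4 (by linarith) hA0
    linarith
  have hSu : |S| < 1 / 2 := by
    refine lt_of_le_of_lt ?_ hY5
    refine hS2.trans ?_
    gcongr
    have h1 : δ' * T ≤ ε / 64 * (2 * Y) := by
      apply mul_le_mul hδ'2 (by nlinarith) (by linarith) (by linarith)
    calc gj * Real.exp (δ' * T) ≤ Real.exp (-(ε / 8 * Y)) * Real.exp (ε / 64 * (2 * Y)) := by gcongr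
      _ ≤ _ := by
        rw [← Real.exp_add, Real.exp_le_exp]; nlinarith [mul_pos hε0 hY0]
  set U := ∑ i, (x i : ℝ) * ∑ s, mu s * b (Sum.inr s) i with hU
  have hUb : |U| ≤ p * (Real.exp ((1 + δ') * T) * (m * K0 * Real.exp (-((1 + ε) * Y)))) := by
    refine (Finset.abs_sum_le_sum_abs _ _).trans ?_
    have : ∑ i, |(x i : ℝ) * ∑ s, mu s * b (Sum.inr s) i| ≤
        ∑ i : Fin p, (Real.exp ((1 + δ') * T) * (m * K0 * Real.exp (-((1 + ε) * Y)))) := by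
      refine Finset.sum_le_sum fun i _ => ?_
      rw [abs_mul]
      have h1 := hx i
      have h2 := hmusum i
      gcongr
    refine this.trans (le_of_eq ?_)
    simp
  have hUS : |U| < |S| := by
    have hEpos := Real.exp_pos (δ' * T)
    -- multiply by 2 k exp(δ' T)
    have h1 : Real.exp (-(ε / 8 * Y)) * Real.exp (-(A * κ * Y)) ≤ 2 * k * Real.exp (δ' * T) * |S| := by
      refine hgl.trans ?_
      calc k * gj ≤ k * (2 * Real.exp (δ' * T) * |S|) := by gcongr
        _ = _ := by ring
    have h2 : 2 * k * Real.exp (δ' * T) * |U| < Real.exp (-(ε / 8 * Y)) * Real.exp (-(A * κ * Y)) := by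
      calc 2 * k * Real.exp (δ' * T) * |U| ≤ 2 * k * Real.exp (δ' * T) *
            (p * (Real.exp ((1 + δ') * T) * (m * K0 * Real.exp (-((1 + ε) * Y))))) := by gcongr
        _ = (2 * k * p * m * K0) * Real.exp (δ' * T + (1 + δ') * T + -((1 + ε) * Y)) := by
            rw [Real.exp_add, Real.exp_add]; ring
        _ ≤ (2 * k * p * m * K0) * Real.exp (-(ε / 2 * Y) + (-(ε / 8 * Y) + -(A * κ * Y))) := by
            refine mul_le_mul_of_nonneg_left (Real.exp_le_exp.mpr ?_) (by positivity)
            have h5 : (1 + 2 * δ') * T ≤ (1 + 2 * δ') * (Y + κ * Y) := by gcongr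
            have h6 : 2 * δ' * (1 + κ) ≤ 2 * (ε / 64) * 2 := by gcongr; linarith
            have h7 : ((1 + 2 * δ') * (1 + κ) - (1 + ε) + ε / 2 + ε / 8 + A * κ) * Y ≤ 0 := by
              apply mul_nonpos_of_nonpos_of_nonneg _ hY0.le
              nlinarith
            linarith
        _ = (2 * k * p * m * K0) * Real.exp (-(ε / 2 * Y)) * (Real.exp (-(ε / 8 * Y)) * Real.exp (-(A * κ * Y))) := by
            rw [Real.exp_add, Real.exp_add]; ring
        _ < 1 * (Real.exp (-(ε / 8 * Y)) * Real.exp (-(A * κ * Y))) := by gcongr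
        _ = _ := one_mul _
    have h3 := h2.trans_le h1
    exact lt_of_mul_lt_mul_left h3 (by positivity)
  have hN : ((∑ i, x i * P i : ℤ) : ℝ) = S + U := by
    push_cast
    rw [hS, hU]
    simp only [Finset.mul_sum]
    rw [Finset.sum_comm, ← Finset.sum_add_distrib]
    refine Finset.sum_congr rfl fun i _ => ?_
    rw [hPi, mul_add, Finset.mul_sum, Finset.mul_sum]
    congr 1
    refine Finset.sum_congr rfl fun _ _ => by ring
  have hlt1 : |((∑ i, x i * P i : ℤ) : ℝ)| < 1 := by
    rw [hN]
    have := abs_add_le S U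
    linarith
  have hz : (∑ i, x i * P i : ℤ) = 0 := by
    rw [← Int.abs_lt_one_iff]; exact_mod_cast hlt1
  rw [hz, Int.cast_zero] at hN
  have : S = -U := by linarith
  rw [this, abs_neg] at hUS
  exact lt_irrefl _ hUS

theorem aux_ratio {k : ℕ} (Q : ℕ → ℕ) (hQmono : StrictMono Q)
    (ωs : Fin k → ℝ) (hQgrowth :
      (∃ M : ℝ, 0 < M ∧ ∀ n : ℕ, 1 ≤ n →
        Real.log (Q (n + 1)) ≤ (1 + M / n) * Real.log (Q n)) ∨
      ((∀ j, ωs j = 0) ∧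
        Filter.Tendsto (fun n => Real.log (Q (n + 1)) / Real.log (Q n))
          Filter.atTop (nhds 1))) (δ : ℝ) (hδ : 0 < δ) :
    ∀ᶠ n in Filter.atTop, Real.log (Q (n + 1)) ≤ (1 + δ) * Real.log (Q n) := by
  have hlogpos : ∀ n : ℕ, 2 ≤ n → 0 < Real.log (Q n) := by
    intro n hn
    apply Real.log_pos
    have := hQmono.id_le n
    have : n ≤ Q n := this
    have : 1 < Q n := by omega
    exact_mod_cast this
  rcases hQgrowth with ⟨M, hM, h⟩ | ⟨-, h⟩
  · have h1 : Filter.Tendsto (fun n : ℕ => M / (n : ℝ)) Filter.atTop (nhds 0) :=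
      tendsto_const_div_atTop_nhds_zero_nat M
    filter_upwards [h1.eventually (gt_mem_nhds hδ), Filter.eventually_ge_atTop 2] with n hn h2
    refine (h n (by omega)).trans ?_
    have := hlogpos n h2
    gcongr
  · filter_upwards [h.eventually (gt_mem_nhds (show (1 : ℝ) < 1 + δ by linarith)),
      Filter.eventually_ge_atTop 2] with n hn h2
    rw [div_lt_iff₀ (hlogpos n h2)] at hn
    exact hn.le

theorem aux_ratioH (t : ℕ → ℝ) (ht : ∀ n, 0 ≤ t n)
    (h : ∀ δ : ℝ, 0 < δ → ∀ᶠ n in Filter.atTop, t (n + 1) ≤ (1 + δ) * t n) (H : ℕ) :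
    ∀ δ : ℝ, 0 < δ → ∀ᶠ n in Filter.atTop, t (n + H) ≤ (1 + δ) * t n := by
  induction H with
  | zero =>
    intro δ hδ
    refine Filter.Eventually.of_forall fun n => ?_
    have := ht n
    simp only [add_zero]
    nlinarith
  | succ H ih =>
    intro δ hδ
    obtain ⟨d, hd0, hd⟩ : ∃ d : ℝ, 0 < d ∧ (1 + d) * (1 + d) ≤ 1 + δ := by
      refine ⟨min 1 (δ / 3), by positivity, ?_⟩
      have h1 := min_le_left 1 (δ / 3)
      have h2 := min_le_right 1 (δ / 3)
      have h3 : 0 < min 1 (δ / 3) := by positivity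
      nlinarith
    have hs : Filter.Tendsto (fun n : ℕ => n + H) Filter.atTop Filter.atTop :=
      Filter.tendsto_add_atTop_nat H
    filter_upwards [ih d hd0, hs.eventually (h d hd0)] with n h1 h2
    rw [← add_assoc]
    calc t (n + H + 1) ≤ (1 + d) * t (n + H) := h2
      _ ≤ (1 + d) * ((1 + d) * t n) := by gcongr
      _ = ((1 + d) * (1 + d)) * t n := by ring
      _ ≤ _ := by
        have := ht n
        gcongr

theorem aux_window (t : ℕ → ℝ) (ht : ∀ n, 0 ≤ t n) (hmono : Monotone t)
    (htop : Filter.Tendsto t Filter.atTop Filter.atTop)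
    (h : ∀ δ : ℝ, 0 < δ → ∀ᶠ n in Filter.atTop, t (n + 1) ≤ (1 + δ) * t n) (H : ℕ)
    (good : ℕ → Prop) (hgood : ∀ n, ∃ m, n ≤ m ∧ m ≤ n + H ∧ good m) (N : ℕ) (δ : ℝ) (hδ : 0 < δ) :
    ∃ T0 : ℝ, ∀ T, T0 ≤ T → ∃ m, N ≤ m ∧ good m ∧ T ≤ t m ∧ t m ≤ (1 + δ) * T := by
  classical
  obtain ⟨N1, hN1⟩ := Filter.eventually_atTop.mp (aux_ratioH t ht h (H + 1) δ hδ)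
  refine ⟨t (max N N1) + 1, fun T hT => ?_⟩
  have hex : ∃ n, T ≤ t n := (htop.eventually (Filter.eventually_ge_atTop T)).exists
  have hspec := Nat.find_spec hex
  have hmin : ∀ n, n < Nat.find hex → t n < T := fun n hn => not_le.mp (Nat.find_min hex hn)
  set n := Nat.find hex with hn
  have hlt : max N N1 < n := by
    by_contra hc
    have := hmono (not_lt.mp hc)
    linarith
  obtain ⟨n', hn'⟩ : ∃ n', n = n' + 1 := ⟨n - 1, by omega⟩
  obtain ⟨m, hm1, hm2, hm3⟩ := hgood n
  have hN : N ≤ max N N1 := le_max_left _ _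
  have hN' : N1 ≤ max N N1 := le_max_right _ _
  refine ⟨m, by omega, hm3, hspec.trans (hmono hm1), ?_⟩
  have h1 : t m ≤ t (n' + (H + 1)) := hmono (by omega)
  have h2 := hN1 n' (by omega)
  have h3 := hmin n' (by omega)
  refine h1.trans (h2.trans ?_)
  gcongr

theorem aux_seq
    (k p : ℕ)
    (C : Fin p → Fin k → ℝ)
    (τs ωs φs : Fin k → ℝ)
    (hτpos : ∀ j, 0 < τs j)
    (hosc : {n : ℕ | ∀ j : Fin k, ∀ m : ℤ,
      (n : ℝ) * ωs j + φs j ≠ Real.pi / 2 + m * Real.pi}.Infinite)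
    (Q : ℕ → ℕ) (hQmono : StrictMono Q) (hQpos : ∀ n, 0 < Q n)
    (hQgrowth :
      (∃ M : ℝ, 0 < M ∧ ∀ n : ℕ, 1 ≤ n →
        Real.log (Q (n + 1)) ≤ (1 + M / n) * Real.log (Q n)) ∨
      ((∀ j, ωs j = 0) ∧
        Filter.Tendsto (fun n => Real.log (Q (n + 1)) / Real.log (Q n))
          Filter.atTop (nhds 1)))
    (l : ℕ → Fin p → ℤ)
    (εs ηs : Fin k → ℕ → ℝ) (θs : ℕ → ℝ)
    (hεs : ∀ j, Filter.Tendsto (εs j) Filter.atTop (nhds 0))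
    (hηs : ∀ j, Filter.Tendsto (ηs j) Filter.atTop (nhds 0))
    (hθs : Filter.Tendsto θs Filter.atTop (nhds 0))
    (hl : ∀ n : ℕ, 1 ≤ n → ∀ i, |(l n i : ℝ)| ≤ (Q n : ℝ) ^ (1 + θs n))
    (hcoord : ∀ n : ℕ, 1 ≤ n → ∀ j : Fin k,
      |∑ i, (l n i : ℝ) * C i j| =
        (Q n : ℝ) ^ (-τs j + εs j n) * |Real.cos ((n : ℝ) * ωs j + φs j) + ηs j n|)
    (δ : ℝ) (hδ : 0 < δ) : ∃ T0 : ℝ, ∀ T, T0 ≤ T → ∃ x : Fin p → ℤ,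
      (∀ i, |(x i : ℝ)| ≤ Real.exp ((1 + δ) * T)) ∧
      ∀ j, Real.exp ((-τs j - δ) * T) ≤ |∑ i, (x i : ℝ) * C i j| ∧
        |∑ i, (x i : ℝ) * C i j| ≤ Real.exp ((-τs j + δ) * T) := by
  obtain ⟨n0, hn0⟩ := hosc.nonempty
  have hcos : ∀ j, Real.cos ((n0 : ℝ) * ωs j + φs j) ≠ 0 := by
    intro j hj
    obtain ⟨m, hm⟩ := Real.cos_eq_zero_iff.mp hj
    exact hn0 j m (by rw [hm]; ring)
  obtain ⟨c, hc, H, hsynd⟩ := aux_synd k ωs φs n0 hcos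
  set A := ∑ j, τs j with hA
  have hA0 : 0 ≤ A := Finset.sum_nonneg fun j _ => (hτpos j).le
  have hAj : ∀ j, τs j ≤ A := fun j =>
    Finset.single_le_sum (fun i _ => (hτpos i).le) (Finset.mem_univ j)
  obtain ⟨d, hd0, hd1, hd⟩ : ∃ d : ℝ, 0 < d ∧ d ≤ 1 ∧ d * (A + 3) ≤ δ / 2 := by
    refine ⟨min 1 (δ / 2) / (A + 3), by positivity, ?_, ?_⟩
    · rw [div_le_one (by positivity)]
      exact (min_le_left _ _).trans (by linarith)
    · rw [div_mul_cancel₀ _ (by positivity)]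
      exact min_le_right _ _
  have hev : ∀ᶠ n in Filter.atTop, 1 ≤ n ∧ θs n < d ∧ ∀ j, |εs j n| < d ∧ |ηs j n| < min (c / 2) 1 := by
    refine (Filter.eventually_ge_atTop 1).and ((hθs.eventually (gt_mem_nhds hd0)).and ?_)
    rw [Filter.eventually_all]
    intro j
    have h1 := (hεs j).abs
    have h2 := (hηs j).abs
    rw [abs_zero] at h1 h2
    exact (h1.eventually (gt_mem_nhds hd0)).and (h2.eventually (gt_mem_nhds (by positivity)))
  obtain ⟨N, hN⟩ := Filter.eventually_atTop.mp hev
  have hQ1 : ∀ n, (1 : ℝ) ≤ Q n := fun n => by exact_mod_cast hQpos n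
  obtain ⟨T0, hT0⟩ := aux_window (fun n => Real.log (Q n)) (fun n => Real.log_nonneg (hQ1 n))
    (fun a b hab => Real.log_le_log (by have := hQ1 a; linarith) (by exact_mod_cast hQmono.monotone hab))
    (Real.tendsto_log_atTop.comp (tendsto_natCast_atTop_atTop.comp hQmono.tendsto_atTop))
    (aux_ratio Q hQmono ωs hQgrowth) H _ hsynd N d hd0
  obtain ⟨T2, hT2⟩ := Filter.eventually_atTop.mp ((aux_exp 1 (δ / 2) (c / 2) (by linarith) (by positivity)).and
    ((aux_exp 2 (δ / 2) 1 (by linarith) one_pos).and (Filter.eventually_ge_atTop 0)))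
  refine ⟨max T0 T2, fun T hT => ?_⟩
  obtain ⟨n, hNn, hgood, hTl, hTu⟩ := hT0 T ((le_max_left _ _).trans hT)
  obtain ⟨hb1, hb2, hT⟩ := hT2 T ((le_max_right _ _).trans hT)
  obtain ⟨hn1, hθ, hεη⟩ := hN n hNn
  have hQp : (0 : ℝ) < Q n := by have := hQ1 n; linarith
  set t := Real.log (Q n) with ht
  have hrp : ∀ s : ℝ, (Q n : ℝ) ^ s = Real.exp (t * s) := fun s => Real.rpow_def_of_pos hQp s
  have ht0 : 0 ≤ t := by linarith
  refine ⟨l n, fun i => ?_, fun j => ?_⟩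
  · refine (hl n hn1 i).trans ?_
    rw [hrp, Real.exp_le_exp]
    calc t * (1 + θs n) ≤ t * (1 + d) := by gcongr
      _ ≤ (1 + d) * T * (1 + d) := by gcongr
      _ = ((1 + d) * (1 + d)) * T := by ring
      _ ≤ (1 + δ) * T := by
        gcongr
        nlinarith
  · rw [hcoord n hn1 j, hrp]
    obtain ⟨hε, hη⟩ := hεη j
    have hη1 := hη.trans_le (min_le_left _ _)
    have hη2 := hη.trans_le (min_le_right _ _)
    rw [abs_lt] at hε
    have hg := hgood j
    have hup : |Real.cos ((n : ℝ) * ωs j + φs j) + ηs j n| ≤ 2 := by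
      have := abs_add_le (Real.cos ((n : ℝ) * ωs j + φs j)) (ηs j n)
      have := Real.abs_cos_le_one ((n : ℝ) * ωs j + φs j)
      linarith
    have hlo : c / 2 ≤ |Real.cos ((n : ℝ) * ωs j + φs j) + ηs j n| := by
      have := abs_sub_abs_le_abs_add (Real.cos ((n : ℝ) * ωs j + φs j)) (ηs j n)
      linarith
    have hτ := hτpos j
    have hτA := hAj j
    constructor
    · rw [one_mul] at hb1
      calc Real.exp ((-τs j - δ) * T) = Real.exp ((-τs j - δ / 2) * T) * Real.exp (-(δ / 2 * T)) := by
            rw [← Real.exp_add]; ring_nf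
        _ ≤ Real.exp (t * (-τs j + εs j n)) * (c / 2) := by
            refine mul_le_mul (Real.exp_le_exp.mpr ?_) hb1.le (Real.exp_nonneg _) (Real.exp_nonneg _)
            have h1 : t * (τs j - εs j n) ≤ (1 + d) * T * (τs j + d) := by
              refine (mul_le_mul_of_nonneg_left (show τs j - εs j n ≤ τs j + d by linarith) ht0).trans ?_
              gcongr
            have h2 : (1 + d) * (τs j + d) ≤ τs j + δ / 2 := by nlinarith
            have h3 := mul_le_mul_of_nonneg_right h2 hT
            linarith
        _ ≤ _ := by gcongr
    · have h5 : 2 ≤ Real.exp (δ / 2 * T) := by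
        rw [Real.exp_neg, ← div_eq_mul_inv, div_lt_one (Real.exp_pos _)] at hb2
        exact hb2.le
      calc _ ≤ Real.exp ((-τs j + δ / 2) * T) * Real.exp (δ / 2 * T) := by
            refine mul_le_mul (Real.exp_le_exp.mpr ?_) (hup.trans h5) (abs_nonneg _) (Real.exp_nonneg _)
            have h1 : t * εs j n ≤ (1 + d) * T * d := by
              refine (mul_le_mul_of_nonneg_left hε.2.le ht0).trans ?_
              gcongr
            have h2 : (1 + d) * d ≤ δ / 2 := by nlinarith
            have h3 := mul_le_mul_of_nonneg_right h2 hT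
            have h4 := mul_le_mul_of_nonneg_right hTl hτ.le
            linarith
        _ = _ := by rw [← Real.exp_add]; ring_nf

theorem aux_red (k p : ℕ) (C : Fin p → Fin k → ℝ) :
    ∃ (e : Fin k → Fin (Module.finrank ℚ (Submodule.span ℚ (Set.range C))) → ℝ)
      (a : Fin p → Fin (Module.finrank ℚ (Submodule.span ℚ (Set.range C))) → ℤ),
      ∀ i j, C i j = ∑ s, (a i s : ℝ) * e j s := by
  have : Module.Finite ℚ (Submodule.span ℚ (Set.range C)) :=
    Module.Finite.span_of_finite ℚ (Set.finite_range C)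
  set V := Submodule.span ℚ (Set.range C) with hV
  let B := Module.finBasis ℚ V
  have hC : ∀ i, C i ∈ V := fun i => Submodule.subset_span ⟨i, rfl⟩
  let q : Fin p × Fin (Module.finrank ℚ V) → ℚ := fun u => B.repr ⟨C u.1, hC u.1⟩ u.2
  obtain ⟨D, hD⟩ := IsLocalization.exist_integer_multiples_of_finite (nonZeroDivisors ℤ) q
  choose a ha using hD
  have hD0 : ((D : ℤ) : ℝ) ≠ 0 := by
    have := nonZeroDivisors.coe_ne_zero D
    exact_mod_cast this
  refine ⟨fun j s => (B s : Fin k → ℝ) j / ((D : ℤ) : ℝ), fun i s => a (i, s), fun i j => ?_⟩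
  have h1 := congrArg (fun v : V => (v : Fin k → ℝ) j) (B.sum_repr ⟨C i, hC i⟩)
  simp only [Submodule.coe_sum, Finset.sum_apply, Submodule.coe_smul, Pi.smul_apply] at h1
  rw [← h1]
  refine Finset.sum_congr rfl fun s _ => ?_
  have h2 : ((a (i, s) : ℤ) : ℚ) = (D : ℤ) * q (i, s) := by
    have := ha (i, s)
    simpa using this
  have h3 : ((a (i, s) : ℤ) : ℝ) = ((D : ℤ) : ℝ) * ((q (i, s) : ℚ) : ℝ) := by
    exact_mod_cast congrArg (fun z : ℚ => (z : ℝ)) h2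
  rw [h3, Rat.smul_def]
  field_simp
  exact mul_comm _ _

/-- Nesterenko-type criterion, column form: under the stated hypotheses on the integer
coefficients ℓ_{i,n} and vectors C_1,…,C_p ∈ ℝ^k, the rank over ℚ of C_1,…,C_p in ℝ^k viewed
as a ℚ-vector space is at least k + τ_1 + … + τ_k. -/
theorem stmt6
    (k p : ℕ) (hk : 1 ≤ k) (hp : 1 ≤ p)
    (C : Fin p → Fin k → ℝ)
    (τs ωs φs : Fin k → ℝ)
    (hτpos : ∀ j, 0 < τs j) (hτinj : Function.Injective τs)
    (hosc : {n : ℕ | ∀ j : Fin k, ∀ m : ℤ,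
      (n : ℝ) * ωs j + φs j ≠ Real.pi / 2 + m * Real.pi}.Infinite)
    (Q : ℕ → ℕ) (hQmono : StrictMono Q) (hQpos : ∀ n, 0 < Q n)
    (hQgrowth :
      (∃ M : ℝ, 0 < M ∧ ∀ n : ℕ, 1 ≤ n →
        Real.log (Q (n + 1)) ≤ (1 + M / n) * Real.log (Q n)) ∨
      ((∀ j, ωs j = 0) ∧
        Filter.Tendsto (fun n => Real.log (Q (n + 1)) / Real.log (Q n))
          Filter.atTop (nhds 1)))
    (l : ℕ → Fin p → ℤ)
    (εs ηs : Fin k → ℕ → ℝ) (θs : ℕ → ℝ)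
    (hεs : ∀ j, Filter.Tendsto (εs j) Filter.atTop (nhds 0))
    (hηs : ∀ j, Filter.Tendsto (ηs j) Filter.atTop (nhds 0))
    (hθs : Filter.Tendsto θs Filter.atTop (nhds 0))
    (hl : ∀ n : ℕ, 1 ≤ n → ∀ i, |(l n i : ℝ)| ≤ (Q n : ℝ) ^ (1 + θs n))
    (hcoord : ∀ n : ℕ, 1 ≤ n → ∀ j : Fin k,
      |∑ i, (l n i : ℝ) * C i j| =
        (Q n : ℝ) ^ (-τs j + εs j n) * |Real.cos ((n : ℝ) * ωs j + φs j) + ηs j n|) :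
    (k : ℝ) + ∑ j, τs j ≤
      (Module.finrank ℚ (Submodule.span ℚ (Set.range C)) : ℝ) := by
  obtain ⟨e, a, hea⟩ := aux_red k p C
  refine aux_K k _ hk τs hτpos hτinj e fun δ hδ => ?_
  obtain ⟨T0, hT0⟩ := aux_seq k p C τs ωs φs hτpos hosc Q hQmono hQpos hQgrowth l εs ηs θs hεs hηs hθs
    hl hcoord (δ / 2) (by linarith)
  have hW : ∀ s, ∑ i, |(a i s : ℝ)| ≤ ∑ s, ∑ i, |(a i s : ℝ)| := fun s =>
    Finset.single_le_sum (f := fun s => ∑ i, |(a i s : ℝ)|)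
        (fun i _ => Finset.sum_nonneg fun _ _ => abs_nonneg _) (Finset.mem_univ s)
  set W := ∑ s, ∑ i, |(a i s : ℝ)|
  obtain ⟨T2, hT2⟩ := Filter.eventually_atTop.mp ((aux_exp W (δ / 2) 1 (by linarith) one_pos).and
    (Filter.eventually_ge_atTop 0))
  refine ⟨max T0 T2, fun T hT => ?_⟩
  obtain ⟨x, hx, hL⟩ := hT0 T ((le_max_left _ _).trans hT)
  obtain ⟨hb, hT⟩ := hT2 T ((le_max_right _ _).trans hT)
  rw [Real.exp_neg, ← div_eq_mul_inv, div_lt_one (Real.exp_pos _)] at hb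
  refine ⟨fun s => ∑ i, x i * a i s, fun s => ?_, fun j => ?_⟩
  · push_cast
    refine (Finset.abs_sum_le_sum_abs _ _).trans ?_
    calc ∑ i, |(x i : ℝ) * (a i s : ℝ)| ≤ ∑ i, Real.exp ((1 + δ / 2) * T) * |(a i s : ℝ)| := by
          refine Finset.sum_le_sum fun i _ => ?_
          rw [abs_mul]
          have := hx i
          gcongr
      _ = Real.exp ((1 + δ / 2) * T) * ∑ i, |(a i s : ℝ)| := by rw [Finset.mul_sum]
      _ ≤ Real.exp ((1 + δ / 2) * T) * Real.exp (δ / 2 * T) := by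
          have := (hW s).trans hb.le
          gcongr
      _ = _ := by rw [← Real.exp_add]; ring_nf
  · have heq : ∑ s, ((∑ i, x i * a i s : ℤ) : ℝ) * e j s = ∑ i, (x i : ℝ) * C i j := by
      push_cast
      simp only [Finset.sum_mul, hea, Finset.mul_sum]
      rw [Finset.sum_comm]
      refine Finset.sum_congr rfl fun i _ => Finset.sum_congr rfl fun s _ => by ring
    rw [heq]
    refine ⟨le_trans ?_ (hL j).1, (hL j).2.trans ?_⟩ <;>
    · rw [Real.exp_le_exp]
      gcongr
      linarith
end

section
/- Assume hypotheses (H), and assume moreover that for each j ∈ {1,…,k} the vector e_j has the form e_j = (0,…,0,1,0,…,0, e′_j), where the 1 is in the j-th position and e′_j ∈ ℝ^{p−k}. Then: (1) no nontrivial ℚ-linear combination of e′_1,…,e′_k belongs to ℚ^{p−k}; and (2) for every ε > 0 there exists Q_0 such that for every Q ≥ Q_0, for all integers λ_1,…,λ_k, not all zero, with |λ_j| ≤ Q^{τ_j} for every j, and for every S ∈ ℤ^{p−k}, one has ‖λ_1e′_1 + … + λ_ke′_k − S‖ ≥ Q^{−1−ε}, where ‖·‖ is a fixed norm on ℝ^{p−k}.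 -/
lemma synd {k : ℕ} (ω φ : Fin k → ℝ) (n0 : ℕ)
    (h0 : ∀ j, Real.cos ((n0 : ℝ) * ω j + φ j) ≠ 0) :
    ∃ c : ℝ, 0 < c ∧ ∃ G : ℕ, ∀ N : ℕ, ∃ n, N ≤ n ∧ n ≤ N + G ∧
      ∀ j, c ≤ |Real.cos ((n : ℝ) * ω j + φ j)| := by
  obtain ⟨c, hc, hcj⟩ : ∃ c : ℝ, 0 < c ∧ ∀ j, c ≤ |Real.cos ((n0 : ℝ) * ω j + φ j)| := by
    rcases isEmpty_or_nonempty (Fin k) with hE | hE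
    · exact ⟨1, one_pos, fun j => (hE.false j).elim⟩
    · obtain ⟨j0, hj0⟩ := Finite.exists_min (fun j => |Real.cos ((n0 : ℝ) * ω j + φ j)|)
      exact ⟨_, abs_pos.mpr (h0 j0), hj0⟩
  let F : ℕ → Fin k → ℂ := fun n j => Complex.exp (((n : ℝ) * ω j : ℝ) * Complex.I)
  have hb : TotallyBounded (Set.range F) := by
    have : Bornology.IsBounded (Set.range F) := by
      rw [isBounded_iff_forall_norm_le]
      refine ⟨1, ?_⟩
      rintro _ ⟨n, rfl⟩
      rw [pi_norm_le_iff_of_nonneg zero_le_one]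
      intro j
      exact (Complex.norm_exp_ofReal_mul_I _).le
    exact (Metric.isCompact_of_isClosed_isBounded isClosed_closure this.closure).totallyBounded.subset subset_closure
  obtain ⟨t, hts, htf, hcov⟩ := Metric.finite_approx_of_totallyBounded hb (c/2) (by positivity)
  obtain ⟨G, hG⟩ : ∃ G : ℕ, ∀ y ∈ t, ∃ m, m ≤ G ∧ F m = y := by
    have hts' : ∀ y ∈ t, ∃ m, F m = y := fun y hy => hts hy
    choose! g hg using hts'
    obtain ⟨G, hG⟩ := (htf.image g).bddAbove
    exact ⟨G, fun y hy => ⟨g y, hG ⟨y, hy, rfl⟩, hg y hy⟩⟩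
  refine ⟨c/2, by positivity, G + n0, fun N => ?_⟩
  have := hcov ⟨N + G, rfl⟩
  simp only [Set.mem_iUnion] at this
  obtain ⟨y, hy, hd⟩ := this
  obtain ⟨m, hm, rfl⟩ := hG y hy
  refine ⟨N + G - m + n0, by omega, by omega, fun j => ?_⟩
  have hd' : dist (F (N+G) j) (F m j) < c/2 := lt_of_le_of_lt (dist_le_pi_dist _ _ j) hd
  set h := N + G - m with hh
  have hNG : N + G = h + m := by omega
  rw [hNG, dist_eq_norm] at hd'
  have e1 : Complex.exp ((((h + n0 : ℕ) : ℝ) * ω j + φ j : ℝ) * Complex.I) - Complex.exp ((((n0 : ℕ) : ℝ) * ω j + φ j : ℝ) * Complex.I)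
     = (F (h + m) j - F m j) * Complex.exp ((((n0 : ℝ) - m) * ω j + φ j : ℝ) * Complex.I) := by
    simp only [F, sub_mul, ← Complex.exp_add]
    congr 2 <;> (push_cast; ring)
  have e2 := congrArg (fun z => |z.re|) e1
  simp only [Complex.sub_re, Complex.exp_ofReal_mul_I_re] at e2
  have e3 := Complex.abs_re_le_norm ((F (h + m) j - F m j) * Complex.exp ((((n0 : ℝ) - m) * ω j + φ j : ℝ) * Complex.I))
  rw [norm_mul, Complex.norm_exp_ofReal_mul_I, mul_one, ← e2] at e3
  have := hcj j
  have := abs_sub_abs_le_abs_sub (Real.cos ((n0 : ℝ) * ω j + φ j)) (Real.cos (((h + n0 : ℕ) : ℝ) * ω j + φ j))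
  rw [abs_sub_comm] at this
  linarith

lemma choose_n (q : ℕ → ℝ) (hq : ∀ n, 1 ≤ n → 0 < q n) (hmono : Monotone q)
    (htop : Filter.Tendsto q Filter.atTop Filter.atTop)
    (hr : Filter.Tendsto (fun n => q (n+1) / q n) Filter.atTop (nhds 1))
    (good : ℕ → Prop) (G : ℕ) (hG : ∀ N, ∃ n, N ≤ n ∧ n ≤ N + G ∧ good n)
    (n1 : ℕ) (c1 C μ : ℝ) (hc1 : 0 < c1) (hC : 0 < C) (hμ : 0 < μ) :
    ∃ Y0 : ℝ, ∀ Y, Y0 ≤ Y → ∀ a b, c1 * Y ≤ a → b ≤ C * Y → a + μ * Y ≤ b →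
      ∃ n, n1 ≤ n ∧ good n ∧ a ≤ q n ∧ q n ≤ b := by
  have hrG : ∀ g : ℕ, Filter.Tendsto (fun n => q (n+g) / q n) Filter.atTop (nhds 1) := by
    intro g
    induction g with
    | zero =>
      refine tendsto_const_nhds.congr' ?_
      filter_upwards [Filter.eventually_ge_atTop 1] with n hn
      simp [(hq n hn).ne']
    | succ g ih =>
      have h1 := (hr.comp (Filter.tendsto_add_atTop_nat g)).mul ih
      rw [one_mul] at h1
      refine h1.congr' ?_
      filter_upwards [Filter.eventually_ge_atTop 1] with n hn
      have := (hq n hn).ne'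
      have := (hq (n+g) (by omega)).ne'
      simp only [Function.comp, add_assoc]
      field_simp
  have hρ : (1:ℝ) < 1 + μ / C := by have : 0 < μ / C := by positivity
                                    linarith
  obtain ⟨N1, hN1⟩ := Filter.eventually_atTop.mp ((hrG (G+1)).eventually_lt_const hρ)
  let N2 := max (max N1 n1) 1
  refine ⟨max 1 ((q (N2+1) + 1) / c1), fun Y hY a b ha hb hab => ?_⟩
  have hY1 : 1 ≤ Y := le_trans (le_max_left _ _) hY
  have hY2 : q (N2+1) + 1 ≤ c1 * Y := by
    have := le_trans (le_max_right _ _) hY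
    rw [div_le_iff₀ hc1] at this
    linarith
  have hex : ∃ N, a ≤ q N := (htop.eventually_ge_atTop a).exists
  classical
  let N := Nat.find hex
  have hN : a ≤ q N := Nat.find_spec hex
  have hNlt : ∀ m < N, q m < a := fun m hm => not_le.mp (Nat.find_min hex hm)
  have hNN : N2 + 1 < N := by
    by_contra hcon
    have := hmono (not_lt.mp hcon)
    linarith
  obtain ⟨n, hn1, hn2, hg⟩ := hG N
  have hN2 : N1 ≤ N2 ∧ n1 ≤ N2 ∧ 1 ≤ N2 := by simp only [N2]; omega
  refine ⟨n, by omega, hg, hN.trans (hmono hn1), ?_⟩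
  have hs := hN1 (N-1) (by omega)
  have hp := hq (N-1) (by omega)
  rw [div_lt_iff₀ hp] at hs
  have h2 := hNlt (N-1) (by omega)
  have h3 : q n ≤ q (N - 1 + (G+1)) := hmono (by omega)
  have h4 : a ≤ C * Y := by nlinarith
  have h5 : μ / C * a ≤ μ * Y := by
    rw [div_mul_eq_mul_div, div_le_iff₀ hC]; nlinarith
  have h6 : (1 + μ / C) * q (N-1) ≤ (1 + μ / C) * a := by
    apply mul_le_mul_of_nonneg_left h2.le (by linarith)
  linarith

lemma aff (s a b u x : ℝ) (ha : 0 ≤ u + s * a) (hb : 0 ≤ u + s * b) (_hab : a ≤ b)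
    (hxa : a + (b - a) / 3 ≤ x) (hxb : x ≤ b - (b-a)/3) : |s| * ((b-a)/3) ≤ u + s * x := by
  rcases le_total 0 s with h | h
  · rw [abs_of_nonneg h]
    nlinarith
  · rw [abs_of_nonpos h]
    nlinarith

lemma lines {k : ℕ} (hk : 1 ≤ k) (τ : Fin k → ℝ) (hτ : ∀ j, 0 < τ j) (hinj : Function.Injective τ)
    (ε : ℝ) (hε : 0 < ε) : ∃ μ c1 : ℝ, 0 < μ ∧ 0 < c1 ∧ ∀ Y : ℝ, 0 < Y →
    ∀ J : Finset (Fin k), J.Nonempty → ∀ a : Fin k → ℝ,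
      (∀ j ∈ J, 0 ≤ a j ∧ a j ≤ τ j * Y) →
      ∃ j ∈ J, ∃ lo hi : ℝ, c1 * Y ≤ lo ∧ hi ≤ (1 + ε) * Y ∧ lo + μ * Y ≤ hi ∧
        ∀ x, lo ≤ x → x ≤ hi →
          (∀ i ∈ J, i ≠ j → a i - τ i * x + μ * Y ≤ a j - τ j * x) ∧
          (x - (1 + ε) * Y + μ * Y ≤ a j - τ j * x) ∧ a j - τ j * x ≤ - (μ * Y) := by
  have : Nonempty (Fin k) := ⟨⟨0, hk⟩⟩
  obtain ⟨jm, hjm⟩ := Finite.exists_min τ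
  obtain ⟨jM, hjM⟩ := Finite.exists_max τ
  set t0 := τ jm
  set T := τ jM
  have ht0 : 0 < t0 := hτ jm
  have hT : 0 < T := hτ jM
  obtain ⟨Δ, hΔ, hΔ1, hΔij⟩ : ∃ Δ : ℝ, 0 < Δ ∧ Δ ≤ 1 ∧ ∀ i j, i ≠ j → Δ ≤ |τ i - τ j| := by
    obtain ⟨z, hz⟩ := Finite.exists_min (fun z : Fin k × Fin k => if z.1 = z.2 then (1:ℝ) else min 1 |τ z.1 - τ z.2|)
    refine ⟨if z.1 = z.2 then (1:ℝ) else min 1 |τ z.1 - τ z.2|, ?_, ?_, ?_⟩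
    · split_ifs with h
      · exact one_pos
      · exact lt_min one_pos (abs_pos.mpr (sub_ne_zero.mpr (fun h' => h (hinj h'))))
    · split_ifs with h
      · exact le_rfl
      · exact min_le_left _ _
    · intro i j hij
      have := hz (i, j)
      simp only [hij, if_false] at this
      exact this.trans (min_le_right _ _)
  set β := ε * t0 / (1 + t0) with hβ
  have hβ0 : 0 < β := by positivity
  have hβj : ∀ j, β * (1 + τ j) ≤ ε * τ j := by
    intro j
    rw [hβ, div_mul_eq_mul_div, div_le_iff₀ (by positivity)]
    nlinarith [hjm j]
  have hk0 : (0:ℝ) < k := by exact_mod_cast hk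
  set δ := min (1 / (2 * (1 + T))) (β / (2 * T)) / k with hδ
  have hδ0 : 0 < δ := by positivity
  have hkδ : k * δ = min (1 / (2 * (1 + T))) (β / (2 * T)) := by rw [hδ]; field_simp
  have hkδ1 : k * δ ≤ 1 / (2 * (1 + T)) := hkδ ▸ min_le_left _ _
  have hkδ2 : T * (k * δ) ≤ β / 2 := by
    have : k * δ ≤ β / (2 * T) := hkδ ▸ min_le_right _ _
    rw [le_div_iff₀ (by positivity)] at this
    linarith
  set μ := min (β/2) (Δ * (δ / 3)) with hμ
  have hμ0 : 0 < μ := by positivity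
  have hμ1 : μ ≤ β / 2 := min_le_left _ _
  have hμ2 : μ ≤ Δ * (δ / 3) := min_le_right _ _
  have hμ3 : μ ≤ δ / 3 := hμ2.trans (by nlinarith)
  clear_value μ δ β
  refine ⟨μ, 1 / (2 * (1 + T)), hμ0, by positivity, fun Y hY J hJ a ha => ?_⟩
  obtain ⟨js, hjs, hmax⟩ := J.exists_max_image (fun j => (a j + (1+ε) * Y) / (1 + τ j)) hJ
  set X := (a js + (1+ε) * Y) / (1 + τ js) with hX
  have hXeq : (1 + τ js) * X = a js + (1+ε)*Y := by
    have := hτ js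
    rw [hX]; field_simp
  have hXi : ∀ i ∈ J, a i + (1+ε)*Y ≤ (1 + τ i) * X := by
    intro i hi
    have := hmax i hi
    have h2 := hτ i
    rw [div_le_iff₀ (by positivity)] at this
    linarith
  clear_value X
  have hXup : X ≤ (1 + ε) * Y - β * Y := by
    have h1 := (ha js hjs).2
    have h2 := hτ js
    have h3 := mul_le_mul_of_nonneg_right (hβj js) hY.le
    have : (1 + τ js) * X ≤ (1 + τ js) * ((1 + ε) * Y - β * Y) := by nlinarith
    exact le_of_mul_le_mul_left this (by linarith)
  have hX0 : 0 < X := by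
    have h1 := (ha js hjs).1
    have h2 := hτ js
    by_contra hcon
    push Not at hcon
    have : (1 + τ js) * X ≤ 0 := mul_nonpos_of_nonneg_of_nonpos (by linarith) hcon
    nlinarith
  have hXlo : 1 / (1 + T) * Y ≤ X := by
    rw [div_mul_eq_mul_div, div_le_iff₀ (by positivity)]
    have h1 := (ha js hjs).1
    have h2 := mul_le_mul_of_nonneg_right (hjM js) hX0.le
    nlinarith [mul_pos hε hY]
  -- argmax at the sample points
  let y : Fin (k+1) → ℝ := fun t => X - (t : ℕ) * (δ * Y)
  have hδY : 0 < δ * Y := by positivity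
  have harg : ∀ t : Fin (k+1), ∃ j ∈ J, ∀ i ∈ J, a i - τ i * y t ≤ a j - τ j * y t :=
    fun t => J.exists_max_image (fun j => a j - τ j * y t) hJ
  choose g hgJ hg using harg
  obtain ⟨s, t, hst, hgst⟩ : ∃ s t : Fin (k+1), s < t ∧ g s = g t := by
    obtain ⟨s, t, hst, h⟩ := Fintype.exists_ne_map_eq_of_card_lt g (by simp)
    rcases lt_or_gt_of_ne hst with h' | h'
    · exact ⟨s, t, h', h⟩
    · exact ⟨t, s, h', h.symm⟩
  have hyd : y t + δ * Y ≤ y s := by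
    have : ((s : ℕ) : ℝ) + 1 ≤ (t : ℕ) := by exact_mod_cast hst
    simp only [y]
    nlinarith
  have hys : y s ≤ X := by
    simp only [y]
    have : (0:ℝ) ≤ (s : ℕ) * (δ * Y) := by positivity
    linarith
  have hyt : X - k * δ * Y ≤ y t := by
    have : ((t : ℕ) : ℝ) ≤ k := by exact_mod_cast Nat.lt_succ_iff.mp t.2
    simp only [y]
    nlinarith
  have hgs := hg s
  have hgt := hg t
  rw [hgst] at hgs
  set j := g t
  have hjJ : j ∈ J := hgJ t
  have hf : ∀ x ≤ X, (∀ i ∈ J, a i - τ i * x ≤ a j - τ j * x) → x - (1+ε)*Y ≤ a j - τ j * x := by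
    intro x hx h
    have h1 := h js hjs
    have h2 := hτ js
    nlinarith
  have hfs := hf _ hys hgs
  have hft := hf _ (by linarith) hgt
  set A := y t
  set B := y s
  clear_value A B j
  refine ⟨j, hjJ, A + (B - A)/3, B - (B-A)/3, ?_, ?_, ?_, ?_⟩
  · have h1 := mul_le_mul_of_nonneg_right hkδ1 hY.le
    have h2 : 1 / (1+T) * Y = 2 * (1 / (2 * (1+T)) * Y) := by field_simp
    linarith
  · have := mul_pos hβ0 hY
    linarith
  · have := mul_le_mul_of_nonneg_right hμ3 hY.le
    linarith
  · intro x hx1 hx2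
    have hAx : A ≤ x := by linarith
    refine ⟨fun i hi hij => ?_, ?_, ?_⟩
    · have h1 := aff (τ i - τ j) A B (a j - a i) x (by linarith [hgt i hi]) (by linarith [hgs i hi]) (by linarith) hx1 hx2
      have h2 : Δ * (δ * Y / 3) ≤ |τ i - τ j| * ((B - A)/3) :=
        mul_le_mul (hΔij i j hij) (by linarith) (by positivity) (abs_nonneg _)
      have := mul_le_mul_of_nonneg_right hμ2 hY.le
      linarith
    · have h1 := aff (-(1 + τ j)) A B (a j + (1+ε)*Y) x (by linarith) (by linarith) (by linarith) hx1 hx2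
      have hj := hτ j
      have h2 : 1 * (δ * Y / 3) ≤ |-(1 + τ j)| * ((B - A)/3) := by
        apply mul_le_mul _ (by linarith) (by positivity) (abs_nonneg _)
        rw [abs_neg, abs_of_nonneg (by linarith)]; linarith
      have := mul_le_mul_of_nonneg_right hμ3 hY.le
      linarith
    · have h1 := hXi j hjJ
      have h2 : τ j * (X - x) ≤ T * (k * δ * Y) :=
        mul_le_mul (hjM j) (by linarith) (by linarith) hT.le
      have h3 := mul_le_mul_of_nonneg_right hkδ2 hY.le
      have h4 := mul_le_mul_of_nonneg_right hμ1 hY.le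
      linarith

lemma sum_split {k p : ℕ} (h : k ≤ p) (f : Fin p → ℝ) :
    ∑ i, f i = ∑ j : Fin k, f (Fin.castLE h j) +
      ∑ m : Fin (p - k), f ⟨k + m.1, by omega⟩ := by
  obtain ⟨d, rfl⟩ := Nat.exists_eq_add_of_le h
  rw [Fin.sum_univ_add]
  congr 1
  have hd : d = k + d - k := by omega
  exact Fintype.sum_equiv (finCongr hd) _ _ (fun i => rfl)

lemma final {k p : ℕ} (T : Fin k → ℝ) (R : ℝ) (N : ℤ) (hN : (N : ℝ) = ∑ j, T j - R) (j : Fin k)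
    (B : ℝ) (hB : 0 ≤ B) (hT : ∀ i, i ≠ j → |T i| ≤ 2 * B) (hR : |R| ≤ p * B)
    (h1 : (2 * k + p) * B < |T j|) (h2 : |T j| + (2 * k + p) * B < 1) : False := by
  have hsum : ∑ i, T i = T j + ∑ i ∈ Finset.univ.erase j, T i :=
    (Finset.add_sum_erase _ _ (Finset.mem_univ j)).symm
  have hrest : |∑ i ∈ Finset.univ.erase j, T i| ≤ 2 * k * B := by
    refine (Finset.abs_sum_le_sum_abs _ _).trans ?_
    refine (Finset.sum_le_card_nsmul _ _ (2 * B) (fun i hi => hT i (Finset.ne_of_mem_erase hi))).trans ?_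
    have : (((Finset.univ.erase j).card : ℕ) : ℝ) ≤ k := by
      have := Finset.card_le_univ (Finset.univ.erase j)
      rw [Fintype.card_fin] at this
      exact_mod_cast this
    rw [nsmul_eq_mul]
    nlinarith
  set r := ∑ i ∈ Finset.univ.erase j, T i
  have hNr : (N : ℝ) = T j + (r - R) := by rw [hN, hsum]; ring
  have hrR : |r - R| ≤ (2 * k + p) * B := by
    have := abs_sub r R
    linarith
  have hN1 : |(N : ℝ)| < 1 := by
    rw [hNr]
    have := abs_add_le (T j) (r - R)
    linarith
  have hN0 : N = 0 := by
    rw [← Int.abs_lt_one_iff]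
    exact_mod_cast hN1
  rw [hN0, Int.cast_zero] at hNr
  have : T j = -(r - R) := by linarith
  rw [this, abs_neg] at h1
  linarith

/-- Under hypotheses (H) with e_j = (0,…,0,1,0,…,0,e′_j) (the 1 in j-th position):
(1) no nontrivial ℚ-linear combination of the e′_j lies in ℚ^{p-k}; and (2) a measure
of linear independence: for ε > 0 and Q large, ‖λ_1e′_1+…+λ_ke′_k − S‖ ≥ Q^{-1-ε} for
integers λ_j, not all zero, with |λ_j| ≤ Q^{τ_j}, and any S ∈ ℤ^{p-k}. -/
theorem stmt7
    (k p : ℕ) (hk : 1 ≤ k) (hkp : k ≤ p - 1)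
    (e : Fin k → EuclideanSpace ℝ (Fin p))
    (τs ωs φs : Fin k → ℝ)
    (hτpos : ∀ j, 0 < τs j) (hτinj : Function.Injective τs)
    (hosc : {n : ℕ | ∀ j : Fin k, ∀ m : ℤ,
      (n : ℝ) * ωs j + φs j ≠ Real.pi / 2 + m * Real.pi}.Infinite)
    (Q : ℕ → ℕ) (hQmono : StrictMono Q) (hQpos : ∀ n, 0 < Q n)
    (hQgrowth :
      (∃ M : ℝ, 0 < M ∧ ∀ n : ℕ, 1 ≤ n →
        Real.log (Q (n + 1)) ≤ (1 + M / n) * Real.log (Q n)) ∨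
      ((∀ j, ωs j = 0) ∧
        Filter.Tendsto (fun n => Real.log (Q (n + 1)) / Real.log (Q n))
          Filter.atTop (nhds 1)))
    (l : ℕ → Fin p → ℤ)
    (εs ηs : Fin k → ℕ → ℝ) (θs : ℕ → ℝ)
    (hεs : ∀ j, Filter.Tendsto (εs j) Filter.atTop (nhds 0))
    (hηs : ∀ j, Filter.Tendsto (ηs j) Filter.atTop (nhds 0))
    (hθs : Filter.Tendsto θs Filter.atTop (nhds 0))
    (hL : ∀ n : ℕ, 1 ≤ n → ∀ j,
      |∑ i, (l n i : ℝ) * e j i| =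
        (Q n : ℝ) ^ (-τs j + εs j n) * |Real.cos ((n : ℝ) * ωs j + φs j) + ηs j n|)
    (hl : ∀ n : ℕ, 1 ≤ n → ∀ i, |(l n i : ℝ)| ≤ (Q n : ℝ) ^ (1 + θs n))
    (e' : Fin k → EuclideanSpace ℝ (Fin (p - k)))
    (hunit : ∀ j j' : Fin k, e j (Fin.castLE (by omega) j') = if j' = j then 1 else 0)
    (htail : ∀ j : Fin k, ∀ (m : ℕ) (hm : m < p - k),
      e j ⟨k + m, by omega⟩ = e' j ⟨m, hm⟩) :
    (∀ q : Fin k → ℚ, (∃ j, q j ≠ 0) →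
      ¬ (∀ m : Fin (p - k), ∃ r : ℚ, (∑ j, (q j : ℝ) • e' j) m = (r : ℝ))) ∧
    (∀ ε : ℝ, 0 < ε → ∃ Q0 : ℝ, ∀ Qr : ℝ, Q0 ≤ Qr →
      ∀ lam : Fin k → ℤ, (∃ j, lam j ≠ 0) →
        (∀ j, |(lam j : ℝ)| ≤ Qr ^ τs j) →
        ∀ Sv : Fin (p - k) → ℤ,
          Qr ^ (-1 - ε) ≤
            ‖(∑ j, (lam j : ℝ) • e' j) -
              (show EuclideanSpace ℝ (Fin (p - k)) from WithLp.toLp 2 fun m => (Sv m : ℝ))‖) := by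
  have hkp' : k ≤ p := by omega
  -- growth
  have hQge : ∀ n, n + 1 ≤ Q n := by
    intro n
    induction n with
    | zero => exact hQpos 0
    | succ n ih => have := hQmono (show n < n + 1 by omega); omega
  have hQ0 : ∀ n, (0:ℝ) < Q n := fun n => by exact_mod_cast hQpos n
  have hqpos : ∀ n, 1 ≤ n → 0 < Real.log (Q n) := by
    intro n hn
    apply Real.log_pos
    have := hQge n
    have : 1 < Q n := by omega
    exact_mod_cast this
  have hqmono : Monotone (fun n => Real.log (Q n)) := by
    intro m n hmn
    exact Real.log_le_log (hQ0 m) (by exact_mod_cast hQmono.monotone hmn)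
  have hqtop : Filter.Tendsto (fun n => Real.log (Q n)) Filter.atTop Filter.atTop :=
    Real.tendsto_log_atTop.comp (tendsto_natCast_atTop_atTop.comp hQmono.tendsto_atTop)
  have hratio : Filter.Tendsto (fun n => Real.log (Q (n + 1)) / Real.log (Q n))
      Filter.atTop (nhds 1) := by
    rcases hQgrowth with ⟨M, hM, h⟩ | ⟨_, h⟩
    · have hlim : Filter.Tendsto (fun n : ℕ => 1 + M / (n:ℝ)) Filter.atTop (nhds 1) := by
        simpa using (tendsto_const_div_atTop_nhds_zero_nat M).const_add 1
      refine tendsto_of_tendsto_of_tendsto_of_le_of_le' tendsto_const_nhds hlim ?_ ?_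
      · filter_upwards [Filter.eventually_ge_atTop 1] with n hn
        rw [le_div_iff₀ (hqpos n hn), one_mul]
        exact hqmono (Nat.le_succ n)
      · filter_upwards [Filter.eventually_ge_atTop 1] with n hn
        rw [div_le_iff₀ (hqpos n hn)]
        exact h n hn
    · exact h
  -- good indices
  obtain ⟨n0, hn0⟩ := hosc.nonempty
  obtain ⟨c, hc, G, hG⟩ := synd ωs φs n0 (fun j => by
    rw [Ne, Real.cos_eq_zero_iff]
    rintro ⟨m, hm⟩
    refine hn0 j m ?_
    rw [hm]; ring)
  have part2 : ∀ ε : ℝ, 0 < ε → ∃ Q0 : ℝ, ∀ Qr : ℝ, Q0 ≤ Qr →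
      ∀ lam : Fin k → ℤ, (∃ j, lam j ≠ 0) →
        (∀ j, |(lam j : ℝ)| ≤ Qr ^ τs j) →
        ∀ Sv : Fin (p - k) → ℤ,
          Qr ^ (-1 - ε) ≤
            ‖(∑ j, (lam j : ℝ) • e' j) -
              (show EuclideanSpace ℝ (Fin (p - k)) from WithLp.toLp 2 fun m => (Sv m : ℝ))‖ := by
    intro ε hε
    obtain ⟨μ, c1, hμ, hc1, hlines⟩ := lines hk τs hτpos hτinj ε hε
    set κ := μ / (4 * (1 + ε)) with hκ
    have hκ0 : 0 < κ := by positivity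
    have hsmall : ∀ (u : ℕ → ℝ), Filter.Tendsto u Filter.atTop (nhds 0) → ∀ r : ℝ, 0 < r →
        ∀ᶠ n in Filter.atTop, |u n| ≤ r := by
      intro u hu r hr
      have := (hu.abs).eventually_le_const (show |(0:ℝ)| < r by simpa using hr)
      exact this
    have hev : ∀ᶠ n in Filter.atTop, 1 ≤ n ∧ |θs n| ≤ κ ∧ ∀ j, |εs j n| ≤ κ ∧
        |ηs j n| ≤ min (c/2) 1 := by
      refine (Filter.eventually_ge_atTop 1).and ((hsmall _ hθs κ hκ0).and ?_)
      rw [Filter.eventually_all]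
      intro j
      exact (hsmall _ (hεs j) κ hκ0).and (hsmall _ (hηs j) _ (by positivity))
    obtain ⟨n1, hn1⟩ := Filter.eventually_atTop.mp hev
    obtain ⟨Y0, hY0⟩ := choose_n _ hqpos hqmono hqtop hratio _ G hG n1 c1 (1+ε) μ hc1
      (by positivity) hμ
    have hE : ∀ᶠ Y : ℝ in Filter.atTop,
        Real.exp (-(μ * Y / 2)) < min (c / 2 / (2 * k + p)) (1 / (2 * k + p + 2)) := by
      have : Filter.Tendsto (fun Y : ℝ => Real.exp (-(μ * Y / 2))) Filter.atTop (nhds 0) := by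
        apply Real.tendsto_exp_neg_atTop_nhds_zero.comp
        apply Filter.Tendsto.atTop_div_const (by norm_num)
        exact Filter.Tendsto.const_mul_atTop hμ Filter.tendsto_id
      apply this.eventually_lt_const
      have hk0 : (0:ℝ) < k := by exact_mod_cast hk
      positivity
    obtain ⟨Y1, hY1⟩ := Filter.eventually_atTop.mp hE
    refine ⟨Real.exp (max 1 (max Y0 Y1)), fun Qr hQr lam hlam hlamQ Sv => ?_⟩
    have hQr0 : 0 < Qr := (Real.exp_pos _).trans_le hQr
    set Y := Real.log Qr with hYdef
    have hYge : max 1 (max Y0 Y1) ≤ Y := by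
      rw [hYdef, Real.le_log_iff_exp_le hQr0]; exact hQr
    have hY_0 : 0 < Y := lt_of_lt_of_le one_pos ((le_max_left _ _).trans hYge)
    have hYY0 : Y0 ≤ Y := ((le_max_left _ _).trans (le_max_right _ _)).trans hYge
    have hYY1 : Y1 ≤ Y := ((le_max_right _ _).trans (le_max_right _ _)).trans hYge
    have hEY := hY1 Y hYY1
    by_contra hcon
    rw [not_le] at hcon
    set u : EuclideanSpace ℝ (Fin (p-k)) := (∑ j, (lam j : ℝ) • e' j) -
      (show EuclideanSpace ℝ (Fin (p - k)) from WithLp.toLp 2 fun m => (Sv m : ℝ)) with hu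
    have hum : ∀ m, u m = ∑ j, (lam j : ℝ) * e' j m - Sv m := by
      intro m
      simp [hu]
    clear_value u
    let J : Finset (Fin k) := Finset.univ.filter (fun j => lam j ≠ 0)
    have hJ : J.Nonempty := by
      obtain ⟨j, hj⟩ := hlam
      exact ⟨j, by simp [J, hj]⟩
    have habs : ∀ j ∈ J, 0 < |(lam j : ℝ)| := by
      intro j hj
      have : lam j ≠ 0 := by simpa [J] using hj
      exact abs_pos.mpr (by exact_mod_cast this)
    obtain ⟨j, hjJ, lo, hi, hlo, hhi, hlohi, hx⟩ := hlines Y hY_0 J hJ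
      (fun j => Real.log |(lam j : ℝ)|) (by
        intro j hj
        have h1 := habs j hj
        constructor
        · apply Real.log_nonneg
          have : lam j ≠ 0 := by simpa [J] using hj
          exact_mod_cast Int.one_le_abs this
        · rw [Real.log_le_iff_le_exp h1, mul_comm, hYdef, ← Real.rpow_def_of_pos hQr0]
          exact hlamQ j)
    obtain ⟨n, hnn1, hgood, hnlo, hnhi⟩ := hY0 Y hYY0 lo hi hlo hhi hlohi
    obtain ⟨hn1', hθn, hεη⟩ := hn1 n hnn1
    set x := Real.log (Q n) with hxdef
    obtain ⟨hd1, hd2, hd3⟩ := hx x hnlo hnhi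
    have hx0 : 0 < x := hqpos n hn1'
    have hκx : κ * x ≤ μ * Y / 4 := by
      have : κ * x ≤ κ * ((1+ε) * Y) := mul_le_mul_of_nonneg_left (by linarith) hκ0.le
      refine this.trans (le_of_eq ?_)
      rw [hκ]; field_simp
    have herr : ∀ r : ℝ, |r| ≤ κ → -(μ * Y / 4) ≤ x * r ∧ x * r ≤ μ * Y / 4 := by
      intro r hr
      obtain ⟨h1, h2⟩ := abs_le.mp hr
      constructor <;> nlinarith
    let L : Fin k → ℝ := fun j => ∑ i, (l n i : ℝ) * e j i
    have hLup : ∀ i ∈ J, |lam i * L i| ≤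
        2 * Real.exp (Real.log |(lam i : ℝ)| - τs i * x + μ * Y / 4) := by
      intro i hi
      rw [abs_mul, hL n hn1' i, Real.rpow_def_of_pos (hQ0 n), ← hxdef]
      nth_rewrite 1 [← Real.exp_log (habs i hi)]
      rw [← mul_assoc, ← Real.exp_add, mul_comm]
      obtain ⟨h1, h2⟩ := hεη i
      have h3 := (herr _ h1).2
      apply mul_le_mul
      · have := abs_add_le (Real.cos (n * ωs i + φs i)) (ηs i n)
        have := Real.abs_cos_le_one (n * ωs i + φs i)
        have := h2.trans (min_le_right _ _)
        linarith
      · apply Real.exp_le_exp.mpr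
        linarith
      · positivity
      · norm_num
    have hLlo : c / 2 * Real.exp (Real.log |(lam j : ℝ)| - τs j * x - μ * Y / 4) ≤
        |lam j * L j| := by
      rw [abs_mul, hL n hn1' j, Real.rpow_def_of_pos (hQ0 n), ← hxdef]
      nth_rewrite 2 [← Real.exp_log (habs j hjJ)]
      rw [← mul_assoc, ← Real.exp_add, mul_comm (Real.exp (_ + _))]
      obtain ⟨h1, h2⟩ := hεη j
      have h3 := (herr _ h1).1
      apply mul_le_mul
      · have h4 := abs_sub_abs_le_abs_sub (Real.cos (n * ωs j + φs j)) (-ηs j n)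
        rw [abs_neg, sub_neg_eq_add] at h4
        have := hgood j
        have := h2.trans (min_le_left _ _)
        linarith
      · apply Real.exp_le_exp.mpr
        linarith
      · positivity
      · positivity
    let l2 : Fin (p-k) → ℤ := fun m => l n ⟨k + m.1, by omega⟩
    have hLsplit : ∀ j, L j = l n (Fin.castLE hkp' j) + ∑ m, (l2 m : ℝ) * e' j m := by
      intro j
      simp only [L]
      rw [sum_split hkp']
      congr 1
      · simp [hunit]
      · apply Finset.sum_congr rfl
        intro m _
        rw [htail j m.1 m.2]
    let R : ℝ := ∑ m, (l2 m : ℝ) * u m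
    have hR : |R| ≤ p * Real.exp (x - (1 + ε) * Y + μ * Y / 4) := by
      have hterm : ∀ m ∈ (Finset.univ : Finset (Fin (p-k))), |(l2 m : ℝ) * u m| ≤
          Real.exp (x - (1 + ε) * Y + μ * Y / 4) := by
        intro m _
        rw [abs_mul]
        have h1 : |u m| ≤ Real.exp (Y * (-1 - ε)) := by
          rw [hYdef, ← Real.rpow_def_of_pos hQr0]
          exact (PiLp.norm_apply_le u m).trans hcon.le
        have h2 : |(l2 m : ℝ)| ≤ Real.exp (x * (1 + θs n)) := by
          rw [hxdef, ← Real.rpow_def_of_pos (hQ0 n)]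
          exact hl n hn1' _
        refine (mul_le_mul h2 h1 (abs_nonneg _) (Real.exp_pos _).le).trans ?_
        rw [← Real.exp_add]
        apply Real.exp_le_exp.mpr
        have := (herr _ hθn).2
        linarith
      refine (Finset.abs_sum_le_sum_abs _ _).trans ((Finset.sum_le_card_nsmul _ _ _ hterm).trans ?_)
      rw [nsmul_eq_mul, Finset.card_univ, Fintype.card_fin]
      apply mul_le_mul_of_nonneg_right _ (Real.exp_pos _).le
      exact_mod_cast Nat.sub_le p k
    have hNint : (((∑ j, lam j * l n (Fin.castLE hkp' j) + ∑ m, l2 m * Sv m : ℤ)) : ℝ) =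
        ∑ j, (lam j : ℝ) * L j - R := by
      simp only [R, hum, hLsplit, mul_add, mul_sub, Finset.sum_add_distrib, Finset.sum_sub_distrib,
        Finset.mul_sum]
      push_cast
      rw [Finset.sum_comm (f := fun (m : Fin (p-k)) (j : Fin k) => (l2 m : ℝ) * ((lam j : ℝ) * e' j m))]
      have : ∑ j, ∑ m, (lam j : ℝ) * ((l2 m : ℝ) * e' j m) =
          ∑ j, ∑ m, (l2 m : ℝ) * ((lam j : ℝ) * e' j m) :=
        Finset.sum_congr rfl fun j _ => Finset.sum_congr rfl fun m _ => by ring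
      rw [this]; ring
    set A := Real.log |(lam j : ℝ)| - τs j * x with hA
    have hμY : 0 < μ * Y := by positivity
    have hk0 : (0:ℝ) < k := by exact_mod_cast hk
    have hp0 : (0:ℝ) ≤ p := by positivity
    refine final (p := p) (fun j => (lam j : ℝ) * L j) R _ hNint j (Real.exp (A - 3 * (μ * Y) / 4))
      (Real.exp_pos _).le ?_ ?_ ?_ ?_
    · intro i hij
      by_cases hiJ : i ∈ J
      · refine (hLup i hiJ).trans ?_
        have := hd1 i hiJ hij
        gcongr
        linarith
      · have : lam i = 0 := by simpa [J] using hiJ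
        simp only [this, Int.cast_zero, zero_mul, abs_zero]
        positivity
    · refine hR.trans ?_
      gcongr
      linarith
    · refine lt_of_lt_of_le ?_ hLlo
      have h1 := hEY.trans_le (min_le_left _ _)
      rw [lt_div_iff₀ (by positivity)] at h1
      have h2 : Real.exp (A - 3 * (μ * Y) / 4) =
          Real.exp (-(μ * Y / 2)) * Real.exp (A - μ * Y / 4) := by
        rw [← Real.exp_add]; congr 1; ring
      rw [h2, ← mul_assoc, mul_comm (2 * (k:ℝ) + p)]
      exact mul_lt_mul_of_pos_right h1 (Real.exp_pos _)
    · have h1 := hEY.trans_le (min_le_right _ _)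
      rw [lt_div_iff₀ (by positivity)] at h1
      have h2 := hLup j hjJ
      have h3 : Real.exp (A + μ * Y / 4) ≤ Real.exp (-(μ * Y / 2)) :=
        Real.exp_le_exp.mpr (by linarith)
      have h4 : Real.exp (A - 3 * (μ * Y) / 4) ≤ Real.exp (-(μ * Y / 2)) :=
        Real.exp_le_exp.mpr (by linarith)
      have h5 := mul_le_mul_of_nonneg_left h4 (show (0:ℝ) ≤ 2 * k + p by positivity)
      rw [← hA] at h2
      linarith
  refine ⟨?_, part2⟩
  intro q hq hrat
  choose r hr using hrat
  let D : ℕ := (∏ j, (q j).den) * ∏ m, (r m).den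
  have hD : D ≠ 0 := by
    simp only [D]
    exact mul_ne_zero (Finset.prod_ne_zero_iff.mpr fun j _ => (q j).den_nz)
      (Finset.prod_ne_zero_iff.mpr fun j _ => (r j).den_nz)
  have hint : ∀ s : ℚ, s.den ∣ D → ∃ z : ℤ, (z : ℚ) = D * s := by
    rintro s ⟨t, ht⟩
    refine ⟨t * s.num, ?_⟩
    have h0 : (s.den : ℚ) ≠ 0 := by exact_mod_cast s.den_nz
    have h1 : (s.num : ℚ) = s.den * s := by rw [mul_comm, Rat.mul_den_eq_num]
    rw [ht]; push_cast; rw [h1]; ring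
  have h1 : ∀ j, ∃ z : ℤ, (z : ℚ) = D * q j := fun j => hint _
    (Dvd.dvd.mul_right (Finset.dvd_prod_of_mem (fun j => (q j).den) (Finset.mem_univ j)) _)
  have h2 : ∀ m, ∃ z : ℤ, (z : ℚ) = D * r m := fun m => hint _
    (Dvd.dvd.mul_left (Finset.dvd_prod_of_mem (fun m => (r m).den) (Finset.mem_univ m)) _)
  choose lam hlam using h1
  choose Sv hSv using h2
  obtain ⟨Q0, hQ0'⟩ := part2 1 one_pos
  have hbig : ∀ᶠ Qr : ℝ in Filter.atTop, Q0 ≤ Qr ∧ 0 < Qr ∧ ∀ j, |(lam j : ℝ)| ≤ Qr ^ τs j := by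
    refine (Filter.eventually_ge_atTop Q0).and ((Filter.eventually_gt_atTop 0).and ?_)
    rw [Filter.eventually_all]
    intro j
    exact (tendsto_rpow_atTop (hτpos j)).eventually_ge_atTop _
  obtain ⟨Qr, hQr1, hQr2, hQr3⟩ := hbig.exists
  have hfin := hQ0' Qr hQr1 lam (by
    obtain ⟨j, hj⟩ := hq
    refine ⟨j, fun h => ?_⟩
    have := hlam j
    rw [h, Int.cast_zero] at this
    exact mul_ne_zero (by exact_mod_cast hD) hj this.symm) hQr3 Sv
  have hz : (∑ j, (lam j : ℝ) • e' j) -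
      (show EuclideanSpace ℝ (Fin (p - k)) from WithLp.toLp 2 fun m => (Sv m : ℝ)) = 0 := by
    ext m
    have hlamR : ∀ j, (lam j : ℝ) = D * q j := fun j => by exact_mod_cast congrArg (Rat.cast : ℚ → ℝ) (hlam j)
    have hSvR : (Sv m : ℝ) = D * r m := by exact_mod_cast congrArg (Rat.cast : ℚ → ℝ) (hSv m)
    have hrm := hr m
    simp only [PiLp.sub_apply, PiLp.zero_apply, WithLp.ofLp_sum, WithLp.ofLp_smul, Finset.sum_apply, Pi.smul_apply, smul_eq_mul] at hrm ⊢
    rw [hSvR, ← hrm, Finset.mul_sum, sub_eq_zero]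
    exact Finset.sum_congr rfl fun j _ => by rw [hlamR]; ring
  rw [hz, norm_zero] at hfin
  exact absurd (Real.rpow_pos_of_pos hQr2 (-1 - 1)) (not_lt.mpr hfin)
end

section
/- Assume hypotheses (K). Then the real numbers 1, ξ_1, …, ξ_k are linearly independent over ℚ. -/
theorem aux_tend (Q : ℕ → ℕ) (hQmono : StrictMono Q) (c : ℝ) (hc : 0 < c) (e : ℕ → ℝ)
    (he : Filter.Tendsto e Filter.atTop (nhds 0)) :
    Filter.Tendsto (fun n => (Q n : ℝ) ^ (-c + e n)) Filter.atTop (nhds 0) := by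
  have hQ : Filter.Tendsto (fun n => (Q n : ℝ)) Filter.atTop Filter.atTop :=
    tendsto_natCast_atTop_atTop.comp hQmono.tendsto_atTop
  have h1 := (tendsto_rpow_neg_atTop (half_pos hc)).comp hQ
  refine squeeze_zero' (Filter.Eventually.of_forall fun n => by positivity) ?_ h1
  filter_upwards [he.eventually_lt_const (half_pos hc), hQ.eventually_ge_atTop 1] with n h2 h3
  exact Real.rpow_le_rpow_of_exponent_le h3 (by linarith)

/-- Under hypotheses (K), the numbers 1, ξ_1, …, ξ_k are ℚ-linearly independent. -/
theorem stmt8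
    (k : ℕ) (hk : 1 ≤ k) (ξ : Fin k → ℝ)
    (τs : Fin k → ℝ) (hτpos : ∀ j, 0 < τs j) (hτinj : Function.Injective τs)
    (Q : ℕ → ℕ) (hQmono : StrictMono Q) (hQpos : ∀ n, 0 < Q n)
    (hQgrowth : Filter.Tendsto (fun n => Real.log (Q (n + 1)) / Real.log (Q n))
      Filter.atTop (nhds 1))
    (l : ℕ → Fin (k + 1) → ℤ)
    (εs : Fin k → ℕ → ℝ) (θs : ℕ → ℝ)
    (hεs : ∀ j, Filter.Tendsto (εs j) Filter.atTop (nhds 0))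
    (hθs : Filter.Tendsto θs Filter.atTop (nhds 0))
    (hl : ∀ n : ℕ, 1 ≤ n → ∀ i, |(l n i : ℝ)| ≤ (Q n : ℝ) ^ (1 + θs n))
    (hL : ∀ n : ℕ, 1 ≤ n → ∀ j : Fin k,
      |(l n (Fin.last k) : ℝ) * ξ j - (l n j.castSucc : ℝ)| =
        (Q n : ℝ) ^ (-τs j + εs j n))
    :
    LinearIndependent ℚ (Fin.cons (1 : ℝ) ξ : Fin (k + 1) → ℝ) := by
  rw [← LinearIndependent.iff_fractionRing ℤ ℚ, Fintype.linearIndependent_iff]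
  intro g hg
  rw [Fin.sum_univ_succ] at hg
  simp only [Fin.cons_zero, Fin.cons_succ, zsmul_eq_mul, mul_one] at hg
  set R : Fin k → ℕ → ℝ := fun j n => (l n (Fin.last k) : ℝ) * ξ j - (l n j.castSucc : ℝ) with hR
  have hQpos' : ∀ n, (0 : ℝ) < Q n := fun n => by exact_mod_cast hQpos n
  have hR0 : ∀ j, Filter.Tendsto (R j) Filter.atTop (nhds 0) := by
    intro j
    rw [tendsto_zero_iff_abs_tendsto_zero]
    refine (aux_tend Q hQmono (τs j) (hτpos j) (εs j) (hεs j)).congr' ?_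
    filter_upwards [Filter.eventually_ge_atTop 1] with n hn
    exact (hL n hn j).symm
  have hsum : ∀ n, ∑ j, (g j.succ : ℝ) * R j n =
      ((-(l n (Fin.last k) * g 0 + ∑ j : Fin k, g j.succ * l n j.castSucc) : ℤ) : ℝ) := by
    intro n
    have : ∑ j, (g j.succ : ℝ) * R j n = (l n (Fin.last k) : ℝ) * (∑ j : Fin k, (g j.succ : ℝ) * ξ j)
        - ∑ j : Fin k, (g j.succ : ℝ) * (l n j.castSucc : ℝ) := by
      rw [Finset.mul_sum, ← Finset.sum_sub_distrib]
      exact Finset.sum_congr rfl fun j _ => by simp only [hR]; ring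
    rw [this]
    push_cast
    linear_combination (l n (Fin.last k) : ℝ) * hg
  have hzero : ∀ᶠ n in Filter.atTop, ∑ j, (g j.succ : ℝ) * R j n = 0 := by
    have ht : Filter.Tendsto (fun n => ∑ j, (g j.succ : ℝ) * R j n) Filter.atTop (nhds 0) := by
      have := tendsto_finset_sum (Finset.univ : Finset (Fin k))
        (fun j _ => (hR0 j).const_mul (g j.succ : ℝ))
      simpa using this
    rw [tendsto_zero_iff_abs_tendsto_zero] at ht
    filter_upwards [ht.eventually_lt_const one_pos] with n hn
    simp only [Function.comp] at hn
    rw [hsum] at hn ⊢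
    have h2 := Int.abs_lt_one_iff.mp (by exact_mod_cast hn)
    exact_mod_cast h2
  have hall : ∀ j : Fin k, g j.succ = 0 := by
    by_contra hne
    push Not at hne
    obtain ⟨i, hi⟩ := hne
    obtain ⟨j0, hj0, hmin⟩ := Finset.exists_min_image
      (Finset.univ.filter fun j : Fin k => g j.succ ≠ 0) τs ⟨i, by simpa using hi⟩
    simp only [Finset.mem_filter, Finset.mem_univ, true_and] at hj0 hmin
    have hlim : ∀ j : Fin k, Filter.Tendsto (fun n => (g j.succ : ℝ) * R j n / R j0 n)
        Filter.atTop (nhds (if j = j0 then (g j0.succ : ℝ) else 0)) := by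
      intro j
      split_ifs with h
      · subst h
        refine tendsto_const_nhds.congr' ?_
        filter_upwards [Filter.eventually_ge_atTop 1] with n hn
        have : R j n ≠ 0 := by
          rw [← abs_pos]
          simp only [hR]
          rw [hL n hn j]
          exact Real.rpow_pos_of_pos (hQpos' n) _
        field_simp
      · by_cases hg0 : g j.succ = 0
        · simp [hg0]
        have hlt : 0 < τs j - τs j0 :=
          sub_pos.2 (lt_of_le_of_ne (hmin j hg0) fun h' => h (hτinj h').symm)
        have hq : Filter.Tendsto (fun n => R j n / R j0 n) Filter.atTop (nhds 0) := by
          rw [tendsto_zero_iff_abs_tendsto_zero]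
          refine (aux_tend Q hQmono _ hlt (fun n => εs j n - εs j0 n)
            (by simpa using (hεs j).sub (hεs j0))).congr' ?_
          filter_upwards [Filter.eventually_ge_atTop 1] with n hn
          simp only [Function.comp, abs_div, hR]
          rw [hL n hn j, hL n hn j0, ← Real.rpow_sub (hQpos' n)]
          congr 1
          ring
        simpa [mul_div_assoc] using hq.const_mul (g j.succ : ℝ)
    have hS := tendsto_finset_sum (Finset.univ : Finset (Fin k)) (fun j _ => hlim j)
    simp only [Finset.sum_ite_eq', Finset.mem_univ, if_true] at hS
    have hS0 : Filter.Tendsto (fun n => ∑ j : Fin k, (g j.succ : ℝ) * R j n / R j0 n)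
        Filter.atTop (nhds 0) := by
      refine tendsto_const_nhds.congr' ?_
      filter_upwards [hzero] with n hn
      rw [← Finset.sum_div, hn, zero_div]
    have := tendsto_nhds_unique hS hS0
    exact hj0 (by exact_mod_cast this)
  intro i
  refine Fin.cases ?_ hall i
  simp only [hall] at hg
  simpa using hg
end
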